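/- Assume a := ess sup ξ₀ < ∞ and that Q{ξ₀⁻ > λ} ≤ 1/(log λ)^{2+ε} for all large λ, and that c₅ ∈ (0,1) satisfies c₅·|log Q{ξ₀ ≥ a−ρ}| < 1/5. Then P⊗Q-almost surely, (ω,ξ) ∈ A(j_p) for infinitely many p, where j_p := p^{3p}. In particular, P⊗Q-almost surely there is a (random) increasing sequence (m_k)_{k≥1} with m_k ≥ k^{3k} such that (ω,ξ) ∈ A(m_k) for every k ≥ 1. -/

import Mathlib

open MeasureTheory ProbabilityTheory Filter Set

noncomputable section SinaiSceneryDefs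

/-- `γ_i(j) := j^((1-α)^i)`. -/
def gamScale (α : ℝ) (j : ℝ) (i : ℕ) : ℝ := j ^ ((1 - α) ^ i)

/-- `M(j) := inf{n ≥ 0 : γ_n(j) ≤ (log log j)^((1-α)/(2+ε'))}`. -/
def bigM (α ε' : ℝ) (j : ℝ) : ℕ :=
  sInf {n : ℕ | gamScale α j n ≤ (Real.log (Real.log j)) ^ ((1 - α) / (2 + ε'))}

/-- `ε_i(j) := exp(−c₄ γ_{i+2}(j))` for `i ≥ 0` (and `ε_{-1}(j) := ε₀(j)`). -/
def epsScale (α c₄ : ℝ) (j : ℝ) (i : ℕ) : ℝ := Real.exp (-(c₄ * gamScale α j (i + 2)))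

/-- `d⁺(j) := min{n ≥ 0 : V(n) ≥ j}`. -/
def dPlus (v : ℤ → ℝ) (j : ℝ) : ℕ := sInf {n : ℕ | j ≤ v n}

/-- `b⁺(j) := min{n ≥ 0 : V(n) = min_{0 ≤ x ≤ d⁺(j)} V(x)}`. -/
def bPlus (v : ℤ → ℝ) (j : ℝ) : ℕ := sInf {n : ℕ | ∀ m : ℕ, m ≤ dPlus v j → v n ≤ v m}

/-- `ν⁺((−∞,−j]) := min{n ≥ 0 : V(n) ≤ −j}`. -/
def nuMinus (v : ℤ → ℝ) (j : ℝ) : ℕ := sInf {n : ℕ | v n ≤ -j}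

/-- `|d⁻(j)|`, where `d⁻(j) := max{n ≤ 0 : V(n) ≥ j}`. -/
def dMinusAbs (v : ℤ → ℝ) (j : ℝ) : ℕ := sInf {m : ℕ | j ≤ v (-(m : ℤ))}

/-- `|b⁻(j)|`, where `b⁻(j) := max{n ≤ 0 : V(n) = min_{d⁻(j) ≤ x ≤ 0} V(x)}`. -/
def bMinusAbs (v : ℤ → ℝ) (j : ℝ) : ℕ :=
  sInf {m : ℕ | ∀ k : ℕ, k ≤ dMinusAbs v j → v (-(m : ℤ)) ≤ v (-(k : ℤ))}

/-- The interval of half-width `c·γ_i(j)^{2+ε'}` around `b⁺(j)`, with constant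
`c = c₅` for the innermost scale `i = M(j)−1` and `c = c₆` otherwise. -/
def thetaBall (α ε' c₅ c₆ : ℝ) (v : ℤ → ℝ) (j : ℝ) (i : ℕ) : Set ℤ :=
  {x : ℤ | |(x : ℝ) - (bPlus v j : ℝ)| ≤
    (if i = bigM α ε' j - 1 then c₅ else c₆) * gamScale α j i ^ (2 + ε')}

/-- `Θ̄_i(j)`: the `i`-th annulus around `b⁺(j)` (the ball at scale `i` minus the
balls at the finer scales `i+1, …, M(j)−1`). -/
def thetaBar (α ε' c₅ c₆ : ℝ) (v : ℤ → ℝ) (j : ℝ) (i : ℕ) : Set ℤ :=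
  thetaBall α ε' c₅ c₆ v j i \ ⋃ p ∈ Finset.Ioo i (bigM α ε' j), thetaBall α ε' c₅ c₆ v j p

/-- `Θ_i(j) := Θ̄_i(j) ∩ I(j)` with `I(j) = [ν⁺((−∞,−j]), d⁺(j)]`. -/
def thetaSet (α ε' c₅ c₆ : ℝ) (v : ℤ → ℝ) (j : ℝ) (i : ℕ) : Set ℤ :=
  thetaBar α ε' c₅ c₆ v j i ∩ {x : ℤ | (nuMinus v j : ℤ) ≤ x ∧ x ≤ (dPlus v j : ℤ)}

/-- `Θ_{−1}(j) := [−j^{2+ε'}, j^{2+ε'}] ∩ [d⁻(j), ν⁺((−∞,−j])]`. -/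
def thetaNeg (ε' : ℝ) (v : ℤ → ℝ) (j : ℝ) : Set ℤ :=
  {x : ℤ | -(j ^ (2 + ε')) ≤ (x : ℝ) ∧ (x : ℝ) ≤ j ^ (2 + ε') ∧
    -(dMinusAbs v j : ℤ) ≤ x ∧ x ≤ (nuMinus v j : ℤ)}

/-- `A₁^env(j) := {−4j ≤ V(b⁺(j)) ≤ −3j}`. -/
def A1env (v : ℤ → ℝ) (j : ℝ) : Prop := -4 * j ≤ v (bPlus v j) ∧ v (bPlus v j) ≤ -3 * j

/-- `A₂^env(j) := {max_{0≤x≤y≤b⁺(j)} (V(y)−V(x)) ≤ j/4}`. -/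
def A2env (v : ℤ → ℝ) (j : ℝ) : Prop :=
  ∀ x y : ℕ, x ≤ y → y ≤ bPlus v j → v y - v x ≤ j / 4

/-- `A_ann^env(j) := ∩_{i=0}^{M(j)−2} {∑_{x∈Θ_i(j)} e^{−(V(x)−V(b⁺(j)))} ≤ ε_i(j)²}`. -/
def AannEnv (α ε' c₄ c₅ c₆ : ℝ) (v : ℤ → ℝ) (j : ℝ) : Prop :=
  ∀ i : ℕ, i + 2 ≤ bigM α ε' j →
    ∑' x : thetaSet α ε' c₅ c₆ v j i, Real.exp (-(v x - v (bPlus v j)))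
      ≤ epsScale α c₄ j i ^ 2

/-- `B^env(j) := {V(b⁻(j)) ≤ −j/6, max_{d⁻(j)≤x≤y≤0} (V(y)−V(x)) ≤ j/3}`. -/
def Benv (v : ℤ → ℝ) (j : ℝ) : Prop :=
  v (-(bMinusAbs v j : ℤ)) ≤ -j / 6 ∧
    ∀ x y : ℤ, -(dMinusAbs v j : ℤ) ≤ x → x ≤ y → y ≤ 0 → v y - v x ≤ j / 3

/-- `A_i^sce(j) := {max_{x∈Θ_i(j)} ξ_x⁻ < ε_i(j)^{−1/2}}`, `0 ≤ i ≤ M(j)−2`. -/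
def AsceI (α ε' c₄ c₅ c₆ : ℝ) (v ξ : ℤ → ℝ) (j : ℝ) (i : ℕ) : Prop :=
  ∀ x ∈ thetaSet α ε' c₅ c₆ v j i, max (-(ξ x)) 0 < epsScale α c₄ j i ^ (-(1 / 2) : ℝ)

/-- `A_{−1}^sce(j) := {max_{x∈Θ_{−1}(j)} ξ_x⁻ < ε_{−1}(j)^{−1/2}}`. -/
def AsceNeg (α ε' c₄ : ℝ) (v ξ : ℤ → ℝ) (j : ℝ) : Prop :=
  ∀ x ∈ thetaNeg ε' v j, max (-(ξ x)) 0 < epsScale α c₄ j 0 ^ (-(1 / 2) : ℝ)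

/-- `A_{M(j)−1}^sce(j) := {min_{x∈Θ_{M(j)−1}(j)} ξ_x ≥ a − ρ}`. -/
def AsceTop (α ε' c₅ c₆ a ρ : ℝ) (v ξ : ℤ → ℝ) (j : ℝ) : Prop :=
  ∀ x ∈ thetaSet α ε' c₅ c₆ v j (bigM α ε' j - 1), a - ρ ≤ ξ x

/-- The ``good environment-scenery'' event `A(j)`. -/
def goodPair (α ε' c₄ c₅ c₆ a ρ : ℝ) (v ξ : ℤ → ℝ) (j : ℝ) : Prop :=
  A1env v j ∧ A2env v j ∧ AannEnv α ε' c₄ c₅ c₆ v j ∧ Benv v j ∧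
    AsceNeg α ε' c₄ v ξ j ∧
    (∀ i : ℕ, i + 2 ≤ bigM α ε' j → AsceI α ε' c₄ c₅ c₆ v ξ j i) ∧
    AsceTop α ε' c₅ c₆ a ρ v ξ j

end SinaiSceneryDefs


open MeasureTheory ProbabilityTheory Filter Set
set_option linter.unusedSectionVars false

/-- sigma-algebra generated by the coordinates in `S` -/
def SG {Ω ι : Type*} (X : ι → Ω → ℝ) (S : Set ι) : MeasurableSpace Ω :=
  ⨆ i ∈ S, MeasurableSpace.comap (X i) inferInstance

section
variable {Ω ι : Type*} {mΩ : MeasurableSpace Ω} {μ : Measure Ω}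

lemma SG_le {X : ι → Ω → ℝ} (hX : ∀ i, Measurable (X i)) (S : Set ι) : SG X S ≤ mΩ :=
  iSup₂_le fun i _ => (hX i).comap_le

lemma SG_mono {X : ι → Ω → ℝ} {S T : Set ι} (h : S ⊆ T) : SG X S ≤ SG X T :=
  biSup_mono h

lemma SG_meas {X : ι → Ω → ℝ} {S : Set ι} {i : ι} (h : i ∈ S) : Measurable[SG X S] (X i) := by
  rw [measurable_iff_comap_le]
  exact le_iSup₂ (f := fun i (_ : i ∈ S) => MeasurableSpace.comap (X i) inferInstance) i h

lemma SG_indep {X : ι → Ω → ℝ} (hX : ∀ i, Measurable (X i)) (hi : iIndepFun X μ) {S T : Set ι}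
    (h : Disjoint S T) : Indep (SG X S) (SG X T) μ :=
  indep_iSup_of_disjoint (fun i => (hX i).comap_le) hi h

lemma SG_inter [IsProbabilityMeasure μ] {X : ι → Ω → ℝ} (hX : ∀ i, Measurable (X i))
    (hi : iIndepFun X μ) {S T : Set ι}
    (h : Disjoint S T) {A B : Set Ω} (hA : MeasurableSet[SG X S] A) (hB : MeasurableSet[SG X T] B) :
    μ.real (A ∩ B) = μ.real A * μ.real B := by
  have := (Indep_iff _ _ μ).1 (SG_indep hX hi h) A B hA hB
  simp [Measure.real, this, ENNReal.toReal_mul]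

lemma SG_integral [IsProbabilityMeasure μ] {X : ι → Ω → ℝ} (hX : ∀ i, Measurable (X i))
    (hi : iIndepFun X μ) {S T : Set ι}
    (h : Disjoint S T) {f g : Ω → ℝ} (hf : Measurable[SG X S] f) (hg : Measurable[SG X T] g) :
    ∫ ω, f ω * g ω ∂μ = (∫ ω, f ω ∂μ) * ∫ ω, g ω ∂μ := by
  have hI : IndepFun f g μ := by
    rw [IndepFun_iff_Indep]
    exact indep_of_indep_of_le_left (indep_of_indep_of_le_right (SG_indep hX hi h) hg.comap_le)
      hf.comap_le
  exact hI.integral_fun_mul_eq_mul_integral ((hf.mono (SG_le hX S) le_rfl).aestronglyMeasurable)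
    ((hg.mono (SG_le hX T) le_rfl).aestronglyMeasurable)

/-- a bounded centred random walk step sequence -/
structure Stp (μ : Measure Ω) (X : ι → Ω → ℝ) (L s : ℝ) : Prop where
  meas : ∀ i, Measurable (X i)
  indep : iIndepFun X μ
  bdd : ∀ i ω, |X i ω| ≤ L
  mean : ∀ i, ∫ ω, X i ω ∂μ = 0
  var : ∀ i, ∫ ω, X i ω ^ 2 ∂μ = s

/-- partial sums -/
def PS (X : ℕ → Ω → ℝ) (k : ℕ) (ω : Ω) : ℝ := ∑ i ∈ Finset.range k, X i ω

lemma PS_meas {X : ℕ → Ω → ℝ} {k n : ℕ} (h : k ≤ n) : Measurable[SG X (Iio n)] (PS X k) := by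
  unfold PS
  refine Finset.measurable_fun_sum _ fun i hi => SG_meas ?_
  simp at hi ⊢; omega

lemma PS_bdd {X : ℕ → Ω → ℝ} {L s : ℝ} (h : Stp μ X L s) (k : ℕ) (ω : Ω) :
    |PS X k ω| ≤ k * L := by
  unfold PS
  refine (Finset.abs_sum_le_sum_abs _ _).trans ?_
  refine (Finset.sum_le_sum fun i _ => h.bdd i ω).trans ?_
  simp

lemma bdd_integrable [IsProbabilityMeasure μ] {f : Ω → ℝ} (hf : Measurable f) {C : ℝ}
    (h : ∀ ω, |f ω| ≤ C) : Integrable f μ :=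
  Integrable.of_bound hf.aestronglyMeasurable C (ae_of_all _ h)

open Classical in
/-- the stopped (gated) sum -/
noncomputable def ZS (X : ℕ → Ω → ℝ) (A : ℕ → Set Ω) (m : ℕ) (ω : Ω) : ℝ :=
  ∑ k ∈ Finset.range m, if ω ∈ A k then X k ω else 0

variable [IsProbabilityMeasure μ] {X : ℕ → Ω → ℝ} {L s : ℝ}

lemma ZS_meas {A : ℕ → Set Ω} (hA : ∀ k, MeasurableSet[SG X (Iio k)] (A k)) (m : ℕ) :
    Measurable[SG X (Iio m)] (ZS X A m) := by
  classical
  unfold ZS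
  refine Finset.measurable_fun_sum _ fun i hi => ?_
  simp at hi
  refine Measurable.ite ?_ (SG_meas (by simpa using hi)) measurable_const
  exact SG_mono (Iio_subset_Iio hi.le) _ (hA i)

lemma ZS_bdd (h : Stp μ X L s) (A : ℕ → Set Ω) (m : ℕ) (ω : Ω) : |ZS X A m ω| ≤ m * L := by
  classical
  have hL : 0 ≤ L := (abs_nonneg _).trans (h.bdd 0 ω)
  unfold ZS
  refine (Finset.abs_sum_le_sum_abs _ _).trans ?_
  refine (Finset.sum_le_sum (g := fun _ => L) fun i _ => ?_).trans ?_
  · split_ifs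
    · exact h.bdd i ω
    · simpa using hL
  simp

lemma ZS_succ (A : ℕ → Set Ω) (m : ℕ) (ω : Ω) :
    ZS X A (m+1) ω = ZS X A m ω + (A m).indicator (fun _ => (1:ℝ)) ω * X m ω := by
  classical
  simp [ZS, Finset.sum_range_succ, Set.indicator_apply]

lemma Stp.gate (h : Stp μ X L s) {k : ℕ} {f : Ω → ℝ} (hf : Measurable[SG X (Iio k)] f) :
    ∫ ω, f ω * X k ω ∂μ = 0 := by
  rw [SG_integral h.meas h.indep (T := {k}) (by simp) hf (SG_meas (by simp)), h.mean, mul_zero]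

lemma Stp.gate2 (h : Stp μ X L s) {k : ℕ} {f : Ω → ℝ} (hf : Measurable[SG X (Iio k)] f) :
    ∫ ω, f ω * X k ω ^ 2 ∂μ = (∫ ω, f ω ∂μ) * s := by
  rw [SG_integral h.meas h.indep (T := {k}) (by simp) hf
    (Measurable.pow_const (SG_meas (by simp)) 2), h.var]

lemma ZS_integrable (h : Stp μ X L s) {A : ℕ → Set Ω}
    (hA : ∀ k, MeasurableSet[SG X (Iio k)] (A k)) (m : ℕ) : Integrable (ZS X A m) μ :=
  bdd_integrable ((ZS_meas hA m).mono (SG_le h.meas _) le_rfl) (ZS_bdd h A m)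

lemma ZS_sq_integrable (h : Stp μ X L s) {A : ℕ → Set Ω}
    (hA : ∀ k, MeasurableSet[SG X (Iio k)] (A k)) (m : ℕ) :
    Integrable (fun ω => ZS X A m ω ^ 2) μ :=
  bdd_integrable (C := (m * L)^2) (((ZS_meas hA m).mono (SG_le h.meas _) le_rfl).pow_const 2)
    (fun ω => by rw [abs_pow]; exact pow_le_pow_left₀ (abs_nonneg _) (ZS_bdd h A m ω) 2)

lemma ZS_mean (h : Stp μ X L s) {A : ℕ → Set Ω}
    (hA : ∀ k, MeasurableSet[SG X (Iio k)] (A k)) (m : ℕ) : ∫ ω, ZS X A m ω ∂μ = 0 := by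
  induction m with
  | zero => simp [ZS]
  | succ m ih =>
    have h1 : Measurable[SG X (Iio m)] ((A m).indicator (fun _ => (1:ℝ))) :=
      Measurable.indicator measurable_const (hA m)
    simp_rw [ZS_succ]
    rw [integral_add (ZS_integrable h hA m), ih, h.gate h1, zero_add]
    refine bdd_integrable (C := L) ((h1.mono (SG_le h.meas _) le_rfl).mul (h.meas m)) fun ω => ?_
    by_cases hω : ω ∈ A m <;> simp [hω, h.bdd m ω]
    exact (abs_nonneg _).trans (h.bdd 0 ω)

lemma ZS_var (h : Stp μ X L s) {A : ℕ → Set Ω}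
    (hA : ∀ k, MeasurableSet[SG X (Iio k)] (A k)) (m : ℕ) :
    ∫ ω, ZS X A m ω ^ 2 ∂μ = s * ∑ k ∈ Finset.range m, μ.real (A k) := by
  induction m with
  | zero => simp [ZS]
  | succ m ih =>
    have h1 : Measurable[SG X (Iio m)] ((A m).indicator (fun _ => (1:ℝ))) :=
      Measurable.indicator measurable_const (hA m)
    have h2 : Measurable[SG X (Iio m)] (fun ω => 2 * ZS X A m ω * (A m).indicator (fun _ => (1:ℝ)) ω) :=
      ((ZS_meas hA m).const_mul 2).mul h1
    have e : ∀ ω, ZS X A (m+1) ω ^ 2 = ZS X A m ω ^ 2 +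
        ((2 * ZS X A m ω * (A m).indicator (fun _ => (1:ℝ)) ω) * X m ω +
          (A m).indicator (fun _ => (1:ℝ)) ω * X m ω ^ 2) := by
      intro ω
      rw [ZS_succ]
      by_cases hω : ω ∈ A m <;> simp [hω] <;> ring
    simp_rw [e]
    have hL : ∀ ω : Ω, 0 ≤ L := fun ω => (abs_nonneg _).trans (h.bdd 0 ω)
    have i2 : Integrable (fun ω => (2 * ZS X A m ω * (A m).indicator (fun _ => (1:ℝ)) ω) * X m ω) μ := by
      refine bdd_integrable (C := 2 * (m * L) * L) ((h2.mono (SG_le h.meas _) le_rfl).mul (h.meas m)) fun ω => ?_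
      have := hL ω
      by_cases hω : ω ∈ A m
      · simp [hω, abs_mul]
        gcongr
        · exact ZS_bdd h A m ω
        · exact h.bdd m ω
      · simp [hω]; positivity
    have i3 : Integrable (fun ω => (A m).indicator (fun _ => (1:ℝ)) ω * X m ω ^ 2) μ := by
      refine bdd_integrable (C := L^2) ((h1.mono (SG_le h.meas _) le_rfl).mul ((h.meas m).pow_const 2)) fun ω => ?_
      by_cases hω : ω ∈ A m
      · simp [hω]
        rw [← sq_abs]
        exact pow_le_pow_left₀ (abs_nonneg _) (h.bdd m ω) 2
      · simp [hω]; positivity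
    have i23 : Integrable (fun ω => (2 * ZS X A m ω * (A m).indicator (fun _ => (1:ℝ)) ω) * X m ω +
          (A m).indicator (fun _ => (1:ℝ)) ω * X m ω ^ 2) μ := i2.add i3
    rw [integral_add (ZS_sq_integrable h hA m) i23, integral_add i2 i3, ih, h.gate h2,
      h.gate2 h1, Finset.sum_range_succ,
      integral_indicator_const _ (SG_le h.meas _ _ (hA m))]
    simp; ring

end

open MeasureTheory ProbabilityTheory Filter Set
set_option linter.unusedSectionVars false
section
variable {Ω : Type*} {mΩ : MeasurableSpace Ω} {μ : Measure Ω}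
variable [IsProbabilityMeasure μ] {X : ℕ → Ω → ℝ} {L s : ℝ}

lemma PS_zero (ω : Ω) : PS X 0 ω = 0 := by simp [PS]

lemma PS_succ (k : ℕ) (ω : Ω) : PS X (k+1) ω = PS X k ω + X k ω := by
  simp [PS, Finset.sum_range_succ]

lemma Stp.L_nonneg (h : Stp μ X L s) : 0 ≤ L := by
  obtain ⟨ω⟩ := (inferInstance : NeZero μ).out |> fun h => nonempty_of_measure_ne_zero (μ := μ) (s := univ) (by simp)
  exact (abs_nonneg _).trans (h.bdd 0 ω)

lemma ZS_eq (A : ℕ → Set Ω) (ω : Ω) {u v m : ℕ} (huv : u ≤ v) (hvm : v ≤ m)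
    (h1 : ∀ k, u ≤ k → k < v → ω ∈ A k) (h2 : ∀ k, k < m → (k < u ∨ v ≤ k) → ω ∉ A k) :
    ZS X A m ω = PS X v ω - PS X u ω := by
  classical
  unfold ZS PS
  rw [← Finset.sum_Ico_eq_sub _ huv, ← Finset.sum_filter]
  apply Finset.sum_congr _ (fun _ _ => rfl)
  ext k
  simp only [Finset.mem_filter, Finset.mem_range, Finset.mem_Ico]
  constructor
  · rintro ⟨hk, hA⟩
    by_contra hc
    exact h2 k hk (by omega) hA
  · rintro ⟨hk, hk'⟩
    exact ⟨by omega, h1 k hk hk'⟩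

lemma ZS_eq_zero (A : ℕ → Set Ω) (ω : Ω) {m : ℕ}
    (h2 : ∀ k, k < m → ω ∉ A k) :
    ZS X A m ω = 0 := by
  rw [ZS_eq A ω (le_refl 0) (Nat.zero_le m) (by intros; omega) (fun k hk _ => h2 k hk)]; simp

/-- first index `≥ u` (at most `m`) where `P` fails -/
lemma first_fail (P : ℕ → Prop) {u m : ℕ} (hum : u ≤ m) :
    ∃ v, u ≤ v ∧ v ≤ m ∧ (∀ k, u ≤ k → k < v → P k) ∧ (v = m ∨ ¬ P v) := by
  classical
  have hex : ∃ v, u ≤ v ∧ (v = m ∨ ¬ P v) := ⟨m, hum, Or.inl rfl⟩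
  refine ⟨Nat.find hex, (Nat.find_spec hex).1, Nat.find_min' hex ⟨hum, Or.inl rfl⟩, ?_,
    (Nat.find_spec hex).2⟩
  intro k hk hkv
  have := Nat.find_min hex hkv
  push Not at this
  exact (this hk).2

/-- Kolmogorov's maximal inequality -/
lemma Stp.maximal (h : Stp μ X L s) (hs : 0 ≤ s) (m : ℕ) {l : ℝ} (hl : 0 < l) :
    μ.real {ω | ∃ k ≤ m, l ≤ |PS X k ω|} * l ^ 2 ≤ s * m := by
  let A : ℕ → Set Ω := fun k => {ω | ∀ i ≤ k, |PS X i ω| < l}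
  have hA : ∀ k, MeasurableSet[SG X (Iio k)] (A k) := by
    intro k
    simp only [A, ofPred_forall]
    refine MeasurableSet.iInter fun i => MeasurableSet.iInter fun hi => ?_
    have : Measurable[SG X (Iio k)] (fun ω => |PS X i ω|) :=
      continuous_abs.measurable.comp (PS_meas hi)
    exact measurableSet_lt this measurable_const
  have hE : MeasurableSet {ω | ∃ k ≤ m, l ≤ |PS X k ω|} := by
    simp only [ofPred_exists, ofPred_and]
    refine MeasurableSet.iUnion fun i => ?_
    refine (MeasurableSet.const _).inter ?_
    exact measurableSet_le measurable_const
      (((PS_meas (le_refl i)).mono (SG_le h.meas _) le_rfl).abs)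
  have key := ZS_var h hA m
  have h1 : ∫ ω, {ω | ∃ k ≤ m, l ≤ |PS X k ω|}.indicator (fun _ => l^2) ω ∂μ
      ≤ ∫ ω, ZS X A m ω ^ 2 ∂μ := by
    refine integral_mono ((integrable_const _).indicator hE) (ZS_sq_integrable h hA m) fun ω => ?_
    by_cases hω : ω ∈ {ω | ∃ k ≤ m, l ≤ |PS X k ω|}
    · simp only [hω, indicator_of_mem]
      obtain ⟨v, -, hvm, hv, hv'⟩ := first_fail (fun k => |PS X k ω| < l) (Nat.zero_le m)
      have hge : l ≤ |PS X v ω| := by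
        obtain ⟨k, hk, hk'⟩ := hω
        rcases hv' with rfl | hv'
        · rcases hk.lt_or_eq with h3 | rfl
          · exact absurd (hv k (Nat.zero_le _) h3) (not_lt.2 hk')
          · exact hk'
        · exact not_lt.1 hv'
      rw [ZS_eq A ω (Nat.zero_le v) hvm, PS_zero, sub_zero, ← sq_abs (PS X v ω)]
      · exact pow_le_pow_left₀ hl.le hge 2
      · intro k _ hk i hi
        exact hv i (Nat.zero_le _) (by omega)
      · intro k hk hk' hAk
        exact absurd (hAk v (by omega)) (not_lt.2 hge)
    · simp only [hω, not_false_eq_true, indicator_of_notMem]; positivity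
  rw [integral_indicator_const _ hE, key] at h1
  have h2 : ∑ k ∈ Finset.range m, μ.real (A k) ≤ m := by
    calc _ ≤ ∑ k ∈ Finset.range m, (1:ℝ) := Finset.sum_le_sum fun i _ => measureReal_le_one
      _ = m := by simp
  simp only [smul_eq_mul] at h1
  exact h1.trans (by gcongr)

/-- the walk `w`, after time `n`, is at height `≤ h`, later reaches height `H`, and stays
nonnegative until then -/
def BadW (w : ℕ → ℝ) (n : ℕ) (h H : ℝ) (N : ℕ) : Prop :=
  ∃ k l, n ≤ k ∧ k ≤ l ∧ l ≤ N ∧ w k ≤ h ∧ H ≤ w l ∧ ∀ i ≤ l, 0 ≤ w i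

lemma BadW_meas {m : MeasurableSpace Ω} {w : Ω → ℕ → ℝ} {N : ℕ}
    (hw : ∀ k ≤ N, Measurable[m] (fun ω => w ω k)) (n : ℕ) (h H : ℝ) :
    MeasurableSet[m] {ω | BadW (w ω) n h H N} := by
  have : {ω | BadW (w ω) n h H N} = ⋃ k, ⋃ l, ⋃ (_ : n ≤ k ∧ k ≤ l ∧ l ≤ N),
      ({ω | w ω k ≤ h} ∩ {ω | H ≤ w ω l} ∩ ⋂ i, ⋂ (_ : i ≤ l), {ω | 0 ≤ w ω i}) := by
    ext ω
    simp only [BadW, mem_iUnion, mem_inter_iff, mem_iInter, mem_ofPred_eq, exists_prop]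
    constructor
    · rintro ⟨k, l, h1, h2, h3, h4, h5, h6⟩
      exact ⟨k, l, ⟨h1, h2, h3⟩, ⟨h4, h5⟩, h6⟩
    · rintro ⟨k, l, ⟨h1, h2, h3⟩, ⟨h4, h5⟩, h6⟩
      exact ⟨k, l, h1, h2, h3, h4, h5, h6⟩
  rw [this]
  refine MeasurableSet.iUnion fun k => MeasurableSet.iUnion fun l => MeasurableSet.iUnion fun hh => ?_
  refine ((measurableSet_le (hw k (by omega)) measurable_const).inter
    (measurableSet_le measurable_const (hw l (by omega)))).inter ?_
  exact MeasurableSet.iInter fun i => MeasurableSet.iInter fun hi =>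
    measurableSet_le measurable_const (hw i (by omega))

lemma Stp.bad_aux (X0 : Stp μ X L s) (n N : ℕ) {h H : ℝ} (hh : 0 ≤ h) (hH : h < H) :
    μ.real {ω | BadW (fun k => PS X k ω) n h H N} * (H - h) ≤
      (h + L) * μ.real {ω | ∀ k ≤ n, 0 ≤ PS X k ω} := by
  have hL := X0.L_nonneg
  let B : Set Ω := {ω | ∀ k ≤ n, 0 ≤ PS X k ω}
  have hB : ∀ m, n ≤ m → MeasurableSet[SG X (Iio m)] B := by
    intro m hm
    simp only [B, ofPred_forall]
    exact MeasurableSet.iInter fun i => MeasurableSet.iInter fun hi =>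
      measurableSet_le measurable_const (PS_meas (by omega))
  let A : ℕ → Set Ω := fun k => {ω | ω ∈ B ∧ ∃ i, n ≤ i ∧ i ≤ k ∧ PS X i ω ≤ h ∧
    (∀ i', n ≤ i' → i' < i → h < PS X i' ω) ∧
      ∀ i', i ≤ i' → i' ≤ k → 0 ≤ PS X i' ω ∧ PS X i' ω < H}
  have hA : ∀ k, MeasurableSet[SG X (Iio k)] (A k) := by
    intro k
    by_cases hk : n ≤ k
    · simp only [A, ofPred_forall, ofPred_and, ofPred_exists]
      refine (hB k hk).inter (MeasurableSet.iUnion fun i => ?_)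
      refine (MeasurableSet.const _).inter ?_
      by_cases hik : i ≤ k
      · refine (MeasurableSet.const _).inter ?_
        refine (measurableSet_le (PS_meas hik) measurable_const).inter ?_
        refine (MeasurableSet.iInter fun i' => MeasurableSet.iInter fun _ =>
          MeasurableSet.iInter fun hi => measurableSet_lt measurable_const
            (PS_meas (by omega))).inter ?_
        exact MeasurableSet.iInter fun i' => MeasurableSet.iInter fun _ =>
          MeasurableSet.iInter fun hi => (measurableSet_le measurable_const
            (PS_meas (by omega))).inter (measurableSet_lt (PS_meas (by omega)) measurable_const)
      · simp [hik]
    · have : A k = ∅ := by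
        ext ω
        simp only [A, mem_ofPred_eq, mem_empty_iff_false, iff_false]
        rintro ⟨_, i, h1, h2, _⟩
        omega
      rw [this]; exact @MeasurableSet.empty _ (_)
  let E : Set Ω := {ω | BadW (fun k => PS X k ω) n h H N}
  have hE : MeasurableSet E :=
    BadW_meas (fun k _ => (PS_meas (le_refl k)).mono (SG_le X0.meas _) le_rfl) n h H
  have hB' : MeasurableSet B := SG_le X0.meas _ _ (hB n le_rfl)
  have key := ZS_mean X0 hA N
  have h1 : ∫ ω, (E.indicator (fun _ => H - h) ω - B.indicator (fun _ => h + L) ω) ∂μ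
      ≤ ∫ ω, ZS X A N ω ∂μ := by
    refine integral_mono (((integrable_const _).indicator hE).sub
      ((integrable_const _).indicator hB')) (ZS_integrable X0 hA N) fun ω => ?_
    -- pathwise
    have hEB : ω ∈ E → ω ∈ B := by
      rintro ⟨k, l, h1, h2, h3, h4, h5, h6⟩ i hi
      exact h6 i (by omega)
    by_cases hωB : ω ∈ B
    swap
    · have : ω ∉ E := fun h => hωB (hEB h)
      simp only [hωB, this, not_false_eq_true, indicator_of_notMem, sub_zero]
      rw [ZS_eq_zero]
      intro k _ hk; exact hωB hk.1
    by_cases hκ : ∃ i, n ≤ i ∧ i ≤ N ∧ PS X i ω ≤ h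
    swap
    · have : ω ∉ E := by
        rintro ⟨k, l, h1, h2, h3, h4, h5, h6⟩
        exact hκ ⟨k, h1, by omega, h4⟩
      simp only [hωB, this, not_false_eq_true, indicator_of_notMem, indicator_of_mem]
      rw [ZS_eq_zero]
      · linarith
      rintro k hk ⟨_, i, h1, h2, h3, _⟩
      exact hκ ⟨i, h1, by omega, h3⟩
    classical
    obtain ⟨hκ1, hκ2, hκ3⟩ := Nat.find_spec hκ
    have hκm : ∀ i, n ≤ i → i < Nat.find hκ → h < PS X i ω := by
      intro i hi hi'
      have := Nat.find_min hκ hi'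
      push Not at this
      exact this hi (by omega)
    set κ := Nat.find hκ with hκdef
    have huniq : ∀ i, n ≤ i → PS X i ω ≤ h → (∀ i', n ≤ i' → i' < i → h < PS X i' ω) → i = κ := by
      intro i hi hi' hi''
      rcases lt_trichotomy i κ with h1 | h1 | h1
      · exact absurd (hκm i hi h1) (not_lt.2 hi')
      · exact h1
      · exact absurd (hi'' κ hκ1 h1) (not_lt.2 hκ3)
    have hEκ : ∀ k, n ≤ k → PS X k ω ≤ h → κ ≤ k := by
      intro k hk hk'
      by_contra hc
      exact absurd (hκm k hk (by omega)) (not_lt.2 hk')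
    by_cases h0 : 0 ≤ PS X κ ω
    swap
    · have : ω ∉ E := by
        rintro ⟨k, l, h1, h2, h3, h4, h5, h6⟩
        exact h0 (h6 κ ((hEκ k h1 h4).trans h2))
      simp only [hωB, this, not_false_eq_true, indicator_of_notMem, indicator_of_mem]
      rw [ZS_eq_zero]
      · linarith
      rintro k hk ⟨_, i, h1, h2, h3, h4, h5⟩
      have := huniq i h1 h3 h4
      subst this
      exact h0 (h5 _ le_rfl h2).1
    obtain ⟨v, hv1, hv2, hv3, hv4⟩ :=
      first_fail (fun i => 0 ≤ PS X i ω ∧ PS X i ω < H) hκ2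
    have hZ : ZS X A N ω = PS X v ω - PS X κ ω := by
      refine ZS_eq A ω hv1 hv2 ?_ ?_
      · intro k hk hk'
        exact ⟨hωB, κ, hκ1, hk, hκ3, hκm, fun i hi hi' => hv3 i hi (by omega)⟩
      · rintro k hk hk' ⟨_, i, h1, h2, h3, h4, h5⟩
        have := huniq i h1 h3 h4
        subst this
        rcases hk' with hk' | hk'
        · omega
        · rcases hv4 with hv4 | hv4
          · omega
          · exact hv4 (h5 v hv1 hk')
    have hlow : -L ≤ PS X v ω := by
      rcases hv1.lt_or_eq with h1 | h1
      · obtain ⟨v', rfl⟩ : ∃ v', v = v' + 1 := ⟨v - 1, by omega⟩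
        have := (hv3 v' (by omega) (by omega)).1
        have h2 := neg_abs_le (X v' ω)
        have h3 := X0.bdd v' ω
        rw [PS_succ]; linarith
      · rw [← h1]; linarith
    by_cases hωE : ω ∈ E
    · simp only [hωB, hωE, indicator_of_mem]
      obtain ⟨k, l, h1, h2, h3, h4, h5, h6⟩ := hωE
      have hκk := hEκ k h1 h4
      have hvl : v ≤ l := by
        by_contra hc
        have := (hv3 l (by omega) (by omega)).2
        linarith
      have : H ≤ PS X v ω := by
        rcases hv4 with hv4 | hv4
        · have : v = l := by omega
          rw [this]; exact h5
        · have h7 := h6 v hvl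
          by_contra hc
          exact hv4 ⟨h7, not_le.1 hc⟩
      rw [hZ]; linarith
    · simp only [hωB, hωE, not_false_eq_true, indicator_of_notMem, indicator_of_mem]
      rw [hZ]; linarith
  rw [integral_sub ((integrable_const _).indicator hE) ((integrable_const _).indicator hB'),
    integral_indicator_const _ hE, integral_indicator_const _ hB', key] at h1
  simp only [smul_eq_mul] at h1
  have : μ.real E * (H - h) ≤ (h + L) * μ.real B := by linarith
  exact this

lemma Stp.reach (X0 : Stp μ X L s) (N : ℕ) {H : ℝ} (hH : 0 < H) :
    μ.real {ω | BadW (fun k => PS X k ω) 0 0 H N} ≤ L / H := by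
  have h1 := X0.bad_aux 0 N le_rfl hH
  rw [le_div_iff₀ hH]
  have h2 : μ.real {ω | ∀ k ≤ 0, 0 ≤ PS X k ω} ≤ 1 := measureReal_le_one
  have := X0.L_nonneg
  nlinarith

lemma Stp.posit (X0 : Stp μ X L s) (hs : 0 < s) (n : ℕ) (hn : 1 ≤ n) :
    μ.real {ω | ∀ k ≤ n, 0 ≤ PS X k ω} ≤ (L + (L + 2 * L ^ 2) / s) / √n := by
  have hL := X0.L_nonneg
  set K : ℝ := √n with hK
  have hK1 : 1 ≤ K := by rw [hK]; exact Real.one_le_sqrt.2 (by exact_mod_cast hn)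
  let A : ℕ → Set Ω := fun k => {ω | ∀ i ≤ k, 0 ≤ PS X i ω ∧ PS X i ω < K}
  have hA : ∀ k, MeasurableSet[SG X (Iio k)] (A k) := by
    intro k
    simp only [A, ofPred_forall, ofPred_and]
    exact MeasurableSet.iInter fun i => MeasurableSet.iInter fun hi =>
      (measurableSet_le measurable_const (PS_meas hi)).inter
        (measurableSet_lt (PS_meas hi) measurable_const)
  have hmean := ZS_mean X0 hA n
  have hvar := ZS_var X0 hA n
  have h1 : ∫ ω, ZS X A n ω ^ 2 ∂μ ≤ ∫ ω, ((K + L) * ZS X A n ω + (K + 2 * L) * L) ∂μ := by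
    refine integral_mono (ZS_sq_integrable X0 hA n)
      (((ZS_integrable X0 hA n).const_mul _).add (integrable_const _)) fun ω => ?_
    obtain ⟨v, hv1, hv2, hv3, hv4⟩ :=
      first_fail (fun i => 0 ≤ PS X i ω ∧ PS X i ω < K) (Nat.zero_le n)
    have hZ : ZS X A n ω = PS X v ω := by
      rw [ZS_eq A ω hv1 hv2, PS_zero, sub_zero]
      · intro k _ hk i hi
        exact hv3 i (Nat.zero_le _) (by omega)
      · intro k hk hk' hAk
        rcases hv4 with hv4 | hv4
        · omega
        · exact hv4 (hAk v (by omega))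
    have hb : -L ≤ PS X v ω ∧ PS X v ω ≤ K + L := by
      rcases Nat.eq_zero_or_pos v with rfl | hv
      · rw [PS_zero]; constructor <;> linarith
      · obtain ⟨v', rfl⟩ : ∃ v', v = v' + 1 := ⟨v - 1, by omega⟩
        have h0 := (hv3 v' (by omega) (by omega))
        have h2 := abs_le.1 (X0.bdd v' ω)
        rw [PS_succ]; constructor <;> linarith
    simp only [hZ]
    nlinarith
  rw [integral_add ((ZS_integrable X0 hA n).const_mul _) (integrable_const _),
    integral_const_mul, hmean, hvar] at h1
  simp only [mul_zero, integral_const, probReal_univ, smul_eq_mul, one_mul, zero_add] at h1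
  have h2 : n * μ.real (A n) ≤ ∑ k ∈ Finset.range n, μ.real (A k) := by
    calc (n:ℝ) * μ.real (A n) = ∑ k ∈ Finset.range n, μ.real (A n) := by simp
      _ ≤ _ := by
        refine Finset.sum_le_sum fun k hk => measureReal_mono ?_
        intro ω hω i hi
        exact hω i (by simp at hk; omega)
  have h3 : μ.real {ω | ∀ k ≤ n, 0 ≤ PS X k ω} ≤ μ.real (A n) +
      μ.real {ω | BadW (fun k => PS X k ω) 0 0 K n} := by
    refine (measureReal_mono ?_).trans (measureReal_union_le _ _)
    intro ω hω
    by_cases hc : ∃ l ≤ n, K ≤ PS X l ω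
    · obtain ⟨l, hl, hl'⟩ := hc
      exact Or.inr ⟨0, l, le_rfl, Nat.zero_le _, hl, (PS_zero ω).le, hl', fun i hi => hω i (by omega)⟩
    · push Not at hc
      exact Or.inl fun i hi => ⟨hω i hi, hc i hi⟩
  have h4 := X0.reach n (H := K) (by linarith)
  have hKn : K * K = n := by rw [hK]; exact Real.mul_self_sqrt (by positivity)
  have h5 : μ.real (A n) ≤ ((L + 2 * L^2)/s) / K := by
    rw [div_div, le_div_iff₀ (by positivity)]
    have h6 : s * (K * K * μ.real (A n)) ≤ (K + 2 * L) * L := by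
      rw [hKn]; exact (mul_le_mul_of_nonneg_left h2 hs.le).trans h1
    have h7 : (K + 2 * L) * L ≤ K * (L + 2 * L^2) := by nlinarith [mul_nonneg hL hL]
    have h8 : K * (μ.real (A n) * (s * K)) ≤ K * (L + 2 * L^2) := by
      calc _ = s * (K * K * μ.real (A n)) := by ring
        _ ≤ _ := h6.trans h7
    exact le_of_mul_le_mul_left h8 (by linarith)
  calc _ ≤ _ := h3
    _ ≤ ((L + 2 * L^2)/s) / K + L / K := add_le_add h5 h4
    _ = _ := by ring

/-- the two-stage estimate -/
lemma Stp.bad (X0 : Stp μ X L s) (hs : 0 < s) (n N : ℕ) (hn : 1 ≤ n) {h H : ℝ} (hh : 0 ≤ h)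
    (hH : 0 < H) (hhH : 2 * h ≤ H) :
    μ.real {ω | BadW (fun k => PS X k ω) n h H N} ≤
      (L + (L + 2 * L ^ 2) / s) * (2 * (h + L)) / (√n * H) := by
  have hL := X0.L_nonneg
  have h1 := X0.bad_aux n N hh (by linarith : h < H)
  have h2 := X0.posit hs n hn
  have hn' : 0 < √(n:ℝ) := Real.sqrt_pos.2 (by exact_mod_cast hn)
  rw [le_div_iff₀ (by positivity)]
  rw [le_div_iff₀ hn'] at h2
  set P := μ.real {ω | BadW (fun k => PS X k ω) n h H N}
  set Q := μ.real {ω | ∀ k ≤ n, 0 ≤ PS X k ω}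
  have hP : 0 ≤ P := measureReal_nonneg
  have h3 : P * H ≤ 2 * (h + L) * Q := by nlinarith
  calc P * (√n * H) = √n * (P * H) := by ring
    _ ≤ √n * (2 * (h + L) * Q) := by gcongr
    _ = (Q * √n) * (2 * (h + L)) := by ring
    _ ≤ _ := by gcongr
end

open MeasureTheory ProbabilityTheory Filter Set
set_option linter.unusedSectionVars false
set_option linter.unusedVariables false
section
variable {Ω ι : Type*} {mΩ : MeasurableSpace Ω} {μ : Measure Ω}

lemma Stp.comp {κ : Type*} {X : ι → Ω → ℝ} {L s : ℝ} (h : Stp μ X L s) {g : κ → ι}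
    (hg : Function.Injective g) : Stp μ (fun k => X (g k)) L s where
  meas k := h.meas _
  indep := h.indep.precomp hg
  bdd k := h.bdd _
  mean k := h.mean _
  var k := h.var _

lemma Stp.neg {X : ι → Ω → ℝ} {L s : ℝ} (h : Stp μ X L s) : Stp μ (fun k ω => - X k ω) L s where
  meas k := (h.meas _).neg
  indep := h.indep.comp (fun _ x => -x) (fun _ => measurable_neg)
  bdd k ω := by rw [abs_neg]; exact h.bdd k ω
  mean k := by rw [integral_neg, h.mean, neg_zero]
  var k := by simpa using h.var k

lemma SG_le_of {κ : Type*} {X : ι → Ω → ℝ} {Y : κ → Ω → ℝ} {S : Set κ} {T : Set ι}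
    (h : ∀ i ∈ S, Measurable[SG X T] (Y i)) : SG Y S ≤ SG X T :=
  iSup₂_le fun i hi => (h i hi).comap_le

variable [IsProbabilityMeasure μ] {X : ℕ → Ω → ℝ} {L s : ℝ}

lemma PS_measurable (h : Stp μ X L s) (k : ℕ) : Measurable (PS X k) :=
  (PS_meas le_rfl).mono (SG_le h.meas _) le_rfl

lemma Stp.pow_int (h : Stp μ X L s) (k p q : ℕ) : 
    Integrable (fun ω => PS X k ω ^ p * X k ω ^ q) μ := by
  refine bdd_integrable (C := (k * L) ^ p * L ^ q)
    (((PS_measurable h k).pow_const p).mul ((h.meas k).pow_const q)) fun ω => ?_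
  rw [abs_mul, abs_pow, abs_pow]
  have hL := h.L_nonneg
  gcongr
  · exact PS_bdd h k ω
  · exact h.bdd k ω

lemma Stp.pow_int' (h : Stp μ X L s) (k p : ℕ) : 
    Integrable (fun ω => PS X k ω ^ p) μ := by
  simpa using h.pow_int k p 0

lemma Stp.pow_eq (h : Stp μ X L s) (k p q : ℕ) : 
    ∫ ω, PS X k ω ^ p * X k ω ^ q ∂μ = (∫ ω, PS X k ω ^ p ∂μ) * ∫ ω, X k ω ^ q ∂μ := 
  SG_integral h.meas h.indep (S := Iio k) (T := {k}) (by simp) ((PS_meas le_rfl).pow_const p)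
    ((SG_meas (by simp)).pow_const q)

lemma Stp.s_le (h : Stp μ X L s) : s ≤ L ^ 2 := by
  rw [← h.var 0]
  calc _ ≤ ∫ ω, L ^ 2 ∂μ := by
        refine integral_mono (by simpa using h.pow_int 0 0 2) (integrable_const _) fun ω => ?_
        rw [← sq_abs (X 0 ω)]
        exact pow_le_pow_left₀ (abs_nonneg _) (h.bdd _ ω) 2
    _ = _ := by simp

lemma Stp.mom1 (h : Stp μ X L s) (k : ℕ) : ∫ ω, PS X k ω ∂μ = 0 := by
  have := ZS_mean h (A := fun _ => univ) (fun _ => MeasurableSet.univ) k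
  simpa [ZS, PS] using this

lemma Stp.mom2 (h : Stp μ X L s) (k : ℕ) : ∫ ω, PS X k ω ^ 2 ∂μ = s * k := by
  have := ZS_var h (A := fun _ => univ) (fun _ => MeasurableSet.univ) k
  simpa [ZS, PS] using this

lemma Stp.mom4 (h : Stp μ X L s) (hs : 0 ≤ s) (k : ℕ) : ∫ ω, PS X k ω ^ 4 ∂μ ≤ 3 * L ^ 4 * k ^ 2 := by
  induction k with
  | zero => simp [PS]
  | succ k ih =>
    have e : ∀ ω, PS X (k+1) ω ^ 4 = PS X k ω ^ 4 + (4 * (PS X k ω ^ 3 * X k ω ^ 1) +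
      (6 * (PS X k ω ^ 2 * X k ω ^ 2) + (4 * (PS X k ω ^ 1 * X k ω ^ 3) + PS X k ω ^ 0 * X k ω ^ 4))) := by
      intro ω; rw [PS_succ]; ring
    simp_rw [e]
    have i4 := h.pow_int k 0 4
    have i3 := (h.pow_int k 1 3).const_mul 4
    have i2 := (h.pow_int k 2 2).const_mul 6
    have i1 := (h.pow_int k 3 1).const_mul 4
    have i34 := i3.add i4
    have i234 := i2.add i34
    have i1234 := i1.add i234
    simp only [Pi.add_def] at i34 i234 i1234
    rw [integral_add (h.pow_int' k 4) i1234, integral_add i1 i234, integral_add i2 i34,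
      integral_add i3 i4, integral_const_mul, integral_const_mul, integral_const_mul,
      h.pow_eq, h.pow_eq, h.pow_eq, h.pow_eq]
    simp only [pow_one, pow_zero, h.mean, h.mom1, h.mom2, h.var]
    have hx4 : ∫ ω, X k ω ^ 4 ∂μ ≤ L ^ 4 := by
      calc _ ≤ ∫ ω, L ^ 4 ∂μ := by
            refine integral_mono (by simpa using i4) (integrable_const _) fun ω => ?_
            simp only
            rw [← (by decide : Even 4).pow_abs (X k ω)]
            exact pow_le_pow_left₀ (abs_nonneg _) (h.bdd _ ω) 4
        _ = _ := by simp
    have hs2 := h.s_le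
    have : s * k * s ≤ L ^ 4 * k := by
      calc s * k * s = k * (s * s) := by ring
        _ ≤ k * (L^2 * L^2) := by gcongr
        _ = _ := by ring
    simp only [integral_const, probReal_univ, smul_eq_mul, one_mul]
    push_cast
    nlinarith [h.L_nonneg]

/-- one steering step -/
def StepUp (X : ℕ → Ω → ℝ) (n : ℕ) (a B : ℝ) : Set Ω :=
  {ω | a * √n ≤ PS X n ω ∧ ∀ k ≤ n, |PS X k ω| ≤ B * √n}

lemma exists_step (μ : Measure Ω) [IsProbabilityMeasure μ] {L s : ℝ} (hL : 0 < L) (hs : 0 < s) :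
    ∃ a B c : ℝ, 0 < a ∧ a ≤ B ∧ 0 < c ∧ ∀ X : ℕ → Ω → ℝ, Stp μ X L s → ∀ n : ℕ, 1 ≤ n →
      c ≤ μ.real (StepUp X n a B) := by
  obtain ⟨A, hA, hA2⟩ : ∃ A : ℝ, 0 < A ∧ A ^ 2 * s = 6 * L ^ 4 :=
    ⟨√(6 * L^4 / s), by positivity, by rw [Real.sq_sqrt (by positivity)]; field_simp⟩
  set a := s / (16 * A) with ha
  set c := s / (256 * A ^ 2) with hc
  have ha0 : 0 < a := by positivity
  have hc0 : 0 < c := by positivity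
  refine ⟨a, max a √(s / c), c, ha0, le_max_left _ _, hc0, ?_⟩
  intro X h n hn
  set B := max a √(s / c) with hB
  have hn0 : (0:ℝ) < n := by exact_mod_cast hn
  set r := √(n:ℝ) with hr
  have hr0 : 0 < r := Real.sqrt_pos.2 hn0
  have hrr : r ^ 2 = n := Real.sq_sqrt hn0.le
  -- lower bound for E|S|
  have hpt : ∀ y t : ℝ, 0 < t → y ^ 2 / t - y ^ 4 / t ^ 3 ≤ |y| := by
    intro y t ht
    have h1 : |y| ^ 2 / t - |y| ^ 4 / t ^ 3 ≤ |y| := by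
      have hy := abs_nonneg y
      set z := |y| / t with hz
      have hyz : |y| = z * t := by rw [hz]; field_simp
      have hz0 : 0 ≤ z := by positivity
      rw [hyz]
      have : (z * t) ^ 2 / t - (z * t) ^ 4 / t ^ 3 = (z ^ 2 - z ^ 4) * t := by field_simp
      rw [this]
      have h2 : z ^ 2 - z ^ 4 ≤ z := by
        rcases le_total z 1 with h3 | h3
        · nlinarith [pow_nonneg hz0 4]
        · nlinarith [mul_nonneg hz0 hz0, mul_nonneg (mul_nonneg hz0 hz0) (by nlinarith : 0 ≤ z ^ 2 - 1)]
      exact mul_le_mul_of_nonneg_right h2 ht.le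
    rwa [sq_abs, (by decide : Even 4).pow_abs] at h1
  let U : Set Ω := {ω | a * r ≤ PS X n ω}
  have hU : MeasurableSet U := measurableSet_le measurable_const (PS_measurable h n)
  set t := A * r with ht
  have ht0 : 0 < t := by positivity
  have hkey : ∀ ω, (PS X n ω ^ 2 / t - PS X n ω ^ 4 / t ^ 3) + PS X n ω ≤
      2 * (a * r) + (U.indicator (fun _ => 32 * A * r) ω + PS X n ω ^ 2 / (8 * A * r)) := by
    intro ω
    have h1 := hpt (PS X n ω) t ht0
    set y := PS X n ω with hy
    have h2 : 0 ≤ y ^ 2 / (8 * A * r) := by positivity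
    by_cases hω : ω ∈ U
    · simp only [hω, indicator_of_mem]
      have hy0 : 0 ≤ y := le_trans (by positivity) hω
      rw [abs_of_nonneg hy0] at h1
      have : 2 * y ≤ 32 * A * r + y ^ 2 / (8 * A * r) := by
        have h3 : y ^ 2 / (8 * A * r) - 2 * y + 8 * A * r = (y - 8 * A * r) ^ 2 / (8 * A * r) := by
          field_simp; ring
        have h4 : 0 ≤ (y - 8 * A * r) ^ 2 / (8 * A * r) := by positivity
        have : 0 < A * r := by positivity
        linarith
      have : 0 < a * r := by positivity
      linarith
    · simp only [hω, not_false_eq_true, indicator_of_notMem]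
      have hω' : y < a * r := not_le.1 hω
      have : |y| + y ≤ 2 * (a * r) := by
        rcases abs_cases y with ⟨h3, _⟩ | ⟨h3, _⟩ 
        · linarith
        · rw [h3]; have : 0 < a * r := by positivity
          linarith
      linarith
  have i2 := (h.pow_int' n 2).div_const t
  have i4 := (h.pow_int' n 4).div_const (t ^ 3)
  have i1 : Integrable (fun ω => PS X n ω) μ := by simpa using h.pow_int' n 1
  have iU : Integrable (U.indicator (fun _ => 32 * A * r)) μ := (integrable_const _).indicator hU
  have i2' := (h.pow_int' n 2).div_const (8 * A * r)
  have i24 := i2.sub i4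
  have iU2 := iU.add i2'
  simp only [Pi.sub_def] at i24
  simp only [Pi.add_def] at iU2
  have hintg := integral_mono (i24.add i1) ((integrable_const _).add iU2) hkey
  simp only [Pi.add_apply, Pi.sub_apply] at hintg
  rw [integral_add i24 i1] at hintg
  rw [integral_sub i2 i4, integral_add (integrable_const _) iU2] at hintg
  rw [integral_add iU i2', integral_div, integral_div, integral_div, integral_indicator_const _ hU,
    h.mom1, h.mom2] at hintg
  simp only [integral_const, probReal_univ, smul_eq_mul, one_mul, add_zero] at hintg
  have h4 := h.mom4 hs.le n
  have h4' : (∫ ω, PS X n ω ^ 4 ∂μ) / t ^ 3 ≤ r * (s / (2 * A)) := by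
    rw [div_le_iff₀ (by positivity), ht]
    refine h4.trans (le_of_eq ?_)
    rw [← hrr]
    field_simp
    linear_combination (-1) * hA2
  have e2 : s * (n:ℝ) / t = r * (s / A) := by rw [ht, ← hrr]; field_simp
  have e3 : s * (n:ℝ) / (8 * A * r) = r * (s / (8 * A)) := by rw [← hrr]; field_simp
  rw [e2, e3] at hintg
  have hPU : 2 * c ≤ μ.real U := by
    have h5 : r * (s / A) - r * (s / (2 * A)) ≤ 2 * (a * r) + (μ.real U * (32 * A * r) + r * (s / (8 * A))) := by
      linarith
    have h6 : r * (s / (4 * A)) ≤ r * (μ.real U * (32 * A)) := by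
      have e5 : r * (s / A) - r * (s / (2 * A)) - 2 * (a * r) - r * (s / (8 * A)) = r * (s / (4 * A)) := by
        rw [ha]; field_simp; ring
      linarith
    have h7 := le_of_mul_le_mul_left h6 hr0
    rw [hc]
    have : 2 * (s / (256 * A ^ 2)) * (32 * A) = s / (4 * A) := by field_simp; norm_num
    exact le_of_mul_le_mul_right (this.le.trans h7) (by positivity)
  -- maximal inequality
  have hB0 : 0 < B := lt_of_lt_of_le ha0 (le_max_left _ _)
  have hmax := h.maximal hs.le n (l := B * r) (by positivity)
  have hmax' : μ.real {ω | ∃ k ≤ n, B * r ≤ |PS X k ω|} ≤ c := by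
    have hB2 : s / c ≤ B ^ 2 := by
      calc s / c = √(s/c) ^ 2 := (Real.sq_sqrt (by positivity)).symm
        _ ≤ B ^ 2 := pow_le_pow_left₀ (Real.sqrt_nonneg _) (le_max_right _ _) 2
    rw [div_le_iff₀ hc0] at hB2
    have h8 : μ.real {ω | ∃ k ≤ n, B * r ≤ |PS X k ω|} * B ^ 2 ≤ c * B ^ 2 := by
      have : (μ.real {ω | ∃ k ≤ n, B * r ≤ |PS X k ω|} * B ^ 2) * n ≤ s * n := by
        rw [mul_pow, hrr, ← mul_assoc] at hmax; exact hmax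
      have := le_of_mul_le_mul_right this hn0
      linarith
    exact le_of_mul_le_mul_right h8 (by positivity)
  have hsub : U ⊆ StepUp X n a B ∪ {ω | ∃ k ≤ n, B * r ≤ |PS X k ω|} := by
    intro ω hω
    by_cases hc : ∃ k ≤ n, B * r ≤ |PS X k ω|
    · exact Or.inr hc
    · push Not at hc
      exact Or.inl ⟨hω, fun k hk => (hc k hk).le⟩
  have := (measureReal_mono (μ := μ) hsub).trans (measureReal_union_le _ _)
  linarith

lemma PS_add (m k : ℕ) (ω : Ω) : PS X (m + k) ω = PS X m ω + PS (fun i => X (m + i)) k ω := by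
  simp [PS, Finset.sum_range_add]

lemma PS_neg (k : ℕ) (ω : Ω) : PS (fun i ω => - X i ω) k ω = - PS X k ω := by
  simp [PS]

lemma StepUp_meas (n : ℕ) (a B : ℝ) : MeasurableSet[SG X (Iio n)] (StepUp X n a B) := by
  simp only [StepUp, ofPred_and, ofPred_forall]
  exact (measurableSet_le measurable_const (PS_meas le_rfl)).inter
    (MeasurableSet.iInter fun i => MeasurableSet.iInter fun hi => 
      measurableSet_le (continuous_abs.measurable.comp (PS_meas hi)) measurable_const)

/-- tube event -/
def Tube (X : ℕ → Ω → ℝ) (f : ℕ → ℝ) (N : ℕ) (η : ℝ) : Set Ω :=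
  {ω | ∀ k ≤ N, |PS X k ω - f k| ≤ η}

lemma Tube_meas (f : ℕ → ℝ) (N : ℕ) (η : ℝ) : MeasurableSet[SG X (Iio N)] (Tube X f N η) := by
  simp only [Tube, ofPred_forall]
  exact MeasurableSet.iInter fun i => MeasurableSet.iInter fun hi => 
      measurableSet_le (continuous_abs.measurable.comp ((PS_meas hi).sub_const _)) measurable_const

set_option maxHeartbeats 1000000 in
lemma tube_prob {a B c : ℝ} (ha : 0 < a) (haB : a ≤ B) (hc : 0 < c)
    (hstep : ∀ X : ℕ → Ω → ℝ, Stp μ X L s → ∀ n : ℕ, 1 ≤ n → c ≤ μ.real (StepUp X n a B))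
    (h : Stp μ X L s) (n : ℕ) (hn : 1 ≤ n) (f : ℕ → ℝ) (hf0 : f 0 = 0)
    (hf : ∀ k l, l ≤ n → |f (k + l) - f k| ≤ a / 2 * √n) (K : ℕ) :
    c ^ K ≤ μ.real (Tube X f (K * n) (4 * B * √n)) := by
  set r := √(n:ℝ) with hr
  have hr0 : 0 < r := Real.sqrt_pos.2 (by exact_mod_cast hn)
  have har : a * r ≤ B * r := by gcongr
  have har0 : 0 < a * r := by positivity
  let E : ℕ → Set Ω := fun K => Tube X f (K * n) (4 * B * r) ∩ 
    {ω | |PS X (K * n) ω - f (K * n)| ≤ 2 * B * r}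
  have hEm : ∀ K, MeasurableSet[SG X (Iio (K * n))] (E K) := fun K =>
    (Tube_meas _ _ _).inter 
      (measurableSet_le (continuous_abs.measurable.comp ((PS_meas le_rfl).sub_const _)) measurable_const)
  suffices H : ∀ K, c ^ K ≤ μ.real (E K) from (H K).trans (measureReal_mono inter_subset_left)
  intro K
  induction K with
  | zero =>
    have : E 0 = univ := by
      ext ω
      simp [E, Tube, PS_zero, hf0]
      constructor <;> nlinarith
    simp [this]
  | succ K ih =>
    let Y : ℕ → Ω → ℝ := fun i => X (K * n + i)
    have hY : Stp μ Y L s := h.comp (g := fun i => K * n + i) (fun i j hij => by simpa using hij)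
    have hY' := hY.neg
    let P : Set Ω := {ω | 0 ≤ PS X (K * n) ω - f (K * n)}
    have hP : MeasurableSet[SG X (Iio (K * n))] P :=
      measurableSet_le measurable_const ((PS_meas le_rfl).sub_const _)
    have hPc : MeasurableSet[SG X (Iio (K * n))] Pᶜ := hP.compl
    have hle : SG Y (Iio n) ≤ SG X (Ici (K * n)) := SG_le_of fun i _ => SG_meas (by simp)
    have hle' : SG (fun k ω => - Y k ω) (Iio n) ≤ SG X (Ici (K * n)) :=
      SG_le_of fun i _ => (SG_meas (X := X) (by simp)).neg
    have hdis : Disjoint (Iio (K * n)) (Ici (K * n)) := by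
      rw [Set.disjoint_left]; intro x hx hx'; simp at hx hx'; omega
    have p1 := SG_inter h.meas h.indep hdis ((hEm K).inter hP) (hle' _ (StepUp_meas n a B))
    have p2 := SG_inter h.meas h.indep hdis ((hEm K).inter hPc) (hle _ (StepUp_meas n a B))
    have q1 := hstep _ hY n hn
    have q2 := hstep _ hY' n hn
    have hsplit : μ.real (E K) = μ.real (E K ∩ P) + μ.real (E K ∩ Pᶜ) := by
      rw [← measureReal_inter_add_sdiff (s := E K) (SG_le h.meas _ _ hP), sdiff_eq]
    have hsub : (E K ∩ P ∩ StepUp (fun k ω => - Y k ω) n a B) ∪ 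
        (E K ∩ Pᶜ ∩ StepUp Y n a B) ⊆ E (K + 1) := by
      have aux : ∀ ω, ω ∈ E K → (∀ k ≤ n, |PS Y k ω| ≤ B * r) →
          |PS X (K * n) ω - f (K * n) + PS Y n ω - (f (K * n + n) - f (K * n))| ≤ 2 * B * r →
          ω ∈ E (K + 1) := by
        intro ω hω h1 h2
        have e1 : (K + 1) * n = K * n + n := by ring
        refine ⟨?_, ?_⟩
        · intro k hk
          by_cases hkK : k ≤ K * n
          · exact hω.1 k hkK
          · rw [e1] at hk
            obtain ⟨l, rfl⟩ := Nat.exists_eq_add_of_le (not_le.1 hkK).le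
            have hl : l ≤ n := Nat.le_of_add_le_add_left hk
            have h3 := abs_le.1 (h1 l hl)
            have h4 := abs_le.1 (hf (K * n) l hl)
            have h5a : |PS X (K * n) ω - f (K * n)| ≤ 2 * B * r := hω.2
            have h5 := abs_le.1 h5a
            rw [PS_add]
            rw [abs_le]
            constructor <;> linarith
        · rw [mem_ofPred_eq, e1, PS_add]
          convert h2 using 2; ring
      rintro ω (⟨⟨hω, hωP⟩, hs1, hs2⟩ | ⟨⟨hω, hωP⟩, hs1, hs2⟩)
      · simp only [PS_neg, abs_neg] at hs1 hs2
        refine aux ω hω hs2 ?_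
        have h3 := abs_le.1 (hs2 n le_rfl)
        have h4 := abs_le.1 (hf (K * n) n le_rfl)
        have h5a : |PS X (K * n) ω - f (K * n)| ≤ 2 * B * r := hω.2
        have h5 := abs_le.1 h5a
        have h6 : 0 ≤ PS X (K * n) ω - f (K * n) := hωP
        rw [abs_le]
        constructor <;> linarith
      · refine aux ω hω hs2 ?_
        have h3 := abs_le.1 (hs2 n le_rfl)
        have h4 := abs_le.1 (hf (K * n) n le_rfl)
        have h5a : |PS X (K * n) ω - f (K * n)| ≤ 2 * B * r := hω.2
        have h5 := abs_le.1 h5a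
        have h6 : PS X (K * n) ω - f (K * n) < 0 := not_le.1 hωP
        rw [abs_le]
        constructor <;> linarith
    have hdisj : Disjoint (E K ∩ P ∩ StepUp (fun k ω => - Y k ω) n a B) (E K ∩ Pᶜ ∩ StepUp Y n a B) := by
      rw [Set.disjoint_left]
      rintro ω ⟨⟨_, h1⟩, _⟩ ⟨⟨_, h2⟩, _⟩
      exact h2 h1
    have hm2 : MeasurableSet (E K ∩ Pᶜ ∩ StepUp Y n a B) :=
      (SG_le h.meas _ _ ((hEm K).inter hPc)).inter (SG_le hY.meas _ _ (StepUp_meas n a B))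
    have := measureReal_mono (μ := μ) hsub
    rw [measureReal_union hdisj hm2, p1, p2] at this
    calc c ^ (K+1) = c ^ K * c := pow_succ _ _
      _ ≤ μ.real (E K) * c := by gcongr
      _ = μ.real (E K ∩ P) * c + μ.real (E K ∩ Pᶜ) * c := by rw [hsplit]; ring
      _ ≤ _ := by gcongr
      _ ≤ _ := this
end

open MeasureTheory ProbabilityTheory Filter Set
set_option linter.unusedSectionVars false
set_option linter.unusedVariables false

/-- macroscopic valley shape with bottom `b` -/
def Macro (w : ℕ → ℝ) (N b : ℕ) (j : ℝ) : Prop :=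
  b ≤ N ∧ -3.9 * j ≤ w b ∧ w b ≤ -3.1 * j ∧ (∀ k < b, w b < w k) ∧
  (∀ x y, x ≤ y → y ≤ b → w y - w x ≤ 0.2 * j) ∧ 1.1 * j ≤ w N ∧ (∀ k ≤ N, w b ≤ w k)

/-- microscopic profile -/
def Prof (w : ℕ → ℝ) (N b : ℕ) (I : ℕ) (n : ℕ → ℕ) (h : ℕ → ℝ) : Prop :=
  ∀ i < I, (∀ k ≤ b, n i ≤ k → h i < w (b - k) - w b) ∧
    (∀ k, b + k ≤ N → n i ≤ k → h i < w (b + k) - w b)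

lemma exists_near {σ y : ℝ} (hσ : 0 < σ) (hy : 0 ≤ y) {N : ℕ} (hN : y ≤ σ * N) :
    ∃ k ≤ N, |σ * k - y| ≤ σ := by
  refine ⟨⌊y / σ⌋₊, ?_, ?_⟩
  · have : y / σ ≤ N := by rw [div_le_iff₀ hσ]; linarith
    exact Nat.floor_le_of_le this
  · have h1 : (⌊y / σ⌋₊ : ℝ) ≤ y / σ := Nat.floor_le (by positivity)
    have h2 : y / σ < ⌊y / σ⌋₊ + 1 := Nat.lt_floor_add_one _
    rw [le_div_iff₀ hσ] at h1
    rw [div_lt_iff₀ hσ] at h2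
    rw [abs_le]; constructor <;> nlinarith

lemma shape_lip (σ y : ℝ) (k l : ℕ) :
    |(|σ * (k + l : ℕ) - y| - y) - (|σ * k - y| - y)| ≤ |σ * l| := by
  have := abs_abs_sub_abs_le (σ * (k + l : ℕ) - y) (σ * k - y)
  rw [sub_sub_sub_cancel_right]
  refine this.trans (le_of_eq ?_)
  congr 1; push_cast; ring

lemma tube_macro {w : ℕ → ℝ} {N : ℕ} {j σ : ℝ} (hj : 0 < j) (hσ : 0 < σ) (hσj : σ ≤ 0.01 * j)
    (hN : 9 * j ≤ σ * N) (ht : ∀ k ≤ N, |w k - (|σ * k - 3.5 * j| - 3.5 * j)| ≤ 0.01 * j) :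
    ∃ b, Macro w N b j := by
  classical
  obtain ⟨k0, hk0, hk0'⟩ := exists_near hσ (y := 3.5 * j) (by positivity) (N := N) (by linarith)
  have hex : ∃ b, b ≤ N ∧ ∀ k ≤ N, w b ≤ w k := by
    obtain ⟨b, hb, hb'⟩ := Finset.exists_min_image (Finset.range (N+1)) w ⟨0, by simp⟩
    exact ⟨b, by simpa [Nat.lt_succ_iff] using hb, fun k hk => hb' k (by simpa [Nat.lt_succ_iff] using hk)⟩
  let b := Nat.find hex
  obtain ⟨hbN, hbm⟩ := Nat.find_spec hex
  have hb1 := abs_le.1 (ht b hbN)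
  have hk1 := abs_le.1 (ht k0 hk0)
  have hbk : w b ≤ w k0 := hbm k0 hk0
  have hpos := abs_nonneg (σ * b - 3.5 * j)
  have hbound : |σ * b - 3.5 * j| ≤ 0.03 * j := by linarith
  refine ⟨b, hbN, by linarith, by linarith, ?_, ?_, ?_, hbm⟩
  · intro k hk
    by_contra hcon
    have : k ≤ N := hk.le.trans hbN
    exact Nat.find_min hex hk ⟨this, fun m hm => (not_lt.1 hcon).trans (hbm m hm)⟩
  · intro x y hxy hyb
    have h1 := abs_le.1 (ht x (hxy.trans (hyb.trans hbN)))
    have h2 := abs_le.1 (ht y (hyb.trans hbN))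
    have hxy' : σ * x ≤ σ * y := by gcongr
    have hyb' : σ * y ≤ σ * b := by gcongr
    have h3 := abs_le.1 hbound
    have : |σ * y - 3.5 * j| ≤ |σ * x - 3.5 * j| + 0.03 * j := by
      rw [abs_le]
      constructor
      · have := neg_abs_le (σ * x - 3.5 * j); linarith
      · have := abs_nonneg (σ * x - 3.5 * j); linarith
    linarith
  · have h1 := abs_le.1 (ht N le_rfl)
    have := le_abs_self (σ * N - 3.5 * j)
    linarith

/-- left block shape -/
def LMacro (u : ℕ → ℝ) (N : ℕ) (j : ℝ) : Prop :=
  (∃ k ≤ N, u k ≤ -0.18 * j ∧ ∀ i ≤ k, u i ≤ 0.1 * j) ∧ (1.1 * j ≤ u N) ∧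
  ∀ x y, x ≤ y → y ≤ N → u x - u y ≤ 0.25 * j

lemma tube_lmacro {w : ℕ → ℝ} {N : ℕ} {j σ : ℝ} (hj : 0 < j) (hσ : 0 < σ) (hσj : σ ≤ 0.01 * j)
    (hN : 9 * j ≤ σ * N) (ht : ∀ k ≤ N, |w k - (|σ * k - 0.2 * j| - 0.2 * j)| ≤ 0.01 * j) :
    LMacro w N j := by
  obtain ⟨k0, hk0, hk0'⟩ := exists_near hσ (y := 0.2 * j) (by positivity) (N := N) (by linarith)
  refine ⟨⟨k0, hk0, ?_, ?_⟩, ?_, ?_⟩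
  · have hk1 := abs_le.1 (ht k0 hk0)
    linarith
  · intro i hi
    have h1 := abs_le.1 (ht i (hi.trans hk0))
    have h2 : σ * i ≤ σ * k0 := by gcongr
    have h4 : 0 ≤ σ * i := by positivity
    have h3 := abs_le.1 hk0'
    have : |σ * i - 0.2 * j| ≤ 0.2 * j + σ := by
      rw [abs_le]; constructor <;> linarith
    linarith
  · have h1 := abs_le.1 (ht N le_rfl)
    have := le_abs_self (σ * N - 0.2 * j)
    linarith
  · intro x y hxy hyN
    have h1 := abs_le.1 (ht x (hxy.trans hyN))
    have h2 := abs_le.1 (ht y hyN)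
    have hxy' : σ * x ≤ σ * y := by gcongr
    have h4 : 0 ≤ σ * x := by positivity
    have : |σ * x - 0.2 * j| ≤ |σ * y - 0.2 * j| + 0.2 * j := by
      rw [abs_le]
      constructor
      · have := abs_nonneg (σ * y - 0.2 * j); linarith
      · have := le_abs_self (σ * y - 0.2 * j); linarith
    linarith

section
variable {Ω : Type*} {mΩ : MeasurableSpace Ω} {μ : Measure Ω} [IsProbabilityMeasure μ]
  {X : ℤ → Ω → ℝ} {L s : ℝ}

/-- the walk to the right of `t` -/
def WR (X : ℤ → Ω → ℝ) (t : ℤ) (k : ℕ) (ω : Ω) : ℝ := PS (fun i : ℕ => X (t + 1 + i)) k ω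

/-- the walk to the left of `t` -/
def WL (X : ℤ → Ω → ℝ) (t : ℤ) (k : ℕ) (ω : Ω) : ℝ := PS (fun (i : ℕ) ω => - X (t - i) ω) k ω

lemma WR_add (t : ℤ) (m k : ℕ) (ω : Ω) : WR X t (m + k) ω = WR X t m ω + WR X (t + m) k ω := by
  unfold WR
  rw [PS_add]
  congr 2
  funext i
  congr 1; push_cast; ring

lemma WL_succ (t : ℤ) (k : ℕ) (ω : Ω) : WL X t (k+1) ω = WL X t k ω - X (t - k) ω := by
  unfold WL; rw [PS_succ]; ring

lemma WR_succ (t : ℤ) (k : ℕ) (ω : Ω) : WR X t (k+1) ω = WR X t k ω + X (t + 1 + k) ω := by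
  unfold WR; rw [PS_succ]

lemma WL_WR (t : ℤ) (b k : ℕ) (hk : k ≤ b) (ω : Ω) :
    WL X (t + b) k ω = WR X t (b - k) ω - WR X t b ω := by
  induction k with
  | zero => simp [WL, PS_zero]
  | succ k ih =>
    rw [WL_succ, ih (by omega)]
    have : b - k = (b - (k+1)) + 1 := by omega
    rw [this, WR_succ]
    have e : t + 1 + ((b - (k+1) : ℕ) : ℤ) = t + b - k := by
      push_cast [Nat.cast_sub hk]; ring
    rw [e]; ring

lemma Stp.right (h : Stp μ X L s) (t : ℤ) : Stp μ (fun i : ℕ => X (t + 1 + i)) L s :=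
  h.comp (g := fun i : ℕ => t + 1 + (i:ℤ)) (fun i j hij => by simpa using hij)

lemma Stp.left (h : Stp μ X L s) (t : ℤ) : Stp μ (fun (i : ℕ) ω => - X (t - i) ω) L s :=
  (h.comp (g := fun i : ℕ => t - (i:ℤ)) (fun i j hij => by simpa using hij)).neg

lemma WR_meas (t : ℤ) {k N : ℕ} (hk : k ≤ N) : Measurable[SG X (Ioc t (t + N))] (WR X t k) := by
  have : SG (fun i : ℕ => X (t + 1 + i)) (Iio N) ≤ SG X (Ioc t (t + N)) :=
    SG_le_of fun i hi => SG_meas (by simp at hi ⊢; omega)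
  exact (PS_meas hk).mono this le_rfl

lemma WL_meas (t : ℤ) {k N : ℕ} (hk : k ≤ N) : Measurable[SG X (Ioc (t - N) t)] (WL X t k) := by
  have : SG (fun (i : ℕ) ω => - X (t - i) ω) (Iio N) ≤ SG X (Ioc (t - N) t) :=
    SG_le_of fun i hi => (SG_meas (X := X) (by simp at hi ⊢; omega)).neg
  exact (PS_meas hk).mono this le_rfl

lemma pair_bad (hX : Stp μ X L s) (hs : 0 < s) (t : ℤ) {N b : ℕ} (hb : b ≤ N) {j h : ℝ} {n : ℕ}
    (hj : 0 < j) (hn : 1 ≤ n) (hh : 0 ≤ h) (hhj : 2 * h ≤ 3 * j) :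
    μ.real {ω | Macro (fun k => WR X t k ω) N b j ∧ 
      ¬ ((∀ k ≤ b, n ≤ k → h < WR X t (b - k) ω - WR X t b ω) ∧
        (∀ k, b + k ≤ N → n ≤ k → h < WR X t (b + k) ω - WR X t b ω))} ≤
    2 * ((L+(L+2*L^2)/s)*(2*(h+L))/(√n*(3 * j))) * (L / (3 * j)) := by
  set y : ℕ → Ω → ℝ := WL X (t + b) with hy
  set z : ℕ → Ω → ℝ := WR X (t + b) with hz
  let A1 := {ω | BadW (fun k => y k ω) n h (3 * j) b}
  let A0 := {ω | BadW (fun k => y k ω) 0 0 (3 * j) b}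
  let B1 := {ω | BadW (fun k => z k ω) n h (3 * j) (N - b)}
  let B0 := {ω | BadW (fun k => z k ω) 0 0 (3 * j) (N - b)}
  have hsub : {ω | Macro (fun k => WR X t k ω) N b j ∧ 
      ¬ ((∀ k ≤ b, n ≤ k → h < WR X t (b - k) ω - WR X t b ω) ∧
        (∀ k, b + k ≤ N → n ≤ k → h < WR X t (b + k) ω - WR X t b ω))} ⊆ (A1 ∩ B0) ∪ (A0 ∩ B1) := by
    rintro ω ⟨⟨hM1, hM2, hM3, hM4, hM5, hM6, hM7⟩, hbad⟩
    have yk : ∀ k ≤ b, y k ω = WR X t (b - k) ω - WR X t b ω := fun k hk => WL_WR t b k hk ω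
    have zk : ∀ k, z k ω = WR X t (b + k) ω - WR X t b ω := fun k => by rw [WR_add]; ring
    have y0 : y 0 ω = 0 := by rw [yk 0 (by omega)]; simp
    have z0 : z 0 ω = 0 := by rw [zk 0]; simp
    have ypos : ∀ i ≤ b, 0 ≤ y i ω := fun i hi => by
      rw [yk i hi]; linarith [hM7 (b - i) (by omega)]
    have zpos : ∀ i ≤ N - b, 0 ≤ z i ω := fun i hi => by
      rw [zk i]; linarith [hM7 (b + i) (by omega)]
    have yb : 3 * j ≤ y b ω := by
      rw [yk b le_rfl, Nat.sub_self]
      have : WR X t 0 ω = 0 := by simp [WR, PS_zero]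
      rw [this]; linarith
    have zb : 3 * j ≤ z (N - b) ω := by
      rw [zk (N - b), Nat.add_sub_cancel' hb]
      linarith
    have hA0 : ω ∈ A0 := ⟨0, b, le_rfl, Nat.zero_le _, le_rfl, y0.le, yb, ypos⟩
    have hB0 : ω ∈ B0 := ⟨0, N - b, le_rfl, Nat.zero_le _, le_rfl, z0.le, zb, zpos⟩
    rw [not_and_or] at hbad
    rcases hbad with hbad | hbad
    · push Not at hbad
      obtain ⟨k, hk, hnk, hkh⟩ := hbad
      left
      exact ⟨⟨k, b, hnk, hk, le_rfl, (yk k hk).le.trans hkh, yb, ypos⟩, hB0⟩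
    · push Not at hbad
      obtain ⟨k, hk, hnk, hkh⟩ := hbad
      right
      exact ⟨hA0, ⟨k, N - b, hnk, by omega, le_rfl, (zk k).le.trans hkh, zb, zpos⟩⟩
  have ym : ∀ n h H, MeasurableSet[SG X (Ioc (t + b - b) (t + b))] {ω | BadW (fun k => y k ω) n h H b} :=
    fun n h H => BadW_meas (w := fun ω k => y k ω) (fun k hk => WL_meas _ hk) n h H
  have zm : ∀ n h H, MeasurableSet[SG X (Ioc (t + b) (t + b + (N - b : ℕ)))] {ω | BadW (fun k => z k ω) n h H (N - b)} :=
    fun n h H => BadW_meas (w := fun ω k => z k ω) (fun k hk => WR_meas _ hk) n h H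
  have hdis : Disjoint (Ioc (t + b - b) (t + b)) (Ioc (t + b) (t + b + (N - b : ℕ))) := by
    rw [Set.disjoint_left]; intro x hx hx'; simp at hx hx'; omega
  have p1 := SG_inter hX.meas hX.indep hdis (ym n h (3*j)) (zm 0 0 (3 * j))
  have p2 := SG_inter hX.meas hX.indep hdis (ym 0 0 (3*j)) (zm n h (3 * j))
  have H3 : 0 < 3 * j := by positivity
  have a1 : μ.real A1 ≤ _ := (hX.left (t + b)).bad hs n b hn hh H3 hhj
  have b1 : μ.real B1 ≤ _ := (hX.right (t + b)).bad hs n (N - b) hn hh H3 hhj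
  have a0 : μ.real A0 ≤ _ := (hX.left (t + b)).reach b H3
  have b0 : μ.real B0 ≤ _ := (hX.right (t + b)).reach (N - b) H3
  have hL := (hX.right 0).L_nonneg
  calc _ ≤ μ.real ((A1 ∩ B0) ∪ (A0 ∩ B1)) := measureReal_mono hsub
    _ ≤ μ.real (A1 ∩ B0) + μ.real (A0 ∩ B1) := measureReal_union_le _ _
    _ = μ.real A1 * μ.real B0 + μ.real A0 * μ.real B1 := by rw [p1, p2]
    _ ≤ ((L+(L+2*L^2)/s)*(2*(h+L))/(√n*(3 * j))) * (L / (3 * j)) + 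
        (L / (3 * j)) * ((L+(L+2*L^2)/s)*(2*(h+L))/(√n*(3 * j))) := by gcongr
    _ = _ := by ring

/-- the good event with bottom `b` -/
def GoodB (X : ℤ → Ω → ℝ) (t : ℤ) (N b : ℕ) (j : ℝ) (I : ℕ) (n : ℕ → ℕ) (h : ℕ → ℝ) : Set Ω :=
  {ω | Macro (fun k => WR X t k ω) N b j ∧ Prof (fun k => WR X t k ω) N b I n h}

lemma GoodB_meas (t : ℤ) (N b : ℕ) (j : ℝ) (I : ℕ) (n : ℕ → ℕ) (h : ℕ → ℝ) :
    MeasurableSet[SG X (Ioc t (t + N))] (GoodB X t N b j I n h) := by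
  by_cases hb : b ≤ N
  swap
  · have : GoodB X t N b j I n h = ∅ := by
      ext ω; simp [GoodB, Macro, hb]
    rw [this]; exact @MeasurableSet.empty _ (_)
  have hm : ∀ k ≤ N, Measurable[SG X (Ioc t (t + N))] (WR X t k) := fun k hk => WR_meas t hk
  simp only [GoodB, Macro, Prof, ofPred_and, ofPred_forall]
  have hmb := hm b hb
  refine MeasurableSet.inter (MeasurableSet.inter (MeasurableSet.const _) ?_) ?_
  · refine (measurableSet_le measurable_const hmb).inter ?_
    refine (measurableSet_le hmb measurable_const).inter ?_
    refine MeasurableSet.inter ?_ ?_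
    · exact MeasurableSet.iInter fun k => MeasurableSet.iInter fun hk => 
        measurableSet_lt hmb (hm k (by omega))
    refine MeasurableSet.inter ?_ ?_
    · exact MeasurableSet.iInter fun x => MeasurableSet.iInter fun y => MeasurableSet.iInter fun hxy =>
        MeasurableSet.iInter fun hy => 
        measurableSet_le ((hm y (by omega)).sub (hm x (by omega))) measurable_const
    refine (measurableSet_le measurable_const (hm N le_rfl)).inter ?_
    exact MeasurableSet.iInter fun k => MeasurableSet.iInter fun hk => 
        measurableSet_le hmb (hm k (by omega))
  · refine MeasurableSet.iInter fun i => MeasurableSet.iInter fun hi => MeasurableSet.inter ?_ ?_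
    · exact MeasurableSet.iInter fun k => MeasurableSet.iInter fun hk => MeasurableSet.iInter fun hk' => 
        measurableSet_lt measurable_const ((hm _ (by omega)).sub hmb)
    · exact MeasurableSet.iInter fun k => MeasurableSet.iInter fun hk => MeasurableSet.iInter fun hk' => 
        measurableSet_lt measurable_const ((hm _ (by omega)).sub hmb)

lemma good_prob (hX : Stp μ X L s) (hs : 0 < s) {a B c : ℝ} (ha : 0 < a) (haB : a ≤ B) (hc : 0 < c)
    (hstep : ∀ X : ℕ → Ω → ℝ, Stp μ X L s → ∀ n : ℕ, 1 ≤ n → c ≤ μ.real (StepUp X n a B))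
    (t : ℤ) (m K : ℕ) {j : ℝ} (hj : 0 < j) (hm : 1 ≤ m) (hmj : 4 * B * √m ≤ 0.01 * j) 
    (hKj : 9 * j ≤ a / 2 * √m * K) (haj : a ≤ 0.01 * j)
    (I : ℕ) (n : ℕ → ℕ) (h : ℕ → ℝ)
    (hn : ∀ i < I, 1 ≤ n i) (hh : ∀ i < I, 0 ≤ h i) (hhj : ∀ i < I, 2 * h i ≤ 3 * j) :
    c ^ K - ∑ b ∈ Finset.range (K * m + 1), ∑ i ∈ Finset.range I, 
      2 * ((L+(L+2*L^2)/s)*(2*(h i+L))/(√(n i)*(3 * j))) * (L / (3 * j)) ≤ 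
    μ.real (⋃ b ∈ Finset.range (K * m + 1), GoodB X t (K * m) b j I n h) := by
  have hm0 : (0:ℝ) < m := by exact_mod_cast hm
  have hr : 0 < √(m:ℝ) := Real.sqrt_pos.2 hm0
  have hr1 : 1 ≤ √(m:ℝ) := Real.one_le_sqrt.2 (by exact_mod_cast hm)
  have hrr : √(m:ℝ) * √(m:ℝ) = m := Real.mul_self_sqrt hm0.le
  set σ := a / 2 / √(m:ℝ) with hσ
  have hσ0 : 0 < σ := by positivity
  have hσm : σ * m = a / 2 * √m := by
    rw [hσ]; nth_rewrite 2 [← hrr]; field_simp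
  have hσj : σ ≤ 0.01 * j := by
    have : σ ≤ a / 2 := div_le_self (by positivity) hr1
    linarith
  have hN : 9 * j ≤ σ * (K * m : ℕ) := by
    push_cast
    calc 9 * j ≤ _ := hKj
      _ = _ := by rw [← hσm]; ring
  let f : ℕ → ℝ := fun k => |σ * k - 3.5 * j| - 3.5 * j
  have htube := tube_prob ha haB hc hstep (hX.right t) m hm f 
    (by simp only [f, Nat.cast_zero, mul_zero, zero_sub, abs_neg]; rw [abs_of_pos (by positivity)]; ring)
    (by
      intro k l hl
      have hl' : (l:ℝ) ≤ m := by exact_mod_cast hl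
      have h1 : |f (k + l) - f k| ≤ |σ * l| := by
        simp only [f]
        exact shape_lip σ _ k l
      rw [abs_of_nonneg (mul_nonneg hσ0.le (Nat.cast_nonneg l))] at h1
      calc _ ≤ σ * l := h1
        _ ≤ σ * m := by gcongr
        _ = _ := hσm) K
  let D : ℕ → ℕ → Set Ω := fun b i => {ω | Macro (fun k => WR X t k ω) (K * m) b j ∧ 
      ¬ ((∀ k ≤ b, n i ≤ k → h i < WR X t (b - k) ω - WR X t b ω) ∧
        (∀ k, b + k ≤ (K * m) → n i ≤ k → h i < WR X t (b + k) ω - WR X t b ω))}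
  have hsub : Tube (fun i : ℕ => X (t + 1 + i)) f (K * m) (4 * B * √m) ⊆ 
      (⋃ b ∈ Finset.range (K * m + 1), GoodB X t (K * m) b j I n h) ∪ 
      ⋃ b ∈ Finset.range (K * m + 1), ⋃ i ∈ Finset.range I, D b i := by
    intro ω hω
    obtain ⟨b, hb⟩ := tube_macro (w := fun k => WR X t k ω) (N := K * m) hj hσ0 hσj hN
      (fun k hk => (hω k hk).trans hmj)
    have hbN : b ∈ Finset.range (K * m + 1) := by have := hb.1; simp; omega
    by_cases hP : Prof (fun k => WR X t k ω) (K * m) b I n h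
    · left
      simp only [mem_iUnion]
      exact ⟨b, hbN, hb, hP⟩
    · right
      unfold Prof at hP
      simp only [not_forall] at hP
      obtain ⟨i, hi, hP⟩ := hP
      simp only [mem_iUnion]
      exact ⟨b, hbN, i, by simpa using hi, hb, hP⟩
  have h1 := (measureReal_mono (μ := μ) hsub).trans (measureReal_union_le _ _)
  have h2 : μ.real (⋃ b ∈ Finset.range (K * m + 1), ⋃ i ∈ Finset.range I, D b i) ≤
      ∑ b ∈ Finset.range (K * m + 1), ∑ i ∈ Finset.range I, 
      2 * ((L+(L+2*L^2)/s)*(2*(h i+L))/(√(n i)*(3 * j))) * (L / (3 * j)) := by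
    refine (measureReal_biUnion_finset_le _ _).trans (Finset.sum_le_sum fun b hb => ?_)
    refine (measureReal_biUnion_finset_le _ _).trans (Finset.sum_le_sum fun i hi => ?_)
    simp only [Finset.mem_range] at hb hi
    exact pair_bad hX hs t (by omega) hj (hn i hi) (hh i hi) (hhj i hi)
  linarith

/-- left event -/
def LGood (X : ℤ → Ω → ℝ) (t : ℤ) (N : ℕ) (j : ℝ) : Set Ω := {ω | LMacro (fun k => WL X t k ω) N j}

lemma LGood_meas (t : ℤ) (N : ℕ) (j : ℝ) : MeasurableSet[SG X (Ioc (t - N) t)] (LGood X t N j) := by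
  have hm : ∀ k ≤ N, Measurable[SG X (Ioc (t - N) t)] (WL X t k) := fun k hk => WL_meas t hk
  simp only [LGood, LMacro, ofPred_and, ofPred_forall, ofPred_exists]
  refine MeasurableSet.inter ?_ (MeasurableSet.inter ?_ ?_)
  · refine MeasurableSet.iUnion fun k => ?_
    by_cases hk : k ≤ N
    · refine MeasurableSet.inter (MeasurableSet.const _) (MeasurableSet.inter ?_ ?_)
      · exact measurableSet_le (hm k hk) measurable_const
      · exact MeasurableSet.iInter fun i => MeasurableSet.iInter fun hi => 
          measurableSet_le (hm i (by omega)) measurable_const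
    · simp [hk]
  · exact measurableSet_le measurable_const (hm N le_rfl)
  · exact MeasurableSet.iInter fun x => MeasurableSet.iInter fun y => MeasurableSet.iInter fun hxy =>
        MeasurableSet.iInter fun hy => 
        measurableSet_le ((hm x (by omega)).sub (hm y (by omega))) measurable_const

lemma lgood_prob (hX : Stp μ X L s) {a B c : ℝ} (ha : 0 < a) (haB : a ≤ B) (hc : 0 < c)
    (hstep : ∀ X : ℕ → Ω → ℝ, Stp μ X L s → ∀ n : ℕ, 1 ≤ n → c ≤ μ.real (StepUp X n a B))
    (t : ℤ) (m K : ℕ) {j : ℝ} (hj : 0 < j) (hm : 1 ≤ m) (hmj : 4 * B * √m ≤ 0.01 * j) 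
    (hKj : 9 * j ≤ a / 2 * √m * K) (haj : a ≤ 0.01 * j) :
    c ^ K ≤ μ.real (LGood X t (K * m) j) := by
  have hm0 : (0:ℝ) < m := by exact_mod_cast hm
  have hr : 0 < √(m:ℝ) := Real.sqrt_pos.2 hm0
  have hr1 : 1 ≤ √(m:ℝ) := Real.one_le_sqrt.2 (by exact_mod_cast hm)
  have hrr : √(m:ℝ) * √(m:ℝ) = m := Real.mul_self_sqrt hm0.le
  set σ := a / 2 / √(m:ℝ) with hσ
  have hσ0 : 0 < σ := by positivity
  have hσm : σ * m = a / 2 * √m := by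
    rw [hσ]; nth_rewrite 2 [← hrr]; field_simp
  have hσj : σ ≤ 0.01 * j := by
    have : σ ≤ a / 2 := div_le_self (by positivity) hr1
    linarith
  have hN : 9 * j ≤ σ * (K * m : ℕ) := by
    push_cast
    calc 9 * j ≤ _ := hKj
      _ = _ := by rw [← hσm]; ring
  let f : ℕ → ℝ := fun k => |σ * k - 0.2 * j| - 0.2 * j
  have htube := tube_prob ha haB hc hstep (hX.left t) m hm f 
    (by simp only [f, Nat.cast_zero, mul_zero, zero_sub, abs_neg]; rw [abs_of_pos (by positivity)]; ring)
    (by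
      intro k l hl
      have hl' : (l:ℝ) ≤ m := by exact_mod_cast hl
      have h1 : |f (k + l) - f k| ≤ |σ * l| := by
        simp only [f]
        exact shape_lip σ _ k l
      rw [abs_of_nonneg (mul_nonneg hσ0.le (Nat.cast_nonneg l))] at h1
      calc _ ≤ σ * l := h1
        _ ≤ σ * m := by gcongr
        _ = _ := hσm) K
  refine htube.trans (measureReal_mono ?_)
  intro ω hω
  exact tube_lmacro (w := fun k => WL X t k ω) (N := K * m) hj hσ0 hσj hN
      (fun k hk => (hω k hk).trans hmj)
end

open MeasureTheory ProbabilityTheory Filter Set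
set_option linter.unusedSectionVars false
set_option linter.unusedVariables false

section
variable {α ε' : ℝ}

lemma gam_succ {j : ℝ} (hj : 0 ≤ j) (i : ℕ) : gamScale α j (i + 1) = gamScale α j i ^ (1 - α) := by
  unfold gamScale
  rw [← Real.rpow_mul hj, pow_succ]

lemma gam_one_le (hα1 : α < 1) {j : ℝ} (hj : 1 ≤ j) (i : ℕ) : 1 ≤ gamScale α j i :=
  Real.one_le_rpow hj (pow_nonneg (by linarith) _)

lemma gam_le (hα0 : 0 < α) (hα1 : α < 1) {j : ℝ} (hj : 1 ≤ j) (i : ℕ) : gamScale α j i ≤ j := by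
  unfold gamScale
  conv_rhs => rw [← Real.rpow_one j]
  exact Real.rpow_le_rpow_of_exponent_le hj (pow_le_one₀ (by linarith) (by linarith))

lemma gam_anti (hα0 : 0 < α) (hα1 : α < 1) {j : ℝ} (hj : 1 ≤ j) {i k : ℕ} (hik : i ≤ k) : 
    gamScale α j k ≤ gamScale α j i := by
  unfold gamScale
  exact Real.rpow_le_rpow_of_exponent_le hj (pow_le_pow_of_le_one (by linarith) (by linarith) hik)

/-- the threshold -/
noncomputable def RR (α ε' j : ℝ) : ℝ := (Real.log (Real.log j)) ^ ((1 - α) / (2 + ε'))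

lemma RR_tendsto (hα1 : α < 1) (hε' : 0 < ε') : Tendsto (RR α ε') atTop atTop := by
  have h1 : 0 < (1 - α) / (2 + ε') := div_pos (by linarith) (by linarith)
  exact (tendsto_rpow_atTop h1).comp (Real.tendsto_log_atTop.comp Real.tendsto_log_atTop)

lemma gam_tendsto (hα0 : 0 < α) (hα1 : α < 1) {j : ℝ} (hj : 0 < j) :
    Tendsto (fun n => gamScale α j n) atTop (nhds 1) := by
  have h := tendsto_pow_atTop_nhds_zero_of_lt_one (r := 1 - α) (by linarith) (by linarith)
  have h2 := (Real.continuous_const_rpow hj.ne').tendsto (0:ℝ)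
  simpa [gamScale, Function.comp_def] using h2.comp h

lemma bigM_spec (hα0 : 0 < α) (hα1 : α < 1) {j : ℝ} (hj : 0 < j) (hR : 1 < RR α ε' j) :
    gamScale α j (bigM α ε' j) ≤ RR α ε' j ∧ ∀ m < bigM α ε' j, RR α ε' j < gamScale α j m := by
  have hne : {n : ℕ | gamScale α j n ≤ RR α ε' j}.Nonempty := by
    have := (gam_tendsto hα0 hα1 hj).eventually (eventually_lt_nhds hR)
    obtain ⟨n, hn⟩ := this.exists
    exact ⟨n, hn.le⟩
  refine ⟨Nat.sInf_mem hne, fun m hm => ?_⟩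
  exact not_le.1 (Nat.notMem_of_lt_sInf (s := {n : ℕ | gamScale α j n ≤ RR α ε' j}) hm)

lemma RR_lt (hα0 : 0 < α) (hα1 : α < 1) (hε' : 0 < ε') : ∀ᶠ j in atTop, RR α ε' j < j := by
  filter_upwards [(Real.tendsto_log_atTop.comp Real.tendsto_log_atTop).eventually_ge_atTop 1,
    eventually_gt_atTop (1:ℝ)] with j h1 h2
  have h1 : 1 ≤ Real.log (Real.log j) := h1
  have hlog : 0 < Real.log j := Real.log_pos h2
  calc RR α ε' j ≤ Real.log (Real.log j) ^ (1:ℝ) := by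
        apply Real.rpow_le_rpow_of_exponent_le h1
        rw [div_le_one (by linarith)]; linarith
    _ = Real.log (Real.log j) := Real.rpow_one _
    _ < Real.log j := by linarith [Real.log_le_sub_one_of_pos hlog]
    _ < j := by linarith [Real.log_le_sub_one_of_pos (show 0 < j by linarith)]

lemma bigM_pos (hα0 : 0 < α) (hα1 : α < 1) {j : ℝ} (hj : 0 < j) (hR : 1 < RR α ε' j)
    (hR' : RR α ε' j < j) : 1 ≤ bigM α ε' j := by
  by_contra h
  have h0 : bigM α ε' j = 0 := by omega
  have := (bigM_spec (ε' := ε') hα0 hα1 hj hR).1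
  rw [h0] at this
  simp [gamScale] at this
  linarith

lemma gam_top (hα0 : 0 < α) (hα1 : α < 1) (hε' : 0 < ε') {j : ℝ} (hj : 0 < j) (hR : 1 < RR α ε' j)
    (hR' : RR α ε' j < j) (hll : 0 ≤ Real.log (Real.log j)) :
    gamScale α j (bigM α ε' j - 1) ^ (2 + ε') ≤ Real.log (Real.log j) := by
  have hM := bigM_pos hα0 hα1 hj hR hR'
  have h1 := (bigM_spec (ε' := ε') hα0 hα1 hj hR).1
  obtain ⟨m, hm⟩ : ∃ m, bigM α ε' j = m + 1 := ⟨_, (Nat.sub_add_cancel hM).symm⟩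
  rw [hm] at h1 ⊢
  rw [gam_succ hj.le] at h1
  simp only [Nat.add_sub_cancel]
  set g := gamScale α j m
  have hg : 0 < g := Real.rpow_pos_of_pos hj _
  have he : 0 < (2 + ε') / (1 - α) := div_pos (by linarith) (by linarith)
  have h2 := Real.rpow_le_rpow (by positivity) h1 he.le
  unfold RR at h2
  have hne : 1 - α ≠ 0 := by linarith
  have hne' : 2 + ε' ≠ 0 := by linarith
  rw [← Real.rpow_mul hg.le, ← Real.rpow_mul hll] at h2
  have e1 : (1 - α) * ((2 + ε') / (1 - α)) = 2 + ε' := by field_simp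
  have e2 : (1 - α) / (2 + ε') * ((2 + ε') / (1 - α)) = 1 := by field_simp
  rwa [e1, e2, Real.rpow_one] at h2

lemma gam_lower (hα0 : 0 < α) (hα1 : α < 1) {j : ℝ} (hj : 0 < j) {R : ℝ} (hR : 1 < R) {M : ℕ}
    (hM : ∀ m < M, R < gamScale α j m) (k : ℕ) (hk : k < M) :
    R * (R ^ α) ^ k ≤ gamScale α j (M - 1 - k) := by
  induction k with
  | zero => simpa using (hM _ (by omega)).le
  | succ k ih =>
    have e : M - 1 - k = (M - 1 - (k+1)) + 1 := by omega
    have ih := ih (by omega)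
    rw [e, gam_succ hj.le] at ih
    set g := gamScale α j (M - 1 - (k+1)) with hg
    have hg1 : R < g := hM _ (by omega)
    have hg0 : 0 < g := by linarith
    have h2 : g = g ^ (1 - α) * g ^ α := by
      rw [← Real.rpow_add hg0]; simp
    calc R * (R ^ α) ^ (k+1) = (R * (R ^ α) ^ k) * R ^ α := by ring
      _ ≤ g ^ (1 - α) * g ^ α := by gcongr
      _ = g := h2.symm

lemma gam_sum (hα0 : 0 < α) (hα1 : α < 1) (hε' : 0 < ε') {κ : ℝ} (hκ : 0 < κ) {η : ℝ} (hη : 0 < η) :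
    ∀ᶠ j in atTop, ∑ m ∈ Finset.range (bigM α ε' j), gamScale α j m ^ (-κ) ≤ η := by
  have hlim : Tendsto (fun R : ℝ => R ^ (-κ) * (1 - R ^ (-(α * κ)))⁻¹) atTop (nhds 0) := by
    have h1 := tendsto_rpow_neg_atTop hκ
    have h2 := (tendsto_rpow_neg_atTop (mul_pos hα0 hκ)).const_sub 1
    have h3 := h1.mul (h2.inv₀ (by simp))
    simpa using h3
  have h4 := (RR_tendsto hα1 hε').eventually (hlim.eventually (eventually_lt_nhds hη))
  filter_upwards [h4, (RR_tendsto hα1 hε').eventually_gt_atTop 1, eventually_gt_atTop (0:ℝ)] with j h4 hR hj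
  refine le_trans ?_ h4.le
  set R := RR α ε' j
  have hR0 : 0 < R := by linarith
  set M := bigM α ε' j
  have hspec := (bigM_spec (ε' := ε') hα0 hα1 hj hR).2
  rw [← Finset.sum_range_reflect]
  have hr1 : R ^ (-(α * κ)) < 1 := Real.rpow_lt_one_of_one_lt_of_neg hR (by nlinarith [mul_pos hα0 hκ])
  have hr0 : 0 ≤ R ^ (-(α * κ)) := by positivity
  calc ∑ k ∈ Finset.range M, gamScale α j (M - 1 - k) ^ (-κ) 
      ≤ ∑ k ∈ Finset.range M, R ^ (-κ) * (R ^ (-(α * κ))) ^ k := by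
        refine Finset.sum_le_sum fun k hk => ?_
        have h5 := gam_lower hα0 hα1 hj hR hspec k (by simpa using hk)
        calc _ ≤ (R * (R ^ α) ^ k) ^ (-κ) := 
              Real.rpow_le_rpow_of_nonpos (by positivity) h5 (by linarith)
          _ = _ := by
              rw [Real.mul_rpow hR0.le (by positivity), ← Real.rpow_natCast, ← Real.rpow_natCast,
                ← Real.rpow_mul hR0.le, ← Real.rpow_mul hR0.le, ← Real.rpow_mul hR0.le]
              congr 2; ring
    _ = R ^ (-κ) * ∑ k ∈ Finset.range M, (R ^ (-(α * κ))) ^ k := by rw [Finset.mul_sum]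
    _ ≤ R ^ (-κ) * (1 - R ^ (-(α * κ)))⁻¹ := by
        gcongr
        rw [← tsum_geometric_of_lt_one hr0 hr1]
        exact (summable_geometric_of_lt_one hr0 hr1).sum_le_tsum _ (fun i _ => by positivity)

/-- radius of the profile -/
noncomputable def nn (α ε' c₅ j : ℝ) (i : ℕ) : ℕ := ⌈c₅ * gamScale α j (i + 1) ^ (2 + ε')⌉₊
/-- height of the profile -/
noncomputable def hh (α ε' c₄ c₆ j : ℝ) (i : ℕ) : ℝ := 
  2 * c₄ * gamScale α j (i + 2) + Real.log (2 * c₆ * gamScale α j i ^ (2 + ε') + 1)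

variable {c₄ c₅ c₆ : ℝ}

lemma nn_pos (hc₅ : 0 < c₅) {j : ℝ} (hj : 0 < j) (i : ℕ) : 1 ≤ nn α ε' c₅ j i := by
  have : 0 < gamScale α j (i+1) := Real.rpow_pos_of_pos hj _
  exact Nat.one_le_iff_ne_zero.2 (Nat.ceil_pos.2 (by positivity)).ne'

lemma hh_nonneg (hα1 : α < 1) (hc₄ : 0 < c₄) (hc₆ : 1 ≤ c₆) {j : ℝ} (hj : 1 ≤ j) (i : ℕ) :
    0 ≤ hh α ε' c₄ c₆ j i := by
  have h1 := gam_one_le hα1 hj (i+2)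
  have h2 := gam_one_le hα1 hj i
  have : 0 ≤ Real.log (2 * c₆ * gamScale α j i ^ (2 + ε') + 1) := by
    apply Real.log_nonneg
    have : 0 ≤ 2 * c₆ * gamScale α j i ^ (2 + ε') := by positivity
    linarith
  unfold hh
  positivity

lemma hh_le (hα0 : 0 < α) (hα1 : α < 1) (hε' : 0 < ε') (hc₄ : 0 < c₄) (hc₆ : 1 ≤ c₆) {L : ℝ} (hL : 0 ≤ L) :
    ∃ C, 0 < C ∧ ∀ j : ℝ, 1 ≤ j → ∀ i, hh α ε' c₄ c₆ j i + L ≤ C * gamScale α j (i + 1) ^ (1 - α) := by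
  have hα' : 0 < 1 - α := by linarith
  have hl : 0 ≤ Real.log (2 * c₆ + 1) := Real.log_nonneg (by linarith)
  refine ⟨2 * c₄ + Real.log (2 * c₆ + 1) + (2 + ε') / (1 - α) * (1 / (1 - α)) + L, by positivity, ?_⟩
  intro j hj i
  have hj0 : 0 < j := by linarith
  have g0 := gam_one_le hα1 hj i
  have g1 := gam_one_le hα1 hj (i+1)
  have e1 : gamScale α j (i + 2) = gamScale α j (i+1) ^ (1 - α) := gam_succ hj0.le (i+1)
  have e2 : Real.log (gamScale α j (i+1)) = (1 - α) * Real.log (gamScale α j i) := by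
    rw [gam_succ hj0.le, Real.log_rpow (by linarith)]
  have h3 : Real.log (gamScale α j (i+1)) ≤ gamScale α j (i+1) ^ (1 - α) / (1 - α) :=
    Real.log_le_rpow_div (by linarith) hα'
  have h4 : Real.log (2 * c₆ * gamScale α j i ^ (2 + ε') + 1) ≤ 
      Real.log (2 * c₆ + 1) + (2 + ε') * Real.log (gamScale α j i) := by
    have hp : 1 ≤ gamScale α j i ^ (2 + ε') := Real.one_le_rpow g0 (by linarith)
    rw [← Real.log_rpow (by linarith), ← Real.log_mul (by positivity) (by positivity)]
    apply Real.log_le_log (by positivity)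
    nlinarith
  have hp : 1 ≤ gamScale α j (i+1) ^ (1 - α) := Real.one_le_rpow g1 (by linarith)
  have e3 : Real.log (gamScale α j i) = Real.log (gamScale α j (i+1)) / (1 - α) := by
    rw [e2]; field_simp
  set y := gamScale α j (i+1) ^ (1 - α)
  have h5 : (2 + ε') * Real.log (gamScale α j i) ≤ (2 + ε') / (1 - α) * (1 / (1 - α)) * y := by
    rw [e3]
    calc (2 + ε') * (Real.log (gamScale α j (i+1)) / (1 - α)) 
        ≤ (2 + ε') * ((y / (1 - α)) / (1 - α)) := by gcongr
      _ = _ := by field_simp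
  unfold hh
  rw [e1]
  nlinarith [mul_nonneg hl (sub_nonneg.2 hp), mul_nonneg hL (sub_nonneg.2 hp)]

lemma env_asym (hα0 : 0 < α) (hα1 : α < 1) (hε' : 0 < ε') (hc₄ : 0 < c₄) (hc₅ : 0 < c₅) (hc₆ : 1 ≤ c₆) 
    {L : ℝ} (hL : 0 ≤ L) {D η : ℝ} (hD : 0 ≤ D) (hη : 0 < η) :
    ∀ᶠ j in atTop, (∀ i < bigM α ε' j - 1, 2 * hh α ε' c₄ c₆ j i ≤ 3 * j) ∧
      D * ∑ i ∈ Finset.range (bigM α ε' j - 1), 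
        (hh α ε' c₄ c₆ j i + L) / √(nn α ε' c₅ j i) ≤ η := by
  obtain ⟨C, hC, hCb⟩ := hh_le (ε' := ε') hα0 hα1 hε' hc₄ hc₆ hL
  have hlim : Tendsto (fun j : ℝ => C * j ^ (-α)) atTop (nhds (C * 0)) :=
    (tendsto_rpow_neg_atTop hα0).const_mul C
  have hpos : 0 < D * (C / √c₅) + 1 := by positivity
  filter_upwards [eventually_ge_atTop (1:ℝ), hlim.eventually (eventually_lt_nhds (b := 1) (by simp)), 
    gam_sum (ε' := ε') hα0 hα1 hε' (κ := α + ε' / 2) (by positivity) (η := η / (D * (C / √c₅) + 1)) (by positivity)] 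
    with j hj h1 h2
  have hj0 : 0 < j := by linarith
  constructor
  · intro i hi
    have h3 := hCb j hj i
    have h4 : gamScale α j (i+1) ^ (1 - α) ≤ j ^ (1 - α) := 
      Real.rpow_le_rpow (by linarith [gam_one_le hα1 hj (i+1)]) (gam_le hα0 hα1 hj _) (by linarith)
    have h5 : C * j ^ (1 - α) = C * j ^ (-α) * j := by
      rw [mul_assoc, ← Real.rpow_add_one hj0.ne']; ring_nf
    have h6 : C * gamScale α j (i+1) ^ (1 - α) ≤ C * j ^ (1 - α) := by gcongr
    nlinarith
  · have hterm : ∀ i ∈ Finset.range (bigM α ε' j - 1), 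
        (hh α ε' c₄ c₆ j i + L) / √(nn α ε' c₅ j i) ≤ C / √c₅ * gamScale α j (i+1) ^ (-(α + ε' / 2)) := by
      intro i _
      set g := gamScale α j (i+1)
      have hg : 1 ≤ g := gam_one_le hα1 hj (i+1)
      have hg0 : 0 < g := by linarith
      have hsq : √c₅ * g ^ (1 + ε' / 2) ≤ √(nn α ε' c₅ j i) := by
        apply Real.le_sqrt_of_sq_le
        rw [mul_pow, Real.sq_sqrt hc₅.le, ← Real.rpow_natCast, ← Real.rpow_mul hg0.le]
        have : (1 + ε' / 2) * ((2:ℕ):ℝ) = 2 + ε' := by push_cast; ring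
        rw [this]
        exact Nat.le_ceil _
      have hs5 : 0 < √c₅ := Real.sqrt_pos.2 hc₅
      calc _ ≤ (C * g ^ (1 - α)) / (√c₅ * g ^ (1 + ε' / 2)) := by
            have := hCb j hj i
            gcongr
        _ = C / √c₅ * (g ^ (1 - α) / g ^ (1 + ε'/2)) := by field_simp
        _ = _ := by
            rw [← Real.rpow_sub hg0]; congr 2; ring
    have hsum : ∑ i ∈ Finset.range (bigM α ε' j - 1), gamScale α j (i+1) ^ (-(α + ε' / 2)) ≤ 
        ∑ m ∈ Finset.range (bigM α ε' j), gamScale α j m ^ (-(α + ε' / 2)) := by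
      rcases Nat.eq_zero_or_pos (bigM α ε' j) with h0 | h0
      · simp [h0]
      · obtain ⟨m, hm⟩ : ∃ m, bigM α ε' j = m + 1 := ⟨_, (Nat.sub_add_cancel h0).symm⟩
        rw [hm, Finset.sum_range_succ']
        simp only [Nat.add_sub_cancel]
        have : 0 ≤ gamScale α j 0 ^ (-(α + ε' / 2)) := 
          Real.rpow_nonneg (by linarith [gam_one_le hα1 hj 0]) _
        linarith
    calc _ ≤ D * (C / √c₅ * ∑ m ∈ Finset.range (bigM α ε' j), gamScale α j m ^ (-(α + ε' / 2))) := by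
          gcongr
          refine (Finset.sum_le_sum hterm).trans ?_
          rw [← Finset.mul_sum]
          gcongr
      _ ≤ D * (C / √c₅ * (η / (D * (C / √c₅) + 1))) := by gcongr
      _ = (D * (C / √c₅)) / (D * (C / √c₅) + 1) * η := by ring
      _ ≤ 1 * η := by
          gcongr
          rw [div_le_one hpos]; linarith
      _ = η := one_mul _

lemma sce_asym (hα0 : 0 < α) (hα1 : α < 1) (hε' : 0 < ε') (hc₄ : 0 < c₄) (hc₆ : 1 ≤ c₆) {ε : ℝ} (hε : 0 < ε)
    (hβ : 0 < (1 - α) ^ 2 * (2 + ε) - (2 + ε')) (A : ℝ) {η : ℝ} (hη : 0 < η) :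
    ∀ᶠ j in atTop, (∀ i < bigM α ε' j - 1, A ≤ c₄ * gamScale α j (i + 2) / 4) ∧
      ∑ i ∈ Finset.range (bigM α ε' j - 1), 
        (2 * c₆ * gamScale α j i ^ (2 + ε') + 1) * (1 / (c₄ * gamScale α j (i + 2) / 4) ^ (2 + ε)) ≤ η := by
  set C := (2 * c₆ + 1) * (4 / c₄) ^ (2 + ε) with hC
  have hC0 : 0 < C := by positivity
  have hlim : Tendsto (fun j => c₄ * RR α ε' j ^ (1 - α) / 4) atTop atTop := by
    have := (tendsto_rpow_atTop (y := 1 - α) (by linarith)).comp (RR_tendsto hα1 hε')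
    exact (this.const_mul_atTop hc₄).atTop_div_const (by norm_num)
  filter_upwards [eventually_ge_atTop (1:ℝ), hlim.eventually_ge_atTop A, 
    (RR_tendsto hα1 hε').eventually_gt_atTop 1,
    gam_sum (ε' := ε') hα0 hα1 hε' hβ (η := η / C) (by positivity)] 
    with j hj h1 hR h2
  have hj0 : 0 < j := by linarith
  have hspec := (bigM_spec (ε' := ε') hα0 hα1 hj0 hR).2
  constructor
  · intro i hi
    refine h1.trans ?_
    have e1 : gamScale α j (i + 2) = gamScale α j (i+1) ^ (1 - α) := gam_succ hj0.le (i+1)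
    rw [e1]
    have := (hspec (i+1) (by omega)).le
    have : RR α ε' j ^ (1 - α) ≤ gamScale α j (i+1) ^ (1 - α) := 
      Real.rpow_le_rpow (by linarith) this (by linarith)
    gcongr
  · calc _ ≤ ∑ i ∈ Finset.range (bigM α ε' j - 1), C * gamScale α j i ^ (-((1 - α) ^ 2 * (2 + ε) - (2 + ε'))) := by
          refine Finset.sum_le_sum fun i _ => ?_
          set g := gamScale α j i with hgd
          have hg : 1 ≤ g := gam_one_le hα1 hj i
          have hg0 : 0 < g := by linarith
          have e1 : gamScale α j (i + 2) = g ^ ((1 - α) ^ 2) := by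
            rw [show i + 2 = (i+1)+1 from rfl, gam_succ hj0.le, gam_succ hj0.le, ← Real.rpow_mul hg0.le]
            congr 1; ring
          rw [e1]
          have e2 : c₄ * g ^ ((1 - α) ^ 2) / 4 = (4 / c₄)⁻¹ * g ^ ((1 - α) ^ 2) := by
            field_simp
          rw [e2, Real.mul_rpow (by positivity) (by positivity), ← Real.rpow_mul hg0.le,
            Real.inv_rpow (by positivity)]
          have hp : 1 ≤ g ^ (2 + ε') := Real.one_le_rpow hg (by linarith)
          calc _ ≤ ((2 * c₆ + 1) * g ^ (2 + ε')) * (1 / (((4 / c₄) ^ (2 + ε))⁻¹ * g ^ ((1 - α) ^ 2 * (2 + ε)))) := by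
                gcongr; nlinarith
            _ = C * (g ^ (2 + ε') / g ^ ((1 - α) ^ 2 * (2 + ε))) := by
                rw [hC]; field_simp
            _ = _ := by
                rw [← Real.rpow_sub hg0]; congr 2; ring
      _ = C * ∑ i ∈ Finset.range (bigM α ε' j - 1), gamScale α j i ^ (-((1 - α) ^ 2 * (2 + ε) - (2 + ε'))) := by
          rw [Finset.mul_sum]
      _ ≤ C * ∑ i ∈ Finset.range (bigM α ε' j), gamScale α j i ^ (-((1 - α) ^ 2 * (2 + ε) - (2 + ε'))) := by
          gcongr
          intro i _ _
          exact Real.rpow_nonneg (by linarith [gam_one_le hα1 hj i]) _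
          omega
      _ ≤ C * (η / C) := by gcongr
      _ = η := by field_simp
end

open MeasureTheory ProbabilityTheory Filter Set
set_option linter.unusedSectionVars false
set_option linter.unusedVariables false

/-- scenery condition in the innermost ball -/
def SceIn (ξ : ℤ → ℝ) (lo hi c : ℤ) (r y : ℝ) : Prop :=
  ∀ x : ℤ, lo < x → x ≤ hi → |(x:ℝ) - c| ≤ r → y ≤ ξ x

/-- scenery condition outside the innermost ball -/
def SceOut (ξ : ℤ → ℝ) (lo hi c : ℤ) (r : ℝ) (I : ℕ) (rr ee : ℕ → ℝ) : Prop :=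
  ∀ i < I, ∀ x : ℤ, lo < x → x ≤ hi → r < |(x:ℝ) - c| → |(x:ℝ) - c| ≤ rr i → max (-(ξ x)) 0 < ee i

lemma ball_card (c : ℤ) {r : ℝ} (hr : 0 ≤ r) (s : Finset ℤ) (hs : ∀ x ∈ s, |(x:ℝ) - c| ≤ r) :
    (s.card : ℝ) ≤ 2 * r + 1 := by
  have hsub : s ⊆ Finset.Icc (c - ⌊r⌋) (c + ⌊r⌋) := by
    intro x hx
    have h := hs x hx
    have h2 : |x - c| ≤ ⌊r⌋ := by
      rw [Int.le_floor]; push_cast; exact h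
    rw [abs_le] at h2
    simp; omega
  have h1 := Finset.card_le_card hsub
  have hfl : 0 ≤ ⌊r⌋ := Int.floor_nonneg.2 hr
  rw [Int.card_Icc] at h1
  have h3 : ((c + ⌊r⌋ + 1 - (c - ⌊r⌋)).toNat : ℤ) = 2 * ⌊r⌋ + 1 := by omega
  have h4 : (s.card : ℤ) ≤ 2 * ⌊r⌋ + 1 := by omega
  have h5 : (s.card : ℝ) ≤ 2 * (⌊r⌋ : ℝ) + 1 := by exact_mod_cast h4
  linarith [Int.floor_le r]

section
variable {v ξ : ℤ → ℝ} {j : ℝ} {t N b : ℕ}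

lemma det_basic (hj : 0 < j) (hpre : ∀ x : ℤ, |x| ≤ t → |v x| ≤ 0.01 * j)
    (hM : Macro (fun k => v (t + k) - v t) N b j) :
    t + b < dPlus v j ∧ dPlus v j ≤ t + N ∧ bPlus v j = t + b ∧ t < nuMinus v j := by
  obtain ⟨h1, h2, h3, h4, h5, h6, h7⟩ := hM
  simp only at h2 h3 h4 h5 h6 h7
  have hpre' : ∀ n : ℕ, n ≤ t → -(0.01 * j) ≤ v n ∧ v n ≤ 0.01 * j := fun n hn => 
    abs_le.1 (hpre n (by rw [abs_of_nonneg (by positivity)]; exact_mod_cast hn))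
  have ht := hpre' t le_rfl
  have hmemN : t + N ∈ {n : ℕ | j ≤ v n} := by
    show j ≤ v ((t + N : ℕ) : ℤ)
    push_cast; linarith
  have hd2 : dPlus v j ≤ t + N := Nat.sInf_le hmemN
  have hdm : j ≤ v (dPlus v j : ℤ) := Nat.sInf_mem (s := {n : ℕ | j ≤ v n}) ⟨_, hmemN⟩
  have hd1 : t + b < dPlus v j := by
    by_contra hc
    rcases le_total (dPlus v j) t with h | h
    · have := (hpre' _ h).2; linarith
    · obtain ⟨k, hk⟩ := Nat.exists_eq_add_of_le h
      have h8 := h5 0 k (by omega) (by omega)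
      rw [hk] at hdm
      push_cast at hdm h8
      simp only [add_zero] at h8
      linarith
  have hlow : ∀ m : ℕ, m ≤ t → v (t + b) < v m := fun m hm => by
    have := (hpre' m hm).1; linarith
  have hbm : t + b ∈ {n : ℕ | ∀ m : ℕ, m ≤ dPlus v j → v n ≤ v m} := by
    intro m hm
    push_cast
    rcases le_total m t with h | h
    · exact (hlow m h).le
    · obtain ⟨k, rfl⟩ := Nat.exists_eq_add_of_le h
      have := h7 k (by omega)
      push_cast; linarith
  refine ⟨hd1, hd2, ?_, ?_⟩
  · apply le_antisymm (Nat.sInf_le hbm)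
    by_contra hc
    have hc2 : bPlus v j < t + b := not_le.1 hc
    have hmem := Nat.sInf_mem (s := {n : ℕ | ∀ m : ℕ, m ≤ dPlus v j → v n ≤ v m}) ⟨_, hbm⟩
    have h9 : v (bPlus v j : ℤ) ≤ v ((t + b : ℕ) : ℤ) := hmem (t + b) hd1.le
    push_cast at h9
    rcases le_total (bPlus v j) t with h | h
    · have := hlow _ h; linarith
    · obtain ⟨k, hk⟩ := Nat.exists_eq_add_of_le h
      have := h4 k (by omega)
      rw [hk] at h9
      push_cast at h9
      linarith
  · have hne : {n : ℕ | v n ≤ -j}.Nonempty := ⟨t + b, by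
      show v ((t + b : ℕ) : ℤ) ≤ -j
      push_cast; linarith⟩
    have hmem : v (nuMinus v j : ℤ) ≤ -j := Nat.sInf_mem hne
    by_contra hc
    have := (hpre' _ (not_lt.1 hc)).1
    linarith

lemma det_A12 (hj : 0 < j) (hpre : ∀ x : ℤ, |x| ≤ t → |v x| ≤ 0.01 * j)
    (hM : Macro (fun k => v (t + k) - v t) N b j) : A1env v j ∧ A2env v j := by
  obtain ⟨-, -, hb, -⟩ := det_basic hj hpre hM
  obtain ⟨h1, h2, h3, h4, h5, h6, h7⟩ := hM
  simp only at h2 h3 h4 h5 h6 h7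
  have hpre' : ∀ n : ℕ, n ≤ t → -(0.01 * j) ≤ v n ∧ v n ≤ 0.01 * j := fun n hn => 
    abs_le.1 (hpre n (by rw [abs_of_nonneg (by positivity)]; exact_mod_cast hn))
  have ht := hpre' t le_rfl
  unfold A1env A2env
  rw [hb]
  refine ⟨?_, ?_⟩
  · push_cast; constructor <;> linarith
  · intro x y hxy hy
    rcases le_total y t with h | h
    · have a1 := hpre' y h
      have a2 := hpre' x (hxy.trans h)
      linarith
    · obtain ⟨k, rfl⟩ := Nat.exists_eq_add_of_le h
      rcases le_total x t with h' | h'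
      · have a2 := hpre' x h'
        have a3 := h5 0 k (by omega) (by omega)
        push_cast at a3 ⊢
        simp only [add_zero] at a3
        linarith
      · obtain ⟨l, rfl⟩ := Nat.exists_eq_add_of_le h'
        have a3 := h5 l k (by omega) (by omega)
        push_cast at a3 ⊢
        linarith

lemma det_B (hj : 0 < j) (hpre : ∀ x : ℤ, |x| ≤ t → |v x| ≤ 0.01 * j)
    (hM : LMacro (fun k => v (-t - k) - v (-t)) N j) : Benv v j := by
  obtain ⟨⟨k0, hk0, hk1, hk2⟩, hN, hdd⟩ := hM
  simp only at hk1 hk2 hN hdd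
  have hpre' : ∀ n : ℕ, n ≤ t → -(0.01 * j) ≤ v (-n) ∧ v (-n) ≤ 0.01 * j := fun n hn => 
    abs_le.1 (hpre (-n) (by rw [abs_neg, abs_of_nonneg (by positivity)]; exact_mod_cast hn))
  have ht := hpre' t le_rfl
  have e : ∀ k : ℕ, (-((t + k : ℕ) : ℤ)) = -t - k := fun k => by push_cast; ring
  have hmemN : t + N ∈ {m : ℕ | j ≤ v (-(m:ℤ))} := by
    show j ≤ v (-((t + N : ℕ) : ℤ))
    rw [e]; linarith
  have hd2 : dMinusAbs v j ≤ t + N := Nat.sInf_le hmemN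
  have hdm : j ≤ v (-(dMinusAbs v j : ℤ)) := Nat.sInf_mem (s := {m : ℕ | j ≤ v (-(m:ℤ))}) ⟨_, hmemN⟩
  have hd1 : t + k0 < dMinusAbs v j := by
    by_contra hc
    rcases le_total (dMinusAbs v j) t with h | h
    · have := (hpre' _ h).2; linarith
    · obtain ⟨k, hk⟩ := Nat.exists_eq_add_of_le h
      have h8 := hk2 k (by omega)
      rw [hk, e] at hdm
      linarith
  constructor
  · have hne : {m : ℕ | ∀ k : ℕ, k ≤ dMinusAbs v j → v (-(m : ℤ)) ≤ v (-(k : ℤ))}.Nonempty := by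
      obtain ⟨m, hm, hm'⟩ := Finset.exists_min_image (Finset.range (dMinusAbs v j + 1)) 
        (fun m : ℕ => v (-(m:ℤ))) ⟨0, by simp⟩
      exact ⟨m, fun k hk => hm' k (by simpa [Nat.lt_succ_iff] using hk)⟩
    have h1 : v (-(bMinusAbs v j : ℤ)) ≤ v (-((t + k0 : ℕ) : ℤ)) := Nat.sInf_mem hne (t + k0) hd1.le
    rw [e] at h1
    linarith
  · intro x y hx hxy hy
    obtain ⟨m', rfl⟩ : ∃ m' : ℕ, x = -m' := ⟨(-x).toNat, by omega⟩
    obtain ⟨m, rfl⟩ : ∃ m : ℕ, y = -m := ⟨(-y).toNat, by omega⟩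
    have hmm : m ≤ m' := by omega
    have hmd : m' ≤ dMinusAbs v j := by omega
    rcases le_total m' t with h | h
    · have a1 := hpre' m' h
      have a2 := hpre' m (hmm.trans h)
      linarith
    · obtain ⟨k, rfl⟩ := Nat.exists_eq_add_of_le h
      rw [e]
      rcases le_total m t with h' | h'
      · have a2 := hpre' m h'
        have a3 := hdd 0 k (by omega) (by omega)
        simp only [Nat.cast_zero, sub_zero] at a3
        linarith
      · obtain ⟨l, rfl⟩ := Nat.exists_eq_add_of_le h'
        have a3 := hdd l k (by omega) (by omega)
        rw [e]
        linarith

variable {α ε' c₄ c₅ c₆ a ρ : ℝ}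

lemma det_theta (hj : 0 < j) (hc₅1 : c₅ < 1) (hc₆ : 1 ≤ c₆) 
    (hpre : ∀ x : ℤ, |x| ≤ t → |v x| ≤ 0.01 * j)
    (hM : Macro (fun k => v (t + k) - v t) N b j) {i : ℕ} (hi : i + 2 ≤ bigM α ε' j) {x : ℤ}
    (hx : x ∈ thetaSet α ε' c₅ c₆ v j i) :
    (t:ℤ) < x ∧ x ≤ t + N ∧ |(x:ℝ) - ((t + b : ℤ) : ℝ)| ≤ c₆ * gamScale α j i ^ (2 + ε') ∧
    c₅ * gamScale α j (i + 1) ^ (2 + ε') < |(x:ℝ) - ((t + b : ℤ) : ℝ)| ∧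
    c₅ * gamScale α j (bigM α ε' j - 1) ^ (2 + ε') < |(x:ℝ) - ((t + b : ℤ) : ℝ)| := by
  obtain ⟨hd1, hd2, hb, hnu⟩ := det_basic hj hpre hM
  obtain ⟨⟨hx1, hx2⟩, hx3, hx4⟩ := hx
  simp only [mem_iUnion, not_exists, Finset.mem_Ioo] at hx2
  have hb' : ((bPlus v j : ℕ) : ℝ) = ((t + b : ℤ) : ℝ) := by rw [hb]; push_cast; ring
  have hne : i ≠ bigM α ε' j - 1 := by omega
  have h1 : |(x:ℝ) - (bPlus v j : ℝ)| ≤ (if i = bigM α ε' j - 1 then c₅ else c₆) * gamScale α j i ^ (2 + ε') := hx1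
  rw [if_neg hne, hb'] at h1
  refine ⟨by omega, by omega, h1, ?_, ?_⟩
  · have h2 : ¬ |(x:ℝ) - (bPlus v j : ℝ)| ≤ (if i + 1 = bigM α ε' j - 1 then c₅ else c₆) * gamScale α j (i+1) ^ (2 + ε') := 
      hx2 (i+1) (by omega)
    rw [hb', not_le] at h2
    refine lt_of_le_of_lt ?_ h2
    have hg : 0 ≤ gamScale α j (i+1) := Real.rpow_nonneg hj.le _
    gcongr
    split_ifs <;> linarith
  · have h2 : ¬ |(x:ℝ) - (bPlus v j : ℝ)| ≤ (if bigM α ε' j - 1 = bigM α ε' j - 1 then c₅ else c₆) * gamScale α j (bigM α ε' j - 1) ^ (2 + ε') := 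
      hx2 (bigM α ε' j - 1) (by omega)
    rw [hb', not_le, if_pos rfl] at h2
    exact h2

lemma det_ann (hj : 0 < j) (hc₄ : 0 < c₄) (hc₅ : 0 < c₅) (hc₅1 : c₅ < 1) (hc₆ : 1 ≤ c₆) 
    (hpre : ∀ x : ℤ, |x| ≤ t → |v x| ≤ 0.01 * j)
    (hM : Macro (fun k => v (t + k) - v t) N b j)
    (hP : Prof (fun k => v (t + k) - v t) N b (bigM α ε' j - 1) (nn α ε' c₅ j) (hh α ε' c₄ c₆ j)) :
    AannEnv α ε' c₄ c₅ c₆ v j := by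
  intro i hi
  obtain ⟨hd1, hd2, hb, hnu⟩ := det_basic hj hpre hM
  rw [hb]
  set r := c₆ * gamScale α j i ^ (2 + ε') with hr
  have hr0 : 0 ≤ r := mul_nonneg (by linarith) (Real.rpow_nonneg (Real.rpow_nonneg hj.le _) _)
  have hterm : ∀ x ∈ thetaSet α ε' c₅ c₆ v j i, Real.exp (-(v x - v ((t + b : ℕ) : ℤ))) ≤ 
      Real.exp (-(hh α ε' c₄ c₆ j i)) := by
    intro x hx
    obtain ⟨h1, h2, h3, h4, h5⟩ := det_theta hj hc₅1 hc₆ hpre hM hi hx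
    rw [Real.exp_le_exp, neg_le_neg_iff]
    push_cast
    have h6 : nn α ε' c₅ j i ≤ (x - (t + b)).natAbs := by
      apply Nat.ceil_le.2
      have : (((x - (t + b)).natAbs : ℕ) : ℝ) = |(x:ℝ) - ((t + b : ℤ) : ℝ)| := by
        rw [Nat.cast_natAbs]; push_cast; rfl
      rw [this]; exact h4.le
    obtain ⟨p1, p2⟩ := hP i (by omega)
    rcases le_total x (t + b) with hc | hc
    · have := p1 (x - (t + b)).natAbs (by omega) h6
      have e : ((t:ℤ) + ((b - (x - (t + b)).natAbs : ℕ) : ℤ)) = x := by omega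
      simp only [e] at this
      linarith
    · have := p2 (x - (t + b)).natAbs (by omega) h6
      have e : ((t:ℤ) + ((b + (x - (t + b)).natAbs : ℕ) : ℤ)) = x := by omega
      simp only [e] at this
      linarith
  have hfin : (2 * r + 1) * Real.exp (-(hh α ε' c₄ c₆ j i)) = epsScale α c₄ j i ^ 2 := by
    unfold epsScale hh
    rw [← Real.exp_nat_mul, neg_add, Real.exp_add, Real.exp_neg (Real.log _)]
    have e1 : 2 * c₆ * gamScale α j i ^ (2 + ε') + 1 = 2 * r + 1 := by rw [hr]; ring
    rw [e1, Real.exp_log (by positivity)]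
    have : 2 * r + 1 ≠ 0 := by positivity
    field_simp
    congr 1; push_cast; ring
  rw [← hfin]
  apply Real.tsum_le_of_sum_le (fun x => (Real.exp_pos _).le)
  intro s
  calc ∑ x ∈ s, Real.exp (-(v x - v ((t + b : ℕ) : ℤ))) ≤ ∑ x ∈ s, Real.exp (-(hh α ε' c₄ c₆ j i)) :=
        Finset.sum_le_sum fun x _ => hterm x x.2
    _ = s.card * Real.exp (-(hh α ε' c₄ c₆ j i)) := by simp
    _ ≤ _ := by
        gcongr
        rw [← Finset.card_map (Function.Embedding.subtype _)]
        apply ball_card (t + b) hr0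
        intro x hx
        simp only [Finset.mem_map, Function.Embedding.subtype_apply] at hx
        obtain ⟨y, _, rfl⟩ := hx
        exact (det_theta hj hc₅1 hc₆ hpre hM hi y.2).2.2.1

lemma det_good (hj : 0 < j) (hc₄ : 0 < c₄) (hc₅ : 0 < c₅) (hc₅1 : c₅ < 1) (hc₆ : 1 ≤ c₆) 
    (hpre : ∀ x : ℤ, |x| ≤ t → |v x| ≤ 0.01 * j)
    (hM : Macro (fun k => v (t + k) - v t) N b j)
    (hP : Prof (fun k => v (t + k) - v t) N b (bigM α ε' j - 1) (nn α ε' c₅ j) (hh α ε' c₄ c₆ j))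
    (hLM : LMacro (fun k => v (-t - k) - v (-t)) N j)
    (hneg : ∀ x : ℤ, |(x:ℝ)| ≤ j ^ (2 + ε') → max (-(ξ x)) 0 < epsScale α c₄ j 0 ^ (-(1 / 2) : ℝ))
    (hin : SceIn ξ t (t + N) (t + b) (c₅ * gamScale α j (bigM α ε' j - 1) ^ (2 + ε')) (a - ρ))
    (hout : SceOut ξ t (t + N) (t + b) (c₅ * gamScale α j (bigM α ε' j - 1) ^ (2 + ε')) 
      (bigM α ε' j - 1) (fun i => c₆ * gamScale α j i ^ (2 + ε')) 
      (fun i => epsScale α c₄ j i ^ (-(1 / 2) : ℝ))) :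
    goodPair α ε' c₄ c₅ c₆ a ρ v ξ j := by
  obtain ⟨hA1, hA2⟩ := det_A12 hj hpre hM
  refine ⟨hA1, hA2, det_ann hj hc₄ hc₅ hc₅1 hc₆ hpre hM hP, det_B hj hpre hLM, ?_, ?_, ?_⟩
  · intro x hx
    exact hneg x (abs_le.2 ⟨hx.1, hx.2.1⟩)
  · intro i hi x hx
    obtain ⟨h1, h2, h3, h4, h5⟩ := det_theta hj hc₅1 hc₆ hpre hM hi hx
    exact hout i (by omega) x h1 h2 h5 h3
  · intro x hx
    obtain ⟨hd1, hd2, hb, hnu⟩ := det_basic hj hpre hM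
    obtain ⟨⟨hx1, hx2⟩, hx3, hx4⟩ := hx
    have hb' : ((bPlus v j : ℕ) : ℝ) = ((t + b : ℤ) : ℝ) := by rw [hb]; push_cast; ring
    have h1 : |(x:ℝ) - (bPlus v j : ℝ)| ≤ (if bigM α ε' j - 1 = bigM α ε' j - 1 then c₅ else c₆) * gamScale α j (bigM α ε' j - 1) ^ (2 + ε') := hx1
    rw [hb', if_pos rfl] at h1
    exact hin x (by omega) (by omega) h1
end

open MeasureTheory ProbabilityTheory Filter Set
set_option linter.unusedSectionVars false
set_option linter.unusedVariables false

section
variable {Ω : Type*} {mΩ : MeasurableSpace Ω} {μ : Measure Ω} [IsProbabilityMeasure μ]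

lemma joint_indep {X ξ : ℤ → Ω → ℝ} (hX : ∀ i, Measurable (X i)) (hξ : ∀ i, Measurable (ξ i))
    (hXi : iIndepFun X μ) (hξi : iIndepFun ξ μ)
    (hI : IndepFun (fun ω => (fun x : ℤ => ξ x ω)) (fun ω => (fun i : ℤ => X i ω)) μ) :
    iIndepFun (fun i : ℤ ⊕ ℤ => Sum.elim X ξ i) μ := by
  classical
  rw [iIndepFun_iff_measure_inter_preimage_eq_mul]
  intro S sets hS
  rw [iIndepFun_iff_measure_inter_preimage_eq_mul] at hXi hξi
  have e1 : (⋂ i ∈ S, (Sum.elim X ξ i) ⁻¹' sets i) = 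
      (⋂ i ∈ S.toRight, ξ i ⁻¹' sets (Sum.inr i)) ∩ (⋂ i ∈ S.toLeft, X i ⁻¹' sets (Sum.inl i)) := by
    ext ω
    simp only [mem_iInter, mem_inter_iff, Finset.mem_toRight, Finset.mem_toLeft, mem_preimage]
    constructor
    · intro h
      exact ⟨fun i hi => h _ hi, fun i hi => h _ hi⟩
    · rintro ⟨h1, h2⟩ (i | i) hi
      · exact h2 i hi
      · exact h1 i hi
  have m1 : MeasurableSet {f : ℤ → ℝ | ∀ i ∈ S.toRight, f i ∈ sets (Sum.inr i)} := by
    simp only [ofPred_forall]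
    exact MeasurableSet.iInter fun i => MeasurableSet.iInter fun hi => 
      (measurable_pi_apply i) (hS _ (by simpa using hi))
  have m2 : MeasurableSet {f : ℤ → ℝ | ∀ i ∈ S.toLeft, f i ∈ sets (Sum.inl i)} := by
    simp only [ofPred_forall]
    exact MeasurableSet.iInter fun i => MeasurableSet.iInter fun hi => 
      (measurable_pi_apply i) (hS _ (by simpa using hi))
  have h3 := hI.measure_inter_preimage_eq_mul _ _ m1 m2
  have e2 : (fun ω => (fun x : ℤ => ξ x ω)) ⁻¹' {f : ℤ → ℝ | ∀ i ∈ S.toRight, f i ∈ sets (Sum.inr i)} = 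
      ⋂ i ∈ S.toRight, ξ i ⁻¹' sets (Sum.inr i) := by
    ext ω; simp
  have e3 : (fun ω => (fun x : ℤ => X x ω)) ⁻¹' {f : ℤ → ℝ | ∀ i ∈ S.toLeft, f i ∈ sets (Sum.inl i)} = 
      ⋂ i ∈ S.toLeft, X i ⁻¹' sets (Sum.inl i) := by
    ext ω; simp
  rw [e2, e3] at h3
  rw [e1, h3, hξi _ (fun i hi => hS _ (by simpa using hi)), hXi _ (fun i hi => hS _ (by simpa using hi)),
    Finset.prod_sum_eq_prod_toLeft_mul_prod_toRight, mul_comm]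
  rfl

lemma bc1 {s : ℕ → Set Ω} (C : ℝ) (hs : ∀ᶠ p : ℕ in atTop, μ.real (s p) ≤ C / (p:ℝ) ^ 2) :
    ∀ᵐ ω ∂μ, ∀ᶠ p in atTop, ω ∉ s p := by
  obtain ⟨p0, hp0⟩ := eventually_atTop.1 hs
  have hsum : Summable (fun p : ℕ => C / ((p + p0 : ℕ):ℝ) ^ 2) := by
    have h1 : Summable (fun p : ℕ => C / (p:ℝ) ^ 2) := by
      simpa [div_eq_mul_inv] using (Real.summable_one_div_nat_pow.2 (by norm_num : 1 < 2)).mul_left C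
    exact (summable_nat_add_iff (f := fun p : ℕ => C / (p:ℝ) ^ 2) p0).2 h1
  have hfin : ∑' p, μ (s (p + p0)) ≠ ⊤ := by
    refine ne_top_of_le_ne_top hsum.tsum_ofReal_ne_top (ENNReal.tsum_le_tsum fun p => ?_)
    rw [← ENNReal.ofReal_toReal (measure_ne_top μ (s (p + p0)))]
    exact ENNReal.ofReal_le_ofReal (hp0 (p + p0) (by omega))
  filter_upwards [ae_eventually_notMem hfin] with ω hω
  obtain ⟨q, hq⟩ := eventually_atTop.1 hω
  refine eventually_atTop.2 ⟨q + p0, fun p hp => ?_⟩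
  have := hq (p - p0) (by omega)
  rwa [Nat.sub_add_cancel (by omega)] at this

variable {ι : Type*} {F : ι → Ω → ℝ}

lemma bc2 (hF : ∀ i, Measurable (F i)) (hi : iIndepFun F μ) {G : ℕ → Set Ω} {J : ℕ → Set ι}
    (hG : ∀ p, MeasurableSet[SG F (J p)] (G p)) (hJ : ∀ p q, p < q → Disjoint (J p) (J q))
    {C : ℝ} (hC : 0 < C) {p0 : ℕ} (hlow : ∀ p, C / ((p + p0 : ℕ):ℝ) ≤ μ.real (G p)) :
    ∀ᵐ ω ∂μ, ∃ᶠ p in atTop, ω ∈ G p := by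
  classical
  have hGm : ∀ p, MeasurableSet (G p) := fun p => SG_le hF _ _ (hG p)
  have hJ' : ∀ p q, p ≠ q → Disjoint (J p) (J q) := fun p q hpq => by
    rcases lt_or_gt_of_ne hpq with h | h
    · exact hJ p q h
    · exact (hJ q p h).symm
  have hind : iIndepSet G μ := by
    rw [iIndepSet_iff_meas_biInter hGm]
    intro S
    have : MeasurableSet[SG F (⋃ p ∈ S, J p)] (⋂ p ∈ S, G p) ∧ μ (⋂ p ∈ S, G p) = ∏ p ∈ S, μ (G p) := by
      induction S using Finset.induction_on with
      | empty => simp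
      | insert q S hq ih =>
        obtain ⟨ih1, ih2⟩ := ih
        rw [Finset.prod_insert hq, ← ih2, Finset.set_biInter_insert, Finset.set_biUnion_insert]
        constructor
        · exact MeasurableSet.inter (SG_mono subset_union_left _ (hG q)) (SG_mono subset_union_right _ ih1)
        · have hd : Disjoint (J q) (⋃ p ∈ S, J p) := by
            simp only [disjoint_iUnion_right]
            intro p hp
            exact hJ' q p (fun h => hq (h ▸ hp))
          exact (Indep_iff _ _ μ).1 (SG_indep hF hi hd) _ _ (hG q) ih1
    exact this.2
  have hsum : ∑' p, μ (G p) = ⊤ := by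
    by_contra hne
    have h1 := ENNReal.summable_toReal hne
    have h2 : Summable (fun p : ℕ => C / ((p + p0 : ℕ):ℝ)) := 
      Summable.of_nonneg_of_le (fun p => by positivity) hlow h1
    have h3 : Summable (fun p : ℕ => C / (p:ℝ)) := 
      (summable_nat_add_iff (f := fun p : ℕ => C / (p:ℝ)) p0).1 h2
    have h4 := h3.mul_left C⁻¹
    refine Real.not_summable_one_div_natCast ?_
    refine h4.congr fun p => ?_
    field_simp
  have h1 := measure_limsup_eq_one hGm hind hsum
  have h2 : MeasurableSet (limsup G atTop) := MeasurableSet.measurableSet_limsup hGm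
  have h3 : ∀ᵐ ω ∂μ, ω ∈ limsup G atTop := by
    rw [← prob_compl_eq_zero_iff h2] at h1
    exact h1
  filter_upwards [h3] with ω hω
  exact mem_limsup_iff_frequently_mem.1 hω

lemma union_lower (hF : ∀ i, Measurable (F i)) (hi : iIndepFun F μ) {A B : Set ι} (hAB : Disjoint A B)
    {D S : ℕ → Set Ω} (hD : ∀ b, MeasurableSet[SG F A] (D b)) (hS : ∀ b, MeasurableSet[SG F B] (S b))
    {σ : ℝ} (hσ : ∀ b, σ ≤ μ.real (S b)) (n : ℕ) :
    ∀ E, MeasurableSet[SG F A] E → 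
    σ * μ.real (E ∩ ⋃ b ∈ Finset.range n, D b) ≤ μ.real (E ∩ ⋃ b ∈ Finset.range n, (D b ∩ S b)) := by
  induction n with
  | zero => intro E hE; simp
  | succ n ih =>
    intro E hE
    have hDn := SG_le hF _ _ (hD n)
    have h1 := ih (E ∩ (D n)ᶜ) (hE.inter (hD n).compl)
    have h2 := SG_inter hF hi hAB (hE.inter (hD n)) (hS n)
    have h3 : σ * μ.real (E ∩ D n) ≤ μ.real (E ∩ D n ∩ S n) := by
      rw [h2, mul_comm]
      have := hσ n
      gcongr
    have e1 : μ.real (E ∩ ⋃ b ∈ Finset.range (n+1), D b) ≤ 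
        μ.real (E ∩ (D n)ᶜ ∩ ⋃ b ∈ Finset.range n, D b) + μ.real (E ∩ D n) := by
      refine le_trans (measureReal_mono ?_) (measureReal_union_le _ _)
      rintro ω ⟨h1, h2⟩
      by_cases hn : ω ∈ D n
      · exact Or.inr ⟨h1, hn⟩
      · left
        simp only [mem_iUnion, Finset.mem_range] at h2 ⊢
        obtain ⟨b, hb, hb'⟩ := h2
        refine ⟨⟨h1, hn⟩, ?_⟩
        simp only [mem_iUnion, Finset.mem_range]
        rcases eq_or_ne b n with rfl | hne
        · exact absurd hb' hn
        · exact ⟨b, by omega, hb'⟩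
    have e2 : μ.real (E ∩ (D n)ᶜ ∩ ⋃ b ∈ Finset.range n, (D b ∩ S b)) + μ.real (E ∩ D n ∩ S n) ≤
        μ.real (E ∩ ⋃ b ∈ Finset.range (n+1), (D b ∩ S b)) := by
      rw [← measureReal_union]
      · refine measureReal_mono ?_
        rintro ω (⟨⟨h1, h2⟩, h3⟩ | ⟨⟨h1, h2⟩, h3⟩)
        · refine ⟨h1, ?_⟩
          simp only [mem_iUnion, Finset.mem_range] at h3 ⊢
          obtain ⟨b, hb, hb'⟩ := h3
          exact ⟨b, by omega, hb'⟩
        · refine ⟨h1, ?_⟩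
          simp only [mem_iUnion, Finset.mem_range]
          exact ⟨n, by omega, h2, h3⟩
      · rw [Set.disjoint_left]
        rintro ω ⟨⟨_, h1⟩, _⟩ ⟨⟨_, h2⟩, _⟩
        exact h1 h2
      · exact ((SG_le hF _ _ hE).inter hDn).inter (SG_le hF _ _ (hS n))
    have hσ0 : σ * μ.real (E ∩ ⋃ b ∈ Finset.range (n+1), D b) ≤ 
        σ * μ.real (E ∩ (D n)ᶜ ∩ ⋃ b ∈ Finset.range n, D b) + σ * μ.real (E ∩ D n) ∨ σ < 0 := by
      rcases le_or_gt 0 σ with h | h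
      · left; rw [← mul_add]; gcongr
      · right; exact h
    rcases hσ0 with h | h
    · linarith
    · have : σ * μ.real (E ∩ ⋃ b ∈ Finset.range (n+1), D b) ≤ 0 := 
        mul_nonpos_of_nonpos_of_nonneg h.le measureReal_nonneg
      exact this.trans measureReal_nonneg

end

section
variable {Ω : Type*} {mΩ : MeasurableSpace Ω} {μ : Measure Ω} [IsProbabilityMeasure μ] {ξ : ℤ → Ω → ℝ}

/-- sites -/
noncomputable def siteSet (lo hi c : ℤ) (r : ℝ) : Finset ℤ := by
  classical exact (Finset.Ioc lo hi).filter (fun x : ℤ => |(x:ℝ) - c| ≤ r)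

lemma mem_siteSet {lo hi c : ℤ} {r : ℝ} {x : ℤ} : 
    x ∈ siteSet lo hi c r ↔ (lo < x ∧ x ≤ hi) ∧ |(x:ℝ) - c| ≤ r := by
  classical simp [siteSet]

lemma in_prob (hξ : ∀ i, Measurable (ξ i)) (hi : iIndepFun ξ μ) 
    (hid : ∀ x, IdentDistrib (ξ x) (ξ 0) μ μ) (lo hi' c : ℤ) {r : ℝ} (hr : 0 ≤ r) (y : ℝ) {q : ℝ} (hq0 : 0 < q)
    (hq : q = μ.real {ω | y ≤ ξ 0 ω}) :
    q ^ (2 * r + 1) ≤ μ.real {ω | SceIn (fun x => ξ x ω) lo hi' c r y} := by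
  have e : {ω | SceIn (fun x => ξ x ω) lo hi' c r y} = ⋂ x ∈ siteSet lo hi' c r, ξ x ⁻¹' (Ici y) := by
    ext ω
    simp only [SceIn, mem_iInter, mem_siteSet, mem_ofPred_eq, mem_preimage, mem_Ici]
    constructor
    · intro h x hx; exact h x hx.1.1 hx.1.2 hx.2
    · intro h x h1 h2 h3; exact h x ⟨⟨h1, h2⟩, h3⟩
  have h1 := hi.measure_inter_preimage_eq_mul (siteSet lo hi' c r) (sets := fun _ => Ici y) (fun i _ => measurableSet_Ici)
  have h2 : ∀ x, μ (ξ x ⁻¹' (Ici y)) = μ (ξ 0 ⁻¹' (Ici y)) := fun x => 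
    (hid x).measure_mem_eq measurableSet_Ici
  rw [e, Measure.real, h1, ENNReal.toReal_prod]
  simp only [h2, Finset.prod_const]
  have h3 : (μ (ξ 0 ⁻¹' (Ici y))).toReal = q := by rw [hq]; rfl
  rw [h3, ← Real.rpow_natCast]
  have hq1 : q ≤ 1 := by rw [hq]; exact measureReal_le_one
  apply Real.rpow_le_rpow_of_exponent_ge hq0 hq1
  exact ball_card c hr _ (fun x hx => (mem_siteSet.1 hx).2)

lemma tail_union (hid : ∀ x, IdentDistrib (ξ x) (ξ 0) μ μ) (c : ℤ) {r : ℝ} (hr : 0 ≤ r) {l y τ : ℝ} (hl : l < y)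
    (hτ : μ.real {ω | l < max (-(ξ 0 ω)) 0} ≤ τ) (S : Finset ℤ) (hS : ∀ x ∈ S, |(x:ℝ) - c| ≤ r) :
    μ.real {ω | ∃ x ∈ S, ¬ (max (-(ξ x ω)) 0 < y)} ≤ (2 * r + 1) * τ := by
  have hτ0 : 0 ≤ τ := measureReal_nonneg.trans hτ
  have hsub : {ω | ∃ x ∈ S, ¬ (max (-(ξ x ω)) 0 < y)} ⊆ ⋃ x ∈ S, {ω | l < max (-(ξ x ω)) 0} := by
    rintro ω ⟨x, hx, h⟩
    simp only [mem_iUnion]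
    exact ⟨x, hx, lt_of_lt_of_le hl (not_lt.1 h)⟩
  have hm : MeasurableSet {z : ℝ | l < max (-z) 0} := 
    measurableSet_lt measurable_const (measurable_neg.max measurable_const)
  have h2 : ∀ x, μ.real {ω | l < max (-(ξ x ω)) 0} ≤ τ := fun x => by
    have : μ {ω | l < max (-(ξ x ω)) 0} = μ {ω | l < max (-(ξ 0 ω)) 0} := (hid x).measure_mem_eq hm
    rw [Measure.real, this]; exact hτ
  calc _ ≤ _ := measureReal_mono hsub (measure_ne_top _ _)
    _ ≤ ∑ x ∈ S, μ.real {ω | l < max (-(ξ x ω)) 0} := measureReal_biUnion_finset_le _ _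
    _ ≤ ∑ x ∈ S, τ := Finset.sum_le_sum fun x _ => h2 x
    _ = S.card * τ := by simp
    _ ≤ _ := by
      have := ball_card c hr S hS
      gcongr

lemma SceIn_meas (lo hi c : ℤ) (r y : ℝ) : 
    MeasurableSet[SG ξ {x | (lo < x ∧ x ≤ hi) ∧ |(x:ℝ) - c| ≤ r}] {ω | SceIn (fun x => ξ x ω) lo hi c r y} := by
  simp only [SceIn, ofPred_forall]
  exact MeasurableSet.iInter fun x => MeasurableSet.iInter fun h1 => MeasurableSet.iInter fun h2 => 
    MeasurableSet.iInter fun h3 => measurableSet_le measurable_const (SG_meas ⟨⟨h1, h2⟩, h3⟩)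

lemma SceOut_meas (lo hi c : ℤ) (r : ℝ) (I : ℕ) (rr ee : ℕ → ℝ) : 
    MeasurableSet[SG ξ {x | (lo < x ∧ x ≤ hi) ∧ r < |(x:ℝ) - c|}] 
      {ω | SceOut (fun x => ξ x ω) lo hi c r I rr ee} := by
  simp only [SceOut, ofPred_forall]
  refine MeasurableSet.iInter fun i => MeasurableSet.iInter fun _ => MeasurableSet.iInter fun x => 
    MeasurableSet.iInter fun h1 => MeasurableSet.iInter fun h2 => 
    MeasurableSet.iInter fun h3 => MeasurableSet.iInter fun _ => measurableSet_lt ?_ measurable_const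
  have hm : Measurable[SG ξ {x | (lo < x ∧ x ≤ hi) ∧ r < |(x:ℝ) - c|}] (ξ x) := SG_meas ⟨⟨h1, h2⟩, h3⟩
  exact hm.neg.max measurable_const

lemma sce_prob (hξ : ∀ i, Measurable (ξ i)) (hi : iIndepFun ξ μ) 
    (hid : ∀ x, IdentDistrib (ξ x) (ξ 0) μ μ) (lo hi' c : ℤ) {r : ℝ} (hr : 0 ≤ r) (y : ℝ) {q : ℝ} (hq0 : 0 < q)
    (hq : q = μ.real {ω | y ≤ ξ 0 ω}) (I : ℕ) {rr ee ll τ : ℕ → ℝ} (hrr : ∀ i < I, 0 ≤ rr i) 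
    (hll : ∀ i < I, ll i < ee i) 
    (hτ : ∀ i < I, μ.real {ω | ll i < max (-(ξ 0 ω)) 0} ≤ τ i)
    (hsum : ∑ i ∈ Finset.range I, (2 * rr i + 1) * τ i ≤ 1 / 2) :
    q ^ (2 * r + 1) / 2 ≤ μ.real ({ω | SceIn (fun x => ξ x ω) lo hi' c r y} ∩ 
      {ω | SceOut (fun x => ξ x ω) lo hi' c r I rr ee}) := by
  have hd : Disjoint {x : ℤ | (lo < x ∧ x ≤ hi') ∧ |(x:ℝ) - c| ≤ r} {x : ℤ | (lo < x ∧ x ≤ hi') ∧ r < |(x:ℝ) - c|} := by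
    rw [Set.disjoint_left]
    rintro x ⟨_, h1⟩ ⟨_, h2⟩
    linarith
  have hO := SceOut_meas (ξ := ξ) lo hi' c r I rr ee
  rw [SG_inter hξ hi hd (SceIn_meas lo hi' c r y) hO]
  have h1 := in_prob hξ hi hid lo hi' c hr y hq0 hq
  have h2 : 1 / 2 ≤ μ.real {ω | SceOut (fun x => ξ x ω) lo hi' c r I rr ee} := by
    have hc := probReal_compl_eq_one_sub (μ := μ) (SG_le hξ _ _ hO)
    have hsub : {ω | SceOut (fun x => ξ x ω) lo hi' c r I rr ee}ᶜ ⊆ ⋃ i ∈ Finset.range I, 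
        {ω | ∃ x ∈ siteSet lo hi' c (rr i), ¬ (max (-(ξ x ω)) 0 < ee i)} := by
      intro ω hω
      simp only [mem_compl_iff, mem_ofPred_eq, SceOut, not_forall] at hω
      obtain ⟨i, hi, x, h1, h2, h3, h4, h5⟩ := hω
      simp only [mem_iUnion]
      exact ⟨i, by simpa using hi, x, mem_siteSet.2 ⟨⟨h1, h2⟩, h4⟩, h5⟩
    have h3 : μ.real ({ω | SceOut (fun x => ξ x ω) lo hi' c r I rr ee}ᶜ) ≤ 1 / 2 := by
      refine (measureReal_mono hsub (measure_ne_top _ _)).trans ((measureReal_biUnion_finset_le _ _).trans (le_trans ?_ hsum))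
      refine Finset.sum_le_sum fun i hi => ?_
      have hi : i < I := by simpa using hi
      exact tail_union hid c (hrr i hi) (hll i hi) (hτ i hi) _ (fun x hx => (mem_siteSet.1 hx).2)
    linarith
  have h3 : 0 ≤ q ^ (2 * r + 1) := by positivity
  calc q ^ (2 * r + 1) / 2 = q ^ (2 * r + 1) * (1 / 2) := by ring
    _ ≤ _ := by gcongr
end

open MeasureTheory ProbabilityTheory Filter Set
set_option linter.unusedSectionVars false
set_option linter.unusedVariables false

/-- The level `j_p = p^(3p)`. -/
noncomputable def jp (p : ℕ) : ℝ := (p:ℝ) ^ (3 * p)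
/-- The starting site of block `p`. -/
def tp (p : ℕ) : ℕ := p ^ (6 * p - 3)
/-- The number of steps in a sub-block. -/
noncomputable def mm (B j : ℝ) : ℕ := ⌊(j / (400 * B)) ^ 2⌋₊

lemma tp_jp {p : ℕ} (hp : 1 ≤ p) : (tp p : ℝ) * (p:ℝ) ^ 3 = jp p ^ 2 := by
  unfold tp jp
  push_cast
  rw [← pow_add, ← pow_mul]
  congr 1
  omega

lemma le_jp {p : ℕ} (hp : 1 ≤ p) : (p:ℝ) ≤ jp p := by
  unfold jp
  have : (1:ℝ) ≤ p := by exact_mod_cast hp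
  exact le_self_pow₀ this (by omega)

lemma jp_tendsto : Tendsto jp atTop atTop := by
  refine tendsto_atTop_mono' _ ?_ tendsto_natCast_atTop_atTop
  filter_upwards [eventually_ge_atTop 1] with p hp using le_jp hp

lemma mm_spec {B j : ℝ} (hB : 0 < B) (hj : 800 * B ≤ j) :
    1 ≤ mm B j ∧ 4 * B * √(mm B j) ≤ 0.01 * j ∧ j ≤ 800 * B * √(mm B j) ∧ (mm B j : ℝ) ≤ (j / (400 * B)) ^ 2 := by
  set x := j / (400 * B) with hx
  have hx2 : 2 ≤ x := by rw [hx, le_div_iff₀ (by positivity)]; linarith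
  have hjx : j = 400 * B * x := by rw [hx]; field_simp
  have h1 : (mm B j : ℝ) ≤ x ^ 2 := Nat.floor_le (by positivity)
  have h2 : x ^ 2 < mm B j + 1 := Nat.lt_floor_add_one _
  have h3 : (x / 2) ^ 2 ≤ mm B j := by nlinarith
  have h4 : x / 2 ≤ √(mm B j) := Real.le_sqrt_of_sq_le h3
  have h5 : √(mm B j) ≤ x := by
    rw [Real.sqrt_le_left (by linarith)]; exact h1
  refine ⟨?_, ?_, ?_, h1⟩
  · have : (1:ℝ) ≤ mm B j := by nlinarith
    exact_mod_cast this
  · have := mul_le_mul_of_nonneg_left h5 hB.le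
    linarith
  · have := mul_le_mul_of_nonneg_left h4 hB.le
    linarith

lemma eps_exp (α c₄ j : ℝ) (i : ℕ) : epsScale α c₄ j i ^ (-(1/2) : ℝ) = Real.exp (c₄ * gamScale α j (i+2) / 2) := by
  unfold epsScale
  rw [← Real.exp_mul]; congr 1; ring

lemma tp_sep (κ : ℝ) : ∀ᶠ p : ℕ in atTop, ∀ N : ℕ, (N:ℝ) ≤ κ * jp p ^ 2 → ∀ q, p < q → tp p + N < tp q := by
  have h1 : ∀ᶠ p : ℕ in atTop, κ + 1 < p := (tendsto_natCast_atTop_atTop (R := ℝ)).eventually_gt_atTop _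
  filter_upwards [h1, eventually_ge_atTop 1] with p hp hp1 N hN q hq
  have hpr : (1:ℝ) ≤ p := by exact_mod_cast hp1
  have hj : 0 < jp p := by unfold jp; positivity
  have h3 : tp p + N < tp (p+1) := by
    have e1 := tp_jp hp1
    have e2 : (tp p : ℝ) ≤ jp p ^ 2 := by
      rw [← e1]
      exact le_mul_of_one_le_right (by positivity) (one_le_pow₀ hpr)
    have e3 : (p:ℝ) * jp p ^ 2 ≤ tp (p+1) := by
      have : p * (p ^ (3*p))^2 ≤ tp (p+1) := by
        unfold tp
        calc p * (p ^ (3*p))^2 = p ^ (6 * p + 1) := by rw [← pow_mul, pow_succ']; congr 2; ring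
          _ ≤ (p+1) ^ (6*p+1) := Nat.pow_le_pow_left (by omega) _
          _ ≤ (p+1) ^ (6*(p+1)-3) := Nat.pow_le_pow_right (by omega) (by omega)
      unfold jp
      exact_mod_cast this
    have : ((tp p + N : ℕ):ℝ) < tp (p+1) := by
      push_cast
      have : (κ + 1) * jp p ^ 2 < p * jp p ^ 2 := by gcongr
      nlinarith
    exact_mod_cast this
  have h4 : tp (p+1) ≤ tp q := by
    unfold tp
    calc (p+1) ^ (6*(p+1)-3) ≤ q ^ (6*(p+1)-3) := Nat.pow_le_pow_left (by omega) _
      _ ≤ _ := Nat.pow_le_pow_right (by omega) (by omega)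
  omega

lemma sig_lower {α ε' c₅ q : ℝ} (hα0 : 0 < α) (hα1 : α < 1) (hε' : 0 < ε') (hc₅ : 0 < c₅) (hq0 : 0 < q)
    (hq1 : q ≤ 1) (hq : c₅ * |Real.log q| < 1/5) :
    ∀ᶠ p : ℕ in atTop, (q / 6) / p ≤ q ^ (2 * (c₅ * gamScale α (jp p) (bigM α ε' (jp p) - 1) ^ (2 + ε')) + 1) / 2 := by
  have hR := jp_tendsto.eventually ((RR_tendsto hα1 hε').eventually_gt_atTop 1)
  have hR' := jp_tendsto.eventually (RR_lt hα0 hα1 hε')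
  have hll := jp_tendsto.eventually ((Real.tendsto_log_atTop.comp Real.tendsto_log_atTop).eventually_ge_atTop 0)
  have hl1 := jp_tendsto.eventually (Real.tendsto_log_atTop.eventually_ge_atTop 1)
  filter_upwards [hR, hR', hll, hl1, eventually_ge_atTop 1] with p h1 h2 h3 h4 hp
  have hpr : (1:ℝ) ≤ p := by exact_mod_cast hp
  have hj : 0 < jp p := by unfold jp; positivity
  have h3 : 0 ≤ Real.log (Real.log (jp p)) := h3
  have hg := gam_top hα0 hα1 hε' hj h1 h2 h3
  set g := gamScale α (jp p) (bigM α ε' (jp p) - 1) ^ (2 + ε') with hgdef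
  set ℓ := Real.log (Real.log (jp p)) with hℓ
  have hg0 : 0 ≤ g := by rw [hgdef]; unfold gamScale; positivity
  have hlq : Real.log q ≤ 0 := Real.log_nonpos hq0.le hq1
  rw [abs_of_nonpos hlq] at hq
  have e1 : ℓ ≤ 2 * Real.log (3 * p) := by
    have : Real.log (jp p) ≤ (3 * p) ^ 2 := by
      unfold jp
      rw [Real.log_pow]
      have := Real.log_le_self (by linarith : (0:ℝ) ≤ p)
      push_cast
      nlinarith
    calc ℓ ≤ Real.log ((3 * p)^2) := Real.log_le_log (by linarith) this
      _ = _ := by rw [Real.log_pow]; push_cast; ring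
  have e2 : -Real.log (3 * p) + Real.log q ≤ Real.log q * (2 * (c₅ * g) + 1) := by
    have : (c₅ * -Real.log q) * g ≤ 1/5 * ℓ := by
      apply mul_le_mul hq.le hg hg0 (by norm_num)
    nlinarith
  have e3 : q / (3 * p) ≤ q ^ (2 * (c₅ * g) + 1) := by
    rw [Real.rpow_def_of_pos hq0]
    calc q / (3 * p) = Real.exp (-Real.log (3 * p) + Real.log q) := by
          rw [Real.exp_add, Real.exp_neg, Real.exp_log (by positivity), Real.exp_log hq0]; ring
      _ ≤ _ := Real.exp_le_exp.2 e2
  calc (q/6)/p = q / (3 * p) / 2 := by ring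
    _ ≤ _ := by gcongr

lemma neg_rate {α ε' ε c₄ : ℝ} (hε : 0 < ε) (hε' : 0 < ε') (hc₄ : 0 < c₄)
    (hβ : 0 < (1 - α) ^ 2 * (2 + ε) - (2 + ε')) :
    ∃ C : ℝ, ∀ᶠ p : ℕ in atTop, (2 * jp p ^ (2 + ε') + 1) * (1 / (c₄ * gamScale α (jp p) 2 / 4) ^ (2 + ε)) ≤ C / p ^ 2 := by
  refine ⟨3 / (c₄/4) ^ (2 + ε), ?_⟩
  set β := (1 - α) ^ 2 * (2 + ε) - (2 + ε') with hβd
  have h1 : ∀ᶠ p : ℕ in atTop, 2 / (3*β) ≤ p := (tendsto_natCast_atTop_atTop (R := ℝ)).eventually_ge_atTop _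
  filter_upwards [h1, eventually_ge_atTop 1] with p hp hp1
  have hpr : (1:ℝ) ≤ p := by exact_mod_cast hp1
  have hj1 : 1 ≤ jp p := hpr.trans (le_jp hp1)
  have hj : 0 < jp p := by linarith
  have e1 : (p:ℝ) ^ 2 ≤ jp p ^ β := by
    have : jp p ^ β = (p:ℝ) ^ (((3 * p : ℕ):ℝ) * β) := by
      unfold jp; rw [← Real.rpow_natCast, ← Real.rpow_mul (by positivity)]
    rw [this, ← Real.rpow_natCast]
    apply Real.rpow_le_rpow_of_exponent_le hpr
    rw [div_le_iff₀ (by positivity)] at hp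
    push_cast; linarith
  have e2 : (c₄ * gamScale α (jp p) 2 / 4) ^ (2 + ε) = (c₄/4)^(2+ε) * (jp p ^ β * jp p ^ (2 + ε')) := by
    rw [← Real.rpow_add hj]
    unfold gamScale
    rw [show c₄ * jp p ^ (1 - α) ^ 2 / 4 = (c₄/4) * jp p ^ (1 - α) ^ 2 by ring,
      Real.mul_rpow (by positivity) (by positivity), ← Real.rpow_mul hj.le]
    congr 2; rw [hβd]; ring
  have e3 : 1 ≤ jp p ^ (2 + ε') := Real.one_le_rpow hj1 (by linarith)
  rw [e2, mul_one_div, div_le_div_iff₀ (by positivity) (by positivity)]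
  have e4 : (2 * jp p ^ (2 + ε') + 1) * (p:ℝ) ^ 2 ≤ 3 * (jp p ^ β * jp p ^ (2 + ε')) := by
    have : (2 * jp p ^ (2 + ε') + 1) * (p:ℝ)^2 ≤ (3 * jp p ^ (2 + ε')) * jp p ^ β := by
      gcongr; linarith
    linarith
  calc (2 * jp p ^ (2 + ε') + 1) * (p:ℝ)^2 ≤ _ := e4
    _ = 3 / (c₄ / 4) ^ (2 + ε) * ((c₄ / 4) ^ (2 + ε) * (jp p ^ β * jp p ^ (2 + ε'))) := by field_simp

open MeasureTheory ProbabilityTheory Filter Set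
set_option linter.unusedSectionVars false
set_option linter.unusedVariables false

section
variable {Ω : Type*} {mΩ : MeasurableSpace Ω} {μ : Measure Ω} [IsProbabilityMeasure μ]
variable {X ξ : ℤ → Ω → ℝ}

/-- The potential built from the increments `X`. -/
noncomputable def VX (X : ℤ → Ω → ℝ) (x : ℤ) (ω : Ω) : ℝ :=
  if 0 ≤ x then WR X 0 x.toNat ω else WL X 0 (-x).toNat ω

lemma VX_nat (k : ℕ) (ω : Ω) : VX X k ω = WR X 0 k ω := by simp [VX]

lemma VX_neg (k : ℕ) (ω : Ω) : VX X (-(k:ℤ)) ω = WL X 0 k ω := by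
  unfold VX
  split_ifs with h
  · have : k = 0 := by omega
    subst this; simp [WR, WL, PS_zero]
  · simp

lemma WL_add (t : ℤ) (m k : ℕ) (ω : Ω) : WL X t (m + k) ω = WL X t m ω + WL X (t - m) k ω := by
  induction k with
  | zero => simp [WL, PS_zero]
  | succ k ih => 
    rw [← add_assoc, WL_succ, ih, WL_succ]
    push_cast
    rw [show t - ((m:ℤ) + k) = t - m - k by ring]; ring

lemma VX_right (t k : ℕ) (ω : Ω) : VX X ((t:ℤ) + k) ω - VX X t ω = WR X t k ω := by
  have := VX_nat (X := X) (t + k) ω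
  push_cast at this
  rw [this, VX_nat, WR_add]; simp

lemma VX_left (t k : ℕ) (ω : Ω) : VX X (-(t:ℤ) - k) ω - VX X (-(t:ℤ)) ω = WL X (-(t:ℤ)) k ω := by
  have := VX_neg (X := X) (t + k) ω
  push_cast at this
  rw [show -(t:ℤ) - k = -((t:ℤ) + k) by ring, this, VX_neg, WL_add]; simp

lemma start_ae {L s : ℝ} (hX : Stp μ X L s) (hs : 0 < s) :
    ∀ᵐ ω ∂μ, ∀ᶠ p in atTop, ∀ x : ℤ, |x| ≤ tp p → |VX X x ω| ≤ 0.01 * jp p := by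
  have key : ∀ (Y : ℕ → Ω → ℝ), Stp μ Y L s → 
      ∀ᵐ ω ∂μ, ∀ᶠ p in atTop, ω ∉ {ω | ∃ k ≤ tp p, 0.01 * jp p ≤ |PS Y k ω|} := by
    intro Y hY
    refine bc1 (s * 10000) ?_
    filter_upwards [eventually_ge_atTop 1] with p hp
    have hpr : (1:ℝ) ≤ p := by exact_mod_cast hp
    have hj : 0 < jp p := by linarith [le_jp hp]
    have h := hY.maximal hs.le (tp p) (l := 0.01 * jp p) (by positivity)
    set P := μ.real {ω | ∃ k ≤ tp p, 0.01 * jp p ≤ |PS Y k ω|}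
    have hP : 0 ≤ P := measureReal_nonneg
    have e := tp_jp hp
    rw [le_div_iff₀ (by positivity)]
    have ht : (0:ℝ) < tp p := by unfold tp; positivity
    have h2 : P * (0.0001 * p ^ 3) * tp p ≤ s * tp p := by
      calc _ = P * (0.0001 * (tp p * p ^ 3)) := by ring
        _ = P * (0.01 * jp p) ^ 2 := by rw [e]; ring
        _ ≤ _ := h
    have h3 := le_of_mul_le_mul_right h2 ht
    have h4 : P * p^2 ≤ P * p ^ 3 := by gcongr <;> first | assumption | norm_num
    linarith
  filter_upwards [key _ (hX.right 0), key _ (hX.left 0)] with ω h1 h2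
  filter_upwards [h1, h2] with p h1 h2 x hx
  obtain ⟨k, rfl | rfl⟩ := x.eq_nat_or_neg
  · rw [VX_nat]
    have hk : k ≤ tp p := by simpa using hx
    by_contra hcon
    exact h1 ⟨k, hk, (not_le.1 hcon).le⟩
  · rw [VX_neg]
    have hk : k ≤ tp p := by simpa using hx
    by_contra hcon
    exact h2 ⟨k, hk, (not_le.1 hcon).le⟩

lemma neg_ae {α ε' ε c₄ lam₀ : ℝ} (hid : ∀ x, IdentDistrib (ξ x) (ξ 0) μ μ)
    (hα1 : α < 1) (hε : 0 < ε) (hε' : 0 < ε') (hc₄ : 0 < c₄)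
    (hβ : 0 < (1 - α) ^ 2 * (2 + ε) - (2 + ε')) (hlam₀ : 1 < lam₀)
    (htail : ∀ lam : ℝ, lam₀ ≤ lam → μ.real {ω | lam < max (-(ξ 0 ω)) 0} ≤ 1 / Real.log lam ^ (2 + ε : ℝ)) :
    ∀ᵐ ω ∂μ, ∀ᶠ p in atTop, ∀ x : ℤ, |(x:ℝ)| ≤ jp p ^ (2 + ε') → 
      max (-(ξ x ω)) 0 < epsScale α c₄ (jp p) 0 ^ (-(1/2) : ℝ) := by
  obtain ⟨C, hC⟩ := neg_rate (α := α) hε hε' hc₄ hβ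
  have hgt : Tendsto (fun p => c₄ * gamScale α (jp p) 2 / 4) atTop atTop := by
    have h1 : Tendsto (fun p => gamScale α (jp p) 2) atTop atTop := by
      unfold gamScale
      exact (tendsto_rpow_atTop (by have : 0 < 1 - α := by linarith
                                    positivity)).comp jp_tendsto
    exact (h1.const_mul_atTop hc₄).atTop_div_const (by norm_num)
  have key : ∀ᵐ ω ∂μ, ∀ᶠ p in atTop, ω ∉ {ω | ∃ x ∈ Finset.Icc (-⌊jp p ^ (2 + ε')⌋) ⌊jp p ^ (2 + ε')⌋, 
      ¬ (max (-(ξ x ω)) 0 < epsScale α c₄ (jp p) 0 ^ (-(1/2) : ℝ))} := by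
    refine bc1 C ?_
    filter_upwards [hC, hgt.eventually_ge_atTop (Real.log lam₀), hgt.eventually_gt_atTop 0, 
      eventually_ge_atTop 1] with p h1 h2 h3 hp
    refine le_trans ?_ h1
    have hj : 0 < jp p := by unfold jp; positivity
    refine tail_union hid 0 (by positivity) (l := Real.exp (c₄ * gamScale α (jp p) 2 / 4)) ?_ ?_ _ ?_
    · rw [eps_exp, Real.exp_lt_exp]
      simp only [zero_add]; linarith
    · have := htail (Real.exp (c₄ * gamScale α (jp p) 2 / 4)) ?_
      · rwa [Real.log_exp] at this
      · rw [← Real.exp_log (by linarith : 0 < lam₀)]; exact Real.exp_le_exp.2 h2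
    · intro x hx
      rw [Finset.mem_Icc] at hx
      have hf := Int.floor_le (jp p ^ (2 + ε'))
      have a1 : (-⌊jp p ^ (2 + ε')⌋ : ℝ) ≤ x := by exact_mod_cast hx.1
      have a2 : (x:ℝ) ≤ ⌊jp p ^ (2 + ε')⌋ := by exact_mod_cast hx.2
      simp only [Int.cast_zero, sub_zero]
      rw [abs_le]; constructor <;> linarith
  filter_upwards [key] with ω h
  filter_upwards [h] with p h x hx
  by_contra hcon
  refine h ⟨x, ?_, hcon⟩
  rw [abs_le] at hx
  rw [Finset.mem_Icc]
  constructor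
  · rw [neg_le]; apply Int.le_floor.2; push_cast; linarith
  · exact Int.le_floor.2 hx.2

lemma env_lower {L s a B c : ℝ} (hX : Stp μ X L s) (hs : 0 < s) (hL : 0 < L) (ha : 0 < a) (haB : a ≤ B) (hc : 0 < c)
    (hstep : ∀ (X : ℕ → Ω → ℝ), Stp μ X L s → ∀ n ≥ 1, c ≤ μ.real (StepUp X n a B))
    {K : ℕ} (hK : 14400 * B ≤ a * K) 
    {α ε' c₄ c₅ c₆ : ℝ} (hα0 : 0 < α) (hα1 : α < 1) (hε' : 0 < ε') (hc₄ : 0 < c₄) (hc₅ : 0 < c₅) (hc₆ : 1 ≤ c₆) :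
    ∀ᶠ j in atTop, ∀ t : ℤ, c ^ K ≤ μ.real (LGood X t (K * mm B j) j) ∧ 
      c ^ K / 2 ≤ μ.real (⋃ b ∈ Finset.range (K * mm B j + 1), 
        GoodB X t (K * mm B j) b j (bigM α ε' j - 1) (nn α ε' c₅ j) (hh α ε' c₄ c₆ j)) := by
  have hB : 0 < B := by linarith
  set C0 := L + (L + 2 * L ^ 2) / s with hC0
  have hC0p : 0 < C0 := by positivity
  have hK1 : 1 ≤ K := by
    rcases Nat.eq_zero_or_pos K with h | h
    · subst h; simp at hK; linarith
    · exact h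
  have hasym := env_asym hα0 hα1 hε' hc₄ hc₅ hc₆ hL.le (D := 2 * K / (400 * B) ^ 2 * (4 * C0 * L / 9))
    (η := c ^ K / 2) (by positivity) (by positivity)
  filter_upwards [hasym, eventually_ge_atTop (800 * B), eventually_ge_atTop (100 * a), eventually_ge_atTop 1]
    with j h1 hjB hja hj1 t
  obtain ⟨h1, h2⟩ := h1
  obtain ⟨m1, m2, m3, m4⟩ := mm_spec hB hjB
  have hj : 0 < j := by linarith
  set m := mm B j
  have hKj : 9 * j ≤ a / 2 * √m * K := by
    have := mul_le_mul_of_nonneg_right hK (Real.sqrt_nonneg m)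
    linarith
  have haj : a ≤ 0.01 * j := by linarith
  refine ⟨lgood_prob hX ha haB hc hstep t m K hj m1 m2 hKj haj, ?_⟩
  refine le_trans ?_ (good_prob hX hs ha haB hc hstep t m K hj m1 m2 hKj haj _ _ _ 
    (fun i _ => nn_pos hc₅ hj i) (fun i _ => hh_nonneg hα1 hc₄ hc₆ hj1 i) h1)
  rw [Finset.sum_const, Finset.card_range, nsmul_eq_mul]
  set Sg := ∑ i ∈ Finset.range (bigM α ε' j - 1), (hh α ε' c₄ c₆ j i + L) / √(nn α ε' c₅ j i) with hSg
  have e1 : ∑ i ∈ Finset.range (bigM α ε' j - 1), 2 * (C0 * (2 * (hh α ε' c₄ c₆ j i + L)) / 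
      (√(nn α ε' c₅ j i) * (3 * j))) * (L / (3 * j)) = (4 * C0 * L / 9) / j ^ 2 * Sg := by
    rw [hSg, Finset.mul_sum]
    refine Finset.sum_congr rfl fun i _ => ?_
    have : 0 < √(nn α ε' c₅ j i : ℝ) := Real.sqrt_pos.2 (by exact_mod_cast nn_pos hc₅ hj i)
    field_simp
    try ring
  have hSg0 : 0 ≤ Sg := Finset.sum_nonneg fun i _ => 
    div_nonneg (by have := hh_nonneg (ε' := ε') hα1 hc₄ hc₆ hj1 i; linarith) (Real.sqrt_nonneg _)
  rw [e1]
  have e2 : ((K * m + 1 : ℕ):ℝ) ≤ 2 * K / (400 * B) ^ 2 * j ^ 2 := by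
    have a1 : ((K * m + 1 : ℕ):ℝ) ≤ 2 * K * m := by
      have : K * m + 1 ≤ 2 * K * m := by nlinarith [Nat.mul_le_mul hK1 m1]
      exact_mod_cast this
    calc _ ≤ _ := a1
      _ ≤ 2 * K * (j / (400 * B)) ^ 2 := by gcongr
      _ = _ := by ring
  have e3 : ((K * m + 1 : ℕ):ℝ) * ((4 * C0 * L / 9) / j ^ 2 * Sg) ≤ c ^ K / 2 := by
    calc _ ≤ (2 * K / (400 * B) ^ 2 * j ^ 2) * ((4 * C0 * L / 9) / j ^ 2 * Sg) := by gcongr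
      _ = 2 * K / (400 * B) ^ 2 * (4 * C0 * L / 9) * Sg := by field_simp
      _ ≤ _ := h2
  linarith

lemma sce_lower {α ε' ε c₄ c₅ c₆ lam₀ y q : ℝ} (hξ : ∀ i, Measurable (ξ i)) (hi : iIndepFun ξ μ) 
    (hid : ∀ x, IdentDistrib (ξ x) (ξ 0) μ μ)
    (hα0 : 0 < α) (hα1 : α < 1) (hε : 0 < ε) (hε' : 0 < ε') (hc₄ : 0 < c₄) (hc₅ : 0 < c₅) (hc₆ : 1 ≤ c₆)
    (hβ : 0 < (1 - α) ^ 2 * (2 + ε) - (2 + ε')) (hlam₀ : 1 < lam₀)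
    (htail : ∀ lam : ℝ, lam₀ ≤ lam → μ.real {ω | lam < max (-(ξ 0 ω)) 0} ≤ 1 / Real.log lam ^ (2 + ε : ℝ))
    (hq0 : 0 < q) (hq : q = μ.real {ω | y ≤ ξ 0 ω}) :
    ∀ᶠ j in atTop, ∀ lo hi' c : ℤ, q ^ (2 * (c₅ * gamScale α j (bigM α ε' j - 1) ^ (2 + ε')) + 1) / 2 ≤ μ.real 
      ({ω | SceIn (fun x => ξ x ω) lo hi' c (c₅ * gamScale α j (bigM α ε' j - 1) ^ (2 + ε')) y} ∩ 
       {ω | SceOut (fun x => ξ x ω) lo hi' c (c₅ * gamScale α j (bigM α ε' j - 1) ^ (2 + ε')) (bigM α ε' j - 1) 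
        (fun i => c₆ * gamScale α j i ^ (2 + ε')) (fun i => epsScale α c₄ j i ^ (-(1/2) : ℝ))}) := by
  have hl : 0 < Real.log lam₀ := Real.log_pos hlam₀
  filter_upwards [sce_asym hα0 hα1 hε' hc₄ hc₆ hε hβ (Real.log lam₀) (η := 1/2) (by norm_num), 
    eventually_gt_atTop 0] with j h hj lo hi' c
  obtain ⟨h1, h2⟩ := h
  refine sce_prob hξ hi hid lo hi' c (by unfold gamScale; positivity) y hq0 hq _ 
    (ll := fun i => Real.exp (c₄ * gamScale α j (i+2) / 4)) 
    (τ := fun i => 1 / (c₄ * gamScale α j (i + 2) / 4) ^ (2 + ε)) ?_ ?_ ?_ ?_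
  · intro i _; unfold gamScale; positivity
  · intro i hi
    have := h1 i hi
    simp only [eps_exp, Real.exp_lt_exp]
    linarith
  · intro i hi
    have := htail (Real.exp (c₄ * gamScale α j (i+2) / 4)) ?_
    · rwa [Real.log_exp] at this
    · rw [← Real.exp_log (by linarith : 0 < lam₀)]; exact Real.exp_le_exp.2 (h1 i hi)
  · refine le_trans (le_of_eq ?_) h2
    refine Finset.sum_congr rfl fun i _ => ?_
    ring
end

open MeasureTheory ProbabilityTheory Filter Set
set_option linter.unusedSectionVars false
set_option linter.unusedVariables false

section
variable {Ω : Type*} {mΩ : MeasurableSpace Ω} {μ : Measure Ω} [IsProbabilityMeasure μ]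
variable {X ξ : ℤ → Ω → ℝ}

/-- The index set of block variables. -/
def JJ (t N : ℕ) : Set (ℤ ⊕ ℤ) := {i | (t:ℤ) ≤ |Sum.elim id id i| ∧ |Sum.elim id id i| ≤ t + N}

/-- Scenery event around the site `c`. -/
def SceB (ξ : ℤ → Ω → ℝ) (t : ℤ) (N b : ℕ) (r y : ℝ) (I : ℕ) (rr ee : ℕ → ℝ) : Set Ω :=
  {ω | SceIn (fun x => ξ x ω) t (t + N) (t + b) r y} ∩ {ω | SceOut (fun x => ξ x ω) t (t + N) (t + b) r I rr ee}

lemma SG_inl {S : Set ℤ} {T : Set (ℤ ⊕ ℤ)} (h : ∀ i ∈ S, Sum.inl i ∈ T) : SG X S ≤ SG (fun i : ℤ ⊕ ℤ => Sum.elim X ξ i) T :=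
  SG_le_of fun i hi => SG_meas (X := fun i : ℤ ⊕ ℤ => Sum.elim X ξ i) (h i hi)

lemma SG_inr {S : Set ℤ} {T : Set (ℤ ⊕ ℤ)} (h : ∀ i ∈ S, Sum.inr i ∈ T) : SG ξ S ≤ SG (fun i : ℤ ⊕ ℤ => Sum.elim X ξ i) T :=
  SG_le_of fun i hi => SG_meas (X := fun i : ℤ ⊕ ℤ => Sum.elim X ξ i) (h i hi)

lemma SceB_meas (t : ℤ) (N b : ℕ) (r y : ℝ) (I : ℕ) (rr ee : ℕ → ℝ) :
    MeasurableSet[SG ξ (Ioc t (t + N))] (SceB ξ t N b r y I rr ee) := by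
  have h1 := SG_mono (X := ξ) (fun x (hx : x ∈ {x : ℤ | (t < x ∧ x ≤ t + N) ∧ |(x:ℝ) - ((t + b : ℤ):ℝ)| ≤ r}) => 
    (⟨hx.1.1, hx.1.2⟩ : x ∈ Ioc t (t + N))) _ (SceIn_meas (ξ := ξ) t (t+N) (t+b) r y)
  have h2 := SG_mono (X := ξ) (fun x (hx : x ∈ {x : ℤ | (t < x ∧ x ≤ t + N) ∧ r < |(x:ℝ) - ((t + b : ℤ):ℝ)|}) => 
    (⟨hx.1.1, hx.1.2⟩ : x ∈ Ioc t (t + N))) _ (SceOut_meas (ξ := ξ) t (t+N) (t+b) r I rr ee)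
  exact @MeasurableSet.inter _ (SG ξ (Ioc t (t + N))) _ _ h1 h2

/-- The full block event. -/
def GG (X ξ : ℤ → Ω → ℝ) (t N : ℕ) (j : ℝ) (I : ℕ) (n : ℕ → ℕ) (h : ℕ → ℝ) (r y : ℝ) (rr ee : ℕ → ℝ) : Set Ω :=
  LGood X (-(t:ℤ)) N j ∩ ⋃ b ∈ Finset.range (N + 1), (GoodB X t N b j I n h ∩ SceB ξ t N b r y I rr ee)

lemma GG_meas (t N : ℕ) (j : ℝ) (I : ℕ) (n : ℕ → ℕ) (h : ℕ → ℝ) (r y : ℝ) (rr ee : ℕ → ℝ) :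
    MeasurableSet[SG (fun i : ℤ ⊕ ℤ => Sum.elim X ξ i) (JJ t N)] (GG X ξ t N j I n h r y rr ee) := by
  have h1 : MeasurableSet[SG (fun i : ℤ ⊕ ℤ => Sum.elim X ξ i) (JJ t N)] (LGood X (-(t:ℤ)) N j) := 
    SG_inl (fun i hi => by
      simp only [mem_Ioc] at hi
      change (t:ℤ) ≤ |i| ∧ |i| ≤ t + N
      rw [abs_of_nonpos (by omega)]; omega) _ (LGood_meas _ _ _)
  have h2 : ∀ b, MeasurableSet[SG (fun i : ℤ ⊕ ℤ => Sum.elim X ξ i) (JJ t N)] (GoodB X t N b j I n h) := 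
    fun b => SG_inl (fun i hi => by
      simp only [mem_Ioc] at hi
      change (t:ℤ) ≤ |i| ∧ |i| ≤ t + N
      rw [abs_of_nonneg (by omega)]; omega) _ (GoodB_meas _ _ _ _ _ _ _)
  have h3 : ∀ b, MeasurableSet[SG (fun i : ℤ ⊕ ℤ => Sum.elim X ξ i) (JJ t N)] (SceB ξ t N b r y I rr ee) := 
    fun b => SG_inr (fun i hi => by
      simp only [mem_Ioc] at hi
      change (t:ℤ) ≤ |i| ∧ |i| ≤ t + N
      rw [abs_of_nonneg (by omega)]; omega) _ (SceB_meas _ _ _ _ _ _ _ _)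
  exact @MeasurableSet.inter _ (_) _ _ h1 (@Finset.measurableSet_biUnion _ _ (_) _ _
    (fun b _ => @MeasurableSet.inter _ (_) _ _ (h2 b) (h3 b)))

lemma GG_lower (hX : ∀ i, Measurable (X i)) (hξ : ∀ i, Measurable (ξ i)) (hXi : iIndepFun X μ)
    (hF : iIndepFun (fun i : ℤ ⊕ ℤ => Sum.elim X ξ i) μ) (t N : ℕ) (j : ℝ) (I : ℕ) (n : ℕ → ℕ) (h : ℕ → ℝ) 
    (r y : ℝ) (rr ee : ℕ → ℝ) {σ u v : ℝ} (hσ0 : 0 ≤ σ) (hu0 : 0 ≤ u) (hv0 : 0 ≤ v)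
    (hσ : ∀ b, σ ≤ μ.real (SceB ξ t N b r y I rr ee)) (hu : u ≤ μ.real (LGood X (-(t:ℤ)) N j))
    (hv : v ≤ μ.real (⋃ b ∈ Finset.range (N + 1), GoodB X t N b j I n h)) : 
    σ * (u * v) ≤ μ.real (GG X ξ t N j I n h r y rr ee) := by
  have hFm : ∀ i, Measurable (Sum.elim X ξ i) := by
    rintro (i | i)
    · exact hX i
    · exact hξ i
  have hd : Disjoint (range (Sum.inl : ℤ → ℤ ⊕ ℤ)) (range (Sum.inr : ℤ → ℤ ⊕ ℤ)) := by
    rw [Set.disjoint_left]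
    rintro _ ⟨i, rfl⟩ ⟨k, hk⟩
    cases hk
  have h1 := union_lower (μ := μ) hFm hF hd (D := fun b => GoodB X t N b j I n h) 
    (S := fun b => SceB ξ t N b r y I rr ee) 
    (fun b => SG_inl (fun i _ => mem_range_self i) _ (GoodB_meas _ _ _ _ _ _ _))
    (fun b => SG_inr (fun i _ => mem_range_self i) _ (SceB_meas _ _ _ _ _ _ _ _)) hσ (N+1) 
    (LGood X (-(t:ℤ)) N j) (SG_inl (fun i _ => mem_range_self i) _ (LGood_meas _ _ _))
  refine le_trans ?_ h1
  have hd2 : Disjoint (Ioc (-(t:ℤ) - N) (-(t:ℤ))) (Ioc (t:ℤ) (t + N)) := by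
    rw [Set.disjoint_left]
    intro x hx hx'
    simp only [mem_Ioc] at hx hx'
    omega
  rw [SG_inter hX hXi hd2 (LGood_meas _ _ _) 
    (@Finset.measurableSet_biUnion _ _ (_) _ _ (fun b _ => GoodB_meas _ _ _ _ _ _ _))]
  gcongr

theorem core {L s α ε' ε c₄ c₅ c₆ lam₀ q a ρ : ℝ} (hX : Stp μ X L s) (hs : 0 < s) (hL : 0 < L)
    (hξ : ∀ i, Measurable (ξ i)) (hi : iIndepFun ξ μ) (hid : ∀ x, IdentDistrib (ξ x) (ξ 0) μ μ)
    (hI : IndepFun (fun ω => (fun x : ℤ => ξ x ω)) (fun ω => (fun i : ℤ => X i ω)) μ)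
    (hα0 : 0 < α) (hα1 : α < 1) (hε : 0 < ε) (hε' : 0 < ε') (hc₄ : 0 < c₄) (hc₅ : 0 < c₅) (hc₅1 : c₅ < 1) (hc₆ : 1 ≤ c₆)
    (hβ : 0 < (1 - α) ^ 2 * (2 + ε) - (2 + ε')) (hlam₀ : 1 < lam₀)
    (htail : ∀ lam : ℝ, lam₀ ≤ lam → μ.real {ω | lam < max (-(ξ 0 ω)) 0} ≤ 1 / Real.log lam ^ (2 + ε : ℝ))
    (hq0 : 0 < q) (hq : q = μ.real {ω | a - ρ ≤ ξ 0 ω}) (hq5 : c₅ * |Real.log q| < 1/5) :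
    ∀ᵐ ω ∂μ, ∃ᶠ p in atTop, goodPair α ε' c₄ c₅ c₆ a ρ (fun x => VX X x ω) (fun x => ξ x ω) (jp p) := by
  obtain ⟨a', B, c, ha, haB, hc, hstep⟩ := exists_step μ hL hs
  have hB : 0 < B := by linarith
  obtain ⟨K, hK⟩ := exists_nat_ge (14400 * B / a')
  rw [div_le_iff₀ ha, mul_comm (K:ℝ)] at hK
  have hF := joint_indep hX.meas hξ hX.indep hi hI
  have hq1 : q ≤ 1 := by rw [hq]; exact measureReal_le_one
  set NN : ℕ → ℕ := fun p => K * mm B (jp p) with hNN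
  set G : ℕ → Set Ω := fun p => GG X ξ (tp p) (NN p) (jp p) (bigM α ε' (jp p) - 1) (nn α ε' c₅ (jp p)) 
    (hh α ε' c₄ c₆ (jp p)) (c₅ * gamScale α (jp p) (bigM α ε' (jp p) - 1) ^ (2 + ε')) (a - ρ) 
    (fun i => c₆ * gamScale α (jp p) i ^ (2 + ε')) (fun i => epsScale α c₄ (jp p) i ^ (-(1/2) : ℝ)) with hG
  have hlow : ∀ᶠ p in atTop, (q / 6 * (c ^ K * (c ^ K / 2))) / p ≤ μ.real (G p) := by
    filter_upwards [jp_tendsto.eventually (env_lower hX hs hL ha haB hc hstep hK hα0 hα1 hε' hc₄ hc₅ hc₆),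
      jp_tendsto.eventually (sce_lower (c₅ := c₅) hξ hi hid hα0 hα1 hε hε' hc₄ hc₅ hc₆ hβ hlam₀ htail hq0 hq),
      sig_lower hα0 hα1 hε' hc₅ hq0 hq1 hq5] with p h1 h2 h3
    have := GG_lower hX.meas hξ hX.indep hF (tp p) (NN p) (jp p) (bigM α ε' (jp p) - 1) (nn α ε' c₅ (jp p)) 
      (hh α ε' c₄ c₆ (jp p)) (c₅ * gamScale α (jp p) (bigM α ε' (jp p) - 1) ^ (2 + ε')) (a - ρ) 
      (fun i => c₆ * gamScale α (jp p) i ^ (2 + ε')) (fun i => epsScale α c₄ (jp p) i ^ (-(1/2) : ℝ)) 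
      (σ := q / 6 / p) (u := c ^ K) (v := c ^ K / 2) (by positivity) (by positivity) (by positivity) 
      (fun b => h3.trans (h2 _ _ _)) (h1 _).1 (h1 _).2
    refine le_trans (le_of_eq ?_) this
    ring
  have hsep : ∀ᶠ p in atTop, ∀ q, p < q → tp p + NN p < tp q := by
    filter_upwards [tp_sep (K / (400 * B) ^ 2), jp_tendsto.eventually_ge_atTop (800 * B)] with p h1 h2
    refine h1 _ ?_
    obtain ⟨_, _, _, m4⟩ := mm_spec hB h2
    simp only [hNN]
    push_cast
    calc (K:ℝ) * mm B (jp p) ≤ K * (jp p / (400 * B)) ^ 2 := by gcongr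
      _ = _ := by ring
  obtain ⟨p0, hp0⟩ := (hlow.and hsep).exists_forall_of_atTop
  have hFm : ∀ i, Measurable (Sum.elim X ξ i) := by
    rintro (i | i)
    · exact hX.meas i
    · exact hξ i
  have hbc := bc2 (μ := μ) hFm hF (G := fun p => G (p + p0)) (J := fun p => JJ (tp (p + p0)) (NN (p + p0)))
    (fun p => GG_meas _ _ _ _ _ _ _ _ _ _) (fun p q hpq => by
      have := (hp0 (p + p0) (by omega)).2 (q + p0) (by omega)
      rw [Set.disjoint_left]
      rintro i ⟨_, h2⟩ ⟨h3, _⟩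
      omega) (C := q / 6 * (c ^ K * (c ^ K / 2))) (by positivity) (p0 := p0) 
    (fun p => (hp0 (p + p0) (by omega)).1)
  filter_upwards [hbc, start_ae hX hs, neg_ae hid hα1 hε hε' hc₄ hβ hlam₀ htail] with ω h1 h2 h3
  have h1' : ∃ᶠ p in atTop, ω ∈ G p := by
    rw [frequently_atTop] at h1 ⊢
    intro A
    obtain ⟨p, hp, h⟩ := h1 A
    exact ⟨p + p0, by omega, h⟩
  refine (h1'.and_eventually (h2.and (h3.and (eventually_ge_atTop 1)))).mono ?_
  rintro p ⟨hg, hpre, hneg, hp⟩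
  have hj : 0 < jp p := by unfold jp; positivity
  obtain ⟨hl, hr⟩ := hg
  simp only [mem_iUnion] at hr
  obtain ⟨b, _, ⟨hM, hP⟩, hin, hout⟩ := hr
  refine det_good (t := tp p) (N := NN p) (b := b) hj hc₄ hc₅ hc₅1 hc₆ hpre ?_ ?_ ?_ hneg hin hout
  · simp only [VX_right]; exact hM
  · simp only [VX_right]; exact hP
  · simp only [VX_left]; exact hl
end

open MeasureTheory ProbabilityTheory Filter Set
set_option linter.unusedSectionVars false
set_option linter.unusedVariables false

/-- Clipped log-ratio. -/
noncomputable def clipLog (L z : ℝ) : ℝ := max (-L) (min L (Real.log ((1 - z) / z)))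

lemma clipLog_meas (L : ℝ) : Measurable (clipLog L) := by
  unfold clipLog
  fun_prop

lemma clipLog_abs {L : ℝ} (hL : 0 ≤ L) (z : ℝ) : |clipLog L z| ≤ L := by
  unfold clipLog
  rw [abs_le]
  exact ⟨le_max_left _ _, max_le (by linarith) (min_le_left _ _)⟩

lemma clipLog_eq {δ z : ℝ} (h0 : 0 < δ) (h1 : δ ≤ z) (h2 : z ≤ 1 - δ) :
    clipLog (Real.log ((1 - δ) / δ)) z = Real.log ((1 - z) / z) := by
  have hz : 0 < z := by linarith
  have hz1 : 0 < 1 - z := by linarith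
  have e1 : Real.log ((1 - z) / z) ≤ Real.log ((1 - δ) / δ) := by
    apply Real.log_le_log (by positivity)
    rw [div_le_div_iff₀ hz h0]; nlinarith
  have e2 : -Real.log ((1 - δ) / δ) ≤ Real.log ((1 - z) / z) := by
    rw [← Real.log_inv]
    apply Real.log_le_log
    · apply inv_pos.2; exact div_pos (by linarith) h0
    · rw [inv_div, div_le_div_iff₀ (by linarith) hz]; nlinarith
  unfold clipLog
  rw [min_eq_right e1, max_eq_right e2]

/-- Proposition 3.2: under assumptions (1.1)–(1.3), `ess sup ξ₀ = a < ∞`, thin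
negative tails for the scenery, and the choice `c₅·|log Q{ξ₀ ≥ a−ρ}| < 1/5`,
`P⊗Q`-almost every `(ω,ξ)` is a good environment-scenery: `(ω,ξ) ∈ A(j_p)` for
infinitely many `p`, where `j_p := p^{3p}`. -/
theorem stmt9 {Ω : Type*} [MeasurableSpace Ω] (μ : Measure Ω) [IsProbabilityMeasure μ]
    -- the i.i.d. environment
    (env : ℤ → Ω → ℝ) (henv_meas : ∀ i, Measurable (env i))
    (henv_indep : iIndepFun env μ)
    (henv_ident : ∀ i, IdentDistrib (env i) (env 0) μ μ)
    (δ : ℝ) (hδ0 : 0 < δ) (hδ1 : δ < 1 / 2)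
    (henv_ell : ∀ i, ∀ᵐ ω ∂μ, δ ≤ env i ω ∧ env i ω ≤ 1 - δ)
    (henv_mean : ∫ ω, Real.log ((1 - env 0 ω) / env 0 ω) ∂μ = 0)
    (henv_var : 0 < variance (fun ω => Real.log ((1 - env 0 ω) / env 0 ω)) μ)
    -- the potential
    (V : ℤ → Ω → ℝ)
    (hV_pos : ∀ (x : ℤ), 0 ≤ x → ∀ ω, V x ω =
      ∑ i ∈ Finset.range x.toNat, Real.log ((1 - env ((i : ℤ) + 1) ω) / env ((i : ℤ) + 1) ω))
    (hV_neg : ∀ (x : ℤ), x < 0 → ∀ ω, V x ω =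
      -∑ i ∈ Finset.range (-x).toNat,
        Real.log ((1 - env (x + 1 + (i : ℤ)) ω) / env (x + 1 + (i : ℤ)) ω))
    -- the i.i.d. scenery, independent of the environment
    (sce : ℤ → Ω → ℝ) (hsce_meas : ∀ x, Measurable (sce x))
    (hsce_indep : iIndepFun sce μ)
    (hsce_ident : ∀ x, IdentDistrib (sce x) (sce 0) μ μ)
    (hsce_env_indep :
      IndepFun (fun ω => (fun x : ℤ => sce x ω)) (fun ω => (fun i : ℤ => env i ω)) μ)
    -- `a := ess sup ξ₀ < ∞` and thin negative tails
    (a : ℝ) (ha : a = essSup (fun ω => sce 0 ω) μ) (ha_fin : ∀ᵐ ω ∂μ, sce 0 ω ≤ a)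
    (ε : ℝ) (hε : 0 < ε) (lam₀ : ℝ) (hlam₀ : 1 < lam₀)
    (htail : ∀ lam : ℝ, lam₀ ≤ lam →
      (μ {ω | lam < max (-(sce 0 ω)) 0}).toReal ≤ 1 / Real.log lam ^ (2 + ε : ℝ))
    -- the scale parameters
    (ε' α c₄ c₅ c₆ ρ : ℝ)
    (hε' : ε' = min (1 / 35) (ε / 2))
    (hα0 : 0 < α) (hα1 : α < 1)
    (hβ : 0 < (1 - α) ^ 2 * (2 + ε) - (2 + ε'))
    (hβ' : 0 < ε' / 2 - α)
    (hc₄0 : 0 < c₄) (hc₄1 : c₄ < 1 / 6)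
    (hρ0 : 0 < ρ) (hρ1 : ρ < 1)
    (hc₅0 : 0 < c₅) (hc₅1 : c₅ < 1)
    (hc₅ : c₅ * |Real.log (μ {ω | a - ρ ≤ sce 0 ω}).toReal| < 1 / 5)
    (hc₆ : max 1 (2 * (1 + 2 / (2 + ε'))) ≤ c₆) :
    ∀ᵐ ω ∂μ, ∀ N : ℕ, ∃ p : ℕ, N ≤ p ∧
      goodPair α ε' c₄ c₅ c₆ a ρ (fun x => V x ω) (fun x => sce x ω) ((p : ℝ) ^ (3 * p)) := by
  set L := Real.log ((1 - δ) / δ) with hLd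
  have hL : 0 < L := by
    apply Real.log_pos
    rw [lt_div_iff₀ hδ0]; linarith
  set X : ℤ → Ω → ℝ := fun i ω => clipLog L (env i ω) with hXd
  have hXm : ∀ i, Measurable (X i) := fun i => (clipLog_meas L).comp (henv_meas i)
  have hXind : iIndepFun X μ := henv_indep.comp (fun _ => clipLog L) (fun _ => clipLog_meas L)
  have hXe : ∀ᵐ ω ∂μ, ∀ i, X i ω = Real.log ((1 - env i ω) / env i ω) := by
    rw [ae_all_iff]
    intro i
    filter_upwards [henv_ell i] with ω h
    exact clipLog_eq hδ0 h.1 h.2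
  have hXid : ∀ i, IdentDistrib (X i) (X 0) μ μ := fun i => (henv_ident i).comp (clipLog_meas L)
  have hX0 : X 0 =ᵐ[μ] fun ω => Real.log ((1 - env 0 ω) / env 0 ω) := by
    filter_upwards [hXe] with ω h using h 0
  have hmean : ∫ ω, X 0 ω ∂μ = 0 := by rw [integral_congr_ae hX0, henv_mean]
  set s := ∫ ω, X 0 ω ^ 2 ∂μ with hs
  have hvar : 0 < s := by
    rw [← variance_congr hX0, variance_of_integral_eq_zero (hXm 0).aemeasurable hmean] at henv_var
    exact henv_var
  have hStp : Stp μ X L s := 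
    { meas := hXm
      indep := hXind
      bdd := fun i ω => clipLog_abs hL.le _
      mean := fun i => by rw [(hXid i).integral_eq, hmean]
      var := fun i => ((hXid i).comp (measurable_id.pow_const 2)).integral_eq }
  have hI : IndepFun (fun ω => (fun x : ℤ => sce x ω)) (fun ω => (fun i : ℤ => X i ω)) μ := 
    hsce_env_indep.comp (φ := id) (ψ := fun (f : ℤ → ℝ) i => clipLog L (f i)) measurable_id
      (measurable_pi_lambda _ fun i => (clipLog_meas L).comp (measurable_pi_apply i))
  have hε'0 : 0 < ε' := by rw [hε']; exact lt_min (by norm_num) (by linarith)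
  have hc₆1 : 1 ≤ c₆ := (le_max_left _ _).trans hc₆
  have hq0 : 0 < μ.real {ω | a - ρ ≤ sce 0 ω} := by
    refine lt_of_le_of_ne measureReal_nonneg fun h => ?_
    have h0 : μ {ω | a - ρ ≤ sce 0 ω} = 0 := (measureReal_eq_zero_iff).1 h.symm
    have hae : ∀ᵐ ω ∂μ, sce 0 ω ≤ a - ρ := by
      rw [ae_iff]
      refine measure_mono_null (fun ω hω => ?_) h0
      exact (not_le.1 hω).le
    have hle : essSup (fun ω => sce 0 ω) μ ≤ a - ρ := by
      unfold essSup
      refine limsup_le_of_le ?_ hae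
      by_contra hcob
      have hall : ∀ n : ℕ, ∀ᵐ ω ∂μ, sce 0 ω ≤ -(n:ℝ) := by
        intro n
        by_contra hn
        refine hcob ⟨-(n:ℝ), fun y hy => ?_⟩
        by_contra hlt
        apply hn
        have hy' : ∀ᵐ ω ∂μ, sce 0 ω ≤ y := hy
        filter_upwards [hy'] with ω hω
        linarith [not_le.1 hlt]
      obtain ⟨ω, hω⟩ := (ae_all_iff.2 hall).exists
      obtain ⟨n, hn⟩ := exists_nat_gt (-(sce 0 ω))
      linarith [hω n]
    linarith
  have hcore := core (c₅ := c₅) (a := a) (ρ := ρ) hStp hvar hL hsce_meas hsce_indep hsce_ident hI hα0 hα1 hε hε'0 hc₄0 hc₅0 hc₅1 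
    hc₆1 hβ hlam₀ htail hq0 rfl hc₅
  filter_upwards [hcore, hXe] with ω h1 h2
  have hV : (fun x => V x ω) = fun x => VX X x ω := by
    funext x
    unfold VX
    split_ifs with hx
    · rw [hV_pos x hx]
      unfold WR PS
      refine Finset.sum_congr rfl fun i _ => ?_
      change _ = X (0 + 1 + i) ω
      rw [h2]
      rw [show (0:ℤ) + 1 + i = i + 1 by ring]
    · rw [hV_neg x (by omega)]
      unfold WL PS
      rw [Finset.sum_neg_distrib, ← Finset.sum_range_reflect]
      congr 1
      refine Finset.sum_congr rfl fun i hi => ?_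
      rw [Finset.mem_range] at hi
      change _ = X (0 - i) ω
      rw [h2]
      rw [show x + 1 + (((-x).toNat - 1 - i : ℕ) : ℤ) = 0 - (i:ℤ) by omega]
  intro N
  rw [frequently_atTop] at h1
  obtain ⟨p, hp, h⟩ := h1 N
  refine ⟨p, hp, ?_⟩
  rw [hV]
  exact h
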